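/- arXiv:1806.03587 — 3 statements merged into one kernel-verified Lean document; each statement's English description precedes it below -/
import Mathlib

section
/- Weak comparison principle for semicontinuous viscosity solutions: Let Ω be a bounded domain in ℝ^N with N ≥ 2 and let H : Ω → ℝ be locally Lipschitz continuous. Let u : cl(Ω) → ℝ be lower semicontinuous on cl(Ω) and a viscosity supersolution of M(u) = NH in Ω, and let v : cl(Ω) → ℝ be upper semicontinuous on cl(Ω) and a viscosity subsolution of M(v) = NH in Ω. If u ≥ v on ∂Ω, then u ≥ v in Ω. -/
open Metric Set Filter Topology MeasureTheory

/-- The mean curvature operator `M(w) = div (Dw / sqrt (1 + |Dw|²))`,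
computed as the sum of the partial derivatives of the components of the
normalized gradient field. -/
noncomputable def mcOp {N : ℕ} (w : EuclideanSpace ℝ (Fin N) → ℝ)
    (x : EuclideanSpace ℝ (Fin N)) : ℝ :=
  ∑ i : Fin N,
    fderiv ℝ (fun y => (Real.sqrt (1 + ‖gradient w y‖ ^ 2))⁻¹ * gradient w y i) x
      (EuclideanSpace.single i 1)

/-- `f` is locally Lipschitz continuous on the set `s`. -/
def LocLipschitzOn {N : ℕ} (s : Set (EuclideanSpace ℝ (Fin N)))
    (f : EuclideanSpace ℝ (Fin N) → ℝ) : Prop :=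
  ∀ x ∈ s, ∃ K : NNReal, ∃ t ∈ 𝓝[s] x, LipschitzOnWith K f t

/-- `u` is a viscosity supersolution of `M(u) = N H` on the open set `U`. -/
def IsViscositySupersol {N : ℕ} (U : Set (EuclideanSpace ℝ (Fin N)))
    (H u : EuclideanSpace ℝ (Fin N) → ℝ) : Prop :=
  ∀ φ : EuclideanSpace ℝ (Fin N) → ℝ, ContDiffOn ℝ 2 φ U →
    ∀ x ∈ U, IsLocalMinOn (fun y => u y - φ y) U x → mcOp φ x ≤ N * H x

/-- `v` is a viscosity subsolution of `M(v) = N H` on the open set `U`. -/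
def IsViscositySubsol {N : ℕ} (U : Set (EuclideanSpace ℝ (Fin N)))
    (H v : EuclideanSpace ℝ (Fin N) → ℝ) : Prop :=
  ∀ φ : EuclideanSpace ℝ (Fin N) → ℝ, ContDiffOn ℝ 2 φ U →
    ∀ x ∈ U, IsLocalMaxOn (fun y => v y - φ y) U x → mcOp φ x ≥ N * H x


set_option linter.unusedSectionVars false
set_option linter.unusedTactic false
section AJ
variable {V : Type*} [NormedAddCommGroup V] [InnerProductSpace ℝ V] [FiniteDimensional ℝ V]

local notation "⟪" x ", " y "⟫" => inner ℝ x y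

lemma aj_contact (F : V → ℝ) (A : V → V) (hF : Continuous F)
    (hA : ∀ x y, F x + ⟪A x, y - x⟫ ≤ F y) (l : V) (S : V →L[ℝ] V)
    (hS : ∀ x y, ⟪S x, y⟫ = ⟪x, S y⟫) (r g : ℝ) (hr : 0 < r)
    (hb : ∀ x, ‖x‖ = r → F x - ⟪l, x⟫ - ⟪S x, x⟫ / 2 + g ≤ F 0) (τ : V) (hτ : ‖τ‖ * r < g) :
    ∃ x, ‖x‖ < r ∧ A x = l + S x + τ ∧
      ∀ᶠ h in 𝓝 (0 : V), F (x + h) - F x ≤ ⟪l + S x + τ, h⟫ + ⟪S h, h⟫ / 2 := by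
  have hcont : Continuous fun x => F x - ⟪l, x⟫ - ⟪S x, x⟫ / 2 - ⟪τ, x⟫ := by fun_prop
  obtain ⟨x, hx, hmax⟩ := (isCompact_closedBall (0 : V) r).exists_isMaxOn
    ⟨0, by simp [hr.le]⟩ hcont.continuousOn
  have hmax' : ∀ y, ‖y‖ ≤ r → F y - ⟪l, y⟫ - ⟪S y, y⟫ / 2 - ⟪τ, y⟫ ≤
      F x - ⟪l, x⟫ - ⟪S x, x⟫ / 2 - ⟪τ, x⟫ := fun y hy => hmax (by simpa using hy)
  have hxr : ‖x‖ < r := by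
    have hx' : ‖x‖ ≤ r := by simpa using hx
    rcases hx'.lt_or_eq with h | h
    · exact h
    · have h1 := hb x h
      have h2 := hmax' 0 (by simp [hr.le])
      have h3 := abs_real_inner_le_norm τ x
      rw [h] at h3
      have h4 := abs_le.mp h3
      simp at h2
      linarith [h4.1]
  have hev : ∀ᶠ h in 𝓝 (0 : V), F (x + h) - F x ≤ ⟪l + S x + τ, h⟫ + ⟪S h, h⟫ / 2 := by
    have : ∀ᶠ h in 𝓝 (0 : V), ‖x + h‖ < r := by
      have hc : Continuous fun h : V => ‖x + h‖ := by fun_prop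
      exact hc.continuousAt.eventually_lt continuousAt_const (by simpa using hxr)
    filter_upwards [this] with h hh
    have h1 := hmax' (x + h) hh.le
    simp only [inner_add_left, inner_add_right, map_add] at h1 ⊢
    have h2 := hS h x
    have h3 := real_inner_comm (S x) h
    linarith
  refine ⟨x, hxr, ?_, hev⟩
  set w := A x - (l + S x + τ) with hw
  have hc : Tendsto (fun t : ℝ => t • w) (𝓝[>] 0) (𝓝 0) := by
    have : Tendsto (fun t : ℝ => t • w) (𝓝 0) (𝓝 ((0:ℝ) • w)) :=
      (continuous_id.smul continuous_const).tendsto 0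
    rw [zero_smul] at this
    exact this.mono_left nhdsWithin_le_nhds
  have h1 : ∀ᶠ t : ℝ in 𝓝[>] 0, ⟪w, w⟫ ≤ t * (⟪S w, w⟫ / 2) := by
    filter_upwards [hc.eventually hev, self_mem_nhdsWithin] with t ht ht0
    have ht0 : 0 < t := ht0
    have h2 := hA x (x + t • w)
    simp only [add_sub_cancel_left, map_smul, inner_smul_left, inner_smul_right] at h2 ht
    simp only [RCLike.conj_to_real] at ht
    have h3 : ⟪w, w⟫ = ⟪A x, w⟫ - ⟪l + S x + τ, w⟫ := by rw [← inner_sub_left]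
    have : t * ⟪w, w⟫ ≤ t * (t * (⟪S w, w⟫ / 2)) := by rw [h3]; nlinarith
    exact le_of_mul_le_mul_left this ht0
  have h2 : Tendsto (fun t : ℝ => t * (⟪S w, w⟫ / 2)) (𝓝[>] 0) (𝓝 0) := by
    have : Tendsto (fun t : ℝ => t * (⟪S w, w⟫ / 2)) (𝓝 0) (𝓝 (0 * (⟪S w, w⟫ / 2))) :=
      (continuous_id.mul continuous_const).tendsto 0
    rw [zero_mul] at this
    exact this.mono_left nhdsWithin_le_nhds
  have h3 := ge_of_tendsto h2 h1
  have : w = 0 := by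
    rw [real_inner_self_eq_norm_sq] at h3
    exact norm_eq_zero.mp (pow_eq_zero_iff (two_ne_zero) |>.mp (le_antisymm h3 (sq_nonneg _)))
  exact sub_eq_zero.mp this

lemma aj_lip (F : V → ℝ) (A : V → V) (hA : ∀ x y, F x + ⟪A x, y - x⟫ ≤ F y)
    (x : V) (K : ℝ)
    (h : ∀ᶠ h in 𝓝 (0 : V), F (x + h) - F x ≤ ⟪A x, h⟫ + K * ‖h‖ ^ 2) (hK : 0 ≤ K) :
    ∀ᶠ h in 𝓝 (0 : V), ‖A (x + h) - A x‖ ≤ 4 * K * ‖h‖ := by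
  obtain ⟨ρ, hρ, hb⟩ := Metric.eventually_nhds_iff.mp h
  refine Metric.eventually_nhds_iff.mpr ⟨ρ / 2, by positivity, fun k hk => ?_⟩
  rw [dist_zero_right] at hk
  set d := A (x + k) - A x with hd
  by_cases hd0 : d = 0
  · rw [hd0, norm_zero]; positivity
  by_cases hk0 : k = 0
  · simp [hk0] at hd; exact absurd hd hd0
  have hdp : 0 < ‖d‖ := norm_pos_iff.mpr hd0
  have hkp : 0 < ‖k‖ := norm_pos_iff.mpr hk0
  set w := (‖k‖ / ‖d‖) • d with hw
  have hwn : ‖w‖ = ‖k‖ := by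
    rw [hw, norm_smul, Real.norm_of_nonneg (by positivity)]; field_simp
  have hdw : ⟪d, w⟫ = ‖k‖ * ‖d‖ := by
    rw [hw, inner_smul_right, real_inner_self_eq_norm_sq]; field_simp
  have hkw : ‖k + w‖ ≤ 2 * ‖k‖ := by
    calc _ ≤ ‖k‖ + ‖w‖ := norm_add_le _ _
      _ = _ := by rw [hwn]; ring
  have h1 := hb (y := k + w) (by rw [dist_zero_right]; linarith)
  have h2 := hA (x + k) (x + (k + w))
  have h3 := hA x (x + k)
  have e1 : x + (k + w) - (x + k) = w := by abel
  have e2 : x + k - x = k := by abel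
  rw [e1] at h2
  rw [e2] at h3
  have h4 : ⟪A (x + k), w⟫ = ⟪d, w⟫ + ⟪A x, w⟫ := by rw [← inner_add_left, hd]; simp
  rw [inner_add_right] at h1
  have h5 : ‖k + w‖ ^ 2 ≤ (2 * ‖k‖) ^ 2 := by gcongr
  have h6 : K * ‖k + w‖ ^ 2 ≤ K * (2 * ‖k‖) ^ 2 := by gcongr
  have : ‖k‖ * ‖d‖ ≤ ‖k‖ * (4 * K * ‖k‖) := by nlinarith
  exact le_of_mul_le_mul_left this hkp

lemma aj_deriv (A : V → V) (x : V) (C : ℝ) (J : V → V) (hJ : ∀ x, J (x + A x) = x)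
    (hL : ∀ᶠ h in 𝓝 (0 : V), ‖A (x + h) - A x‖ ≤ C * ‖h‖)
    (hD : DifferentiableWithinAt ℝ J (range fun x => x + A x) (x + A x)) :
    ∃ X : V →L[ℝ] V, ∀ η > 0, ∀ᶠ h in 𝓝 (0 : V), ‖A (x + h) - A x - X h‖ ≤ η * ‖h‖ := by
  obtain ⟨D, hD⟩ := hD
  have hC0 : (0:ℝ) < |C| + 1 := by positivity
  set k : V → V := fun h => h + (A (x + h) - A x) with hk
  have hkb : ∀ᶠ h in 𝓝 (0 : V), ‖k h‖ ≤ (|C| + 1) * ‖h‖ := by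
    filter_upwards [hL] with h hh
    calc ‖k h‖ ≤ ‖h‖ + ‖A (x + h) - A x‖ := norm_add_le _ _
      _ ≤ ‖h‖ + C * ‖h‖ := by gcongr
      _ ≤ ‖h‖ + |C| * ‖h‖ := by gcongr; exact le_abs_self C
      _ = _ := by ring
  have hk0 : Tendsto k (𝓝 0) (𝓝 0) := by
    apply squeeze_zero_norm' hkb
    have : Continuous fun h : V => (|C| + 1) * ‖h‖ := by fun_prop
    simpa using this.tendsto 0
  have hkt : Tendsto (fun h => (x + A x) + k h) (𝓝 0) (𝓝[range fun x => x + A x] (x + A x)) := by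
    apply tendsto_nhdsWithin_iff.mpr
    constructor
    · simpa using hk0.const_add (x + A x)
    · refine Eventually.of_forall fun h => ⟨x + h, ?_⟩
      simp only [hk]; abel
  have hmain : ∀ η > 0, ∀ᶠ h in 𝓝 (0 : V), ‖h - D (k h)‖ ≤ η * ‖h‖ := by
    intro η hη
    have h1 := hD.isLittleO.def (c := η / (|C| + 1)) (by positivity)
    filter_upwards [hkt.eventually h1, hkb] with h hh hb
    have e : J (x + A x + k h) = x + h := by
      rw [← hJ (x + h)]; congr 1; simp only [hk]; abel
    rw [e, hJ] at hh
    simp only [add_sub_cancel_left] at hh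
    calc _ ≤ _ := hh
      _ ≤ η / (|C| + 1) * ((|C| + 1) * ‖h‖) := by gcongr
      _ = _ := by field_simp
  have hsurj : Function.Surjective D := by
    suffices hR : LinearMap.range (D : V →ₗ[ℝ] V) = ⊤ from LinearMap.range_eq_top.mp hR
    by_contra hne
    have : (LinearMap.range (D : V →ₗ[ℝ] V))ᗮ ≠ ⊥ := by
      intro h
      exact hne ((Submodule.orthogonal_eq_bot_iff).mp h)
    obtain ⟨h0, hh0, hne0⟩ := Submodule.exists_mem_ne_zero_of_ne_bot this
    have hp : 0 < ‖h0‖ := norm_pos_iff.mpr hne0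
    have hc : Tendsto (fun t : ℝ => t • h0) (𝓝[>] 0) (𝓝 0) := by
      have : Tendsto (fun t : ℝ => t • h0) (𝓝 0) (𝓝 ((0:ℝ) • h0)) :=
        (continuous_id.smul continuous_const).tendsto 0
      rw [zero_smul] at this
      exact this.mono_left nhdsWithin_le_nhds
    obtain ⟨t, ht, ht0⟩ := ((hc.eventually (hmain (1/2) (by norm_num))).and self_mem_nhdsWithin).exists
    have ht0 : 0 < t := ht0
    have hmem : t • h0 ∈ (LinearMap.range (D : V →ₗ[ℝ] V))ᗮ := Submodule.smul_mem _ _ hh0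
    have horth : ⟪D (k (t • h0)), t • h0⟫ = 0 :=
      (Submodule.mem_orthogonal _ _).mp hmem _ ⟨k (t • h0), rfl⟩
    have h2 : ‖t • h0‖ ^ 2 = ⟪t • h0 - D (k (t • h0)), t • h0⟫ := by
      rw [inner_sub_left, horth, real_inner_self_eq_norm_sq]; ring
    have h3 := real_inner_le_norm (t • h0 - D (k (t • h0))) (t • h0)
    have h4 : 0 < ‖t • h0‖ := norm_pos_iff.mpr (smul_ne_zero ht0.ne' hne0)
    nlinarith
  have hinj : Function.Injective (D : V →ₗ[ℝ] V) := LinearMap.injective_iff_surjective.mpr hsurj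
  set e : V ≃ₗ[ℝ] V := LinearEquiv.ofBijective (D : V →ₗ[ℝ] V) ⟨hinj, hsurj⟩ with he
  set G : V →L[ℝ] V := LinearMap.toContinuousLinearMap (e.symm : V →ₗ[ℝ] V) with hG
  have hGD : ∀ y, G (D y) = y := fun y => e.symm_apply_apply y
  refine ⟨G - ContinuousLinearMap.id ℝ V, fun η hη => ?_⟩
  filter_upwards [hmain (η / (‖G‖ + 1)) (by positivity)] with h hh
  have e1 : A (x + h) - A x - (G - ContinuousLinearMap.id ℝ V) h = - G (h - D (k h)) := by
    rw [map_sub, hGD]; simp only [hk, sub_apply, ContinuousLinearMap.id_apply]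
    abel
  rw [e1, norm_neg]
  calc _ ≤ ‖G‖ * ‖h - D (k h)‖ := G.le_opNorm _
    _ ≤ (‖G‖ + 1) * (η / (‖G‖ + 1) * ‖h‖) := by gcongr; linarith
    _ = _ := by field_simp

lemma riemann_one (φ : ℝ → ℝ) (c a : ℝ)
    (h : ∀ s t, 0 ≤ s → s ≤ t → t ≤ 1 → φ t - φ s ≤ (c + a * (t - s)) * (t - s)) :
    φ 1 - φ 0 ≤ c := by
  have key : ∀ n : ℕ, ∀ j : ℕ, j ≤ n + 1 →
      φ (j / (n + 1 : ℝ)) - φ 0 ≤ (j / (n + 1 : ℝ)) * (c + a * (1 / (n + 1 : ℝ))) := by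
    intro n j
    induction j with
    | zero => intro _; simp
    | succ j ih =>
      intro hj
      have ih := ih (by omega)
      have hn : (0:ℝ) < n + 1 := by positivity
      have hj' : ((j:ℝ) + 1) ≤ n + 1 := by exact_mod_cast hj
      have e : ((j + 1 : ℕ) : ℝ) / (n + 1 : ℝ) - j / (n + 1 : ℝ) = 1 / (n + 1 : ℝ) := by
        push_cast; ring
      have h1 := h (j / (n + 1 : ℝ)) ((j + 1 : ℕ) / (n + 1 : ℝ)) (by positivity)
        (by gcongr; push_cast; linarith) (by rw [div_le_one hn]; push_cast; exact hj')
      rw [e] at h1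
      have e2 : ((j + 1 : ℕ) : ℝ) / (n + 1 : ℝ) = j / (n + 1 : ℝ) + 1 / (n + 1 : ℝ) := by linarith
      have e3 : (((j + 1 : ℕ) : ℝ) / (n + 1 : ℝ)) * (c + a * (1 / (n + 1 : ℝ))) =
        (j / (n + 1 : ℝ)) * (c + a * (1 / (n + 1 : ℝ))) +
        (c + a * (1 / (n + 1 : ℝ))) * (1 / (n + 1 : ℝ)) := by rw [e2]; ring
      rw [e3]; linarith
  have h1 : ∀ n : ℕ, φ 1 - φ 0 ≤ c + a * (1 / (n + 1 : ℝ)) := by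
    intro n
    have := key n (n + 1) le_rfl
    have hn : ((n:ℝ) + 1) ≠ 0 := by positivity
    push_cast at this
    rw [div_self hn, one_mul] at this
    exact this
  have h2 : Tendsto (fun n : ℕ => c + a * (1 / (n + 1 : ℝ))) atTop (𝓝 (c + a * 0)) :=
    (tendsto_one_div_add_atTop_nhds_zero_nat.const_mul a).const_add c
  simp only [mul_zero, add_zero] at h2
  exact ge_of_tendsto' h2 h1

lemma aj_taylor (F : V → ℝ) (A : V → V) (hA : ∀ x y, F x + ⟪A x, y - x⟫ ≤ F y)
    (x : V) (X : V →L[ℝ] V)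
    (hX : ∀ η > 0, ∀ᶠ h in 𝓝 (0 : V), ‖A (x + h) - A x - X h‖ ≤ η * ‖h‖) :
    ∀ η > 0, ∀ᶠ h in 𝓝 (0 : V),
      |F (x + h) - F x - ⟪A x, h⟫ - ⟪X h, h⟫ / 2| ≤ η * ‖h‖ ^ 2 := by
  intro η hη
  obtain ⟨ρ, hρ, hb⟩ := Metric.eventually_nhds_iff.mp (hX η hη)
  refine Metric.eventually_nhds_iff.mpr ⟨ρ, hρ, fun h hh => ?_⟩
  rw [dist_zero_right] at hh
  set a := ⟪X h, h⟫ with ha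
  set φ : ℝ → ℝ := fun t => F (x + t • h) - t * ⟪A x, h⟫ - t ^ 2 * a / 2 with hφ
  have hAt : ∀ t : ℝ, 0 ≤ t → t ≤ 1 →
      |⟪A (x + t • h), h⟫ - ⟪A x, h⟫ - t * a| ≤ η * ‖h‖ ^ 2 := by
    intro t h0 h1
    have hn : ‖t • h‖ ≤ ‖h‖ := by
      rw [norm_smul, Real.norm_of_nonneg h0]; nlinarith [norm_nonneg h]
    have h2 := hb (y := t • h) (by rw [dist_zero_right]; linarith)
    have e : ⟪A (x + t • h), h⟫ - ⟪A x, h⟫ - t * a = ⟪A (x + t • h) - A x - X (t • h), h⟫ := by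
      simp only [inner_sub_left, map_smul, inner_smul_left, RCLike.conj_to_real, ha]
    rw [e]
    calc _ ≤ ‖A (x + t • h) - A x - X (t • h)‖ * ‖h‖ := abs_real_inner_le_norm _ _
      _ ≤ (η * ‖t • h‖) * ‖h‖ := by gcongr
      _ ≤ (η * ‖h‖) * ‖h‖ := by gcongr
      _ = _ := by ring
  have hinc : ∀ s t : ℝ, F (x + s • h) + (t - s) * ⟪A (x + s • h), h⟫ ≤ F (x + t • h) := by
    intro s t
    have := hA (x + s • h) (x + t • h)
    have e : x + t • h - (x + s • h) = (t - s) • h := by rw [sub_smul]; abel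
    rw [e, inner_smul_right] at this
    exact this
  have up : φ 1 - φ 0 ≤ η * ‖h‖ ^ 2 := by
    apply riemann_one φ _ (a / 2)
    intro s t hs hst ht
    have h1 := hinc t s
    have h2 := (abs_le.mp (hAt t (by linarith) ht)).2
    simp only [hφ]
    nlinarith
  have lo : (fun t => - φ t) 1 - (fun t => - φ t) 0 ≤ η * ‖h‖ ^ 2 := by
    apply riemann_one (fun t => - φ t) _ (a / 2)
    intro s t hs hst ht
    have h1 := hinc s t
    have h2 := (abs_le.mp (hAt s hs (by linarith))).1
    simp only [hφ]
    nlinarith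
  simp only [hφ, one_smul, zero_smul, add_zero] at up lo
  rw [abs_le]
  constructor <;> linarith
end AJ

section AJ2
variable {V : Type*} [NormedAddCommGroup V] [InnerProductSpace ℝ V] [FiniteDimensional ℝ V]

local notation "⟪" x ", " y "⟫" => inner ℝ x y

lemma aj_core (F : V → ℝ) (A : V → V) (hF : Continuous F)
    (hA : ∀ x y, F x + ⟪A x, y - x⟫ ≤ F y) (l : V) (S : V →L[ℝ] V)
    (hS : ∀ x y, ⟪S x, y⟫ = ⟪x, S y⟫) (r δ : ℝ) (hr : 0 < r) (hδ : 0 < δ)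
    (hb : ∀ x, ‖x‖ = r → F x - ⟪l, x⟫ - ⟪S x, x⟫ / 2 < F 0) :
    ∃ (x τ : V) (X : V →L[ℝ] V), ‖x‖ < r ∧ ‖τ‖ < δ ∧ A x = l + S x + τ ∧
      (∀ h, ⟪X h, h⟫ ≤ ⟪S h, h⟫) ∧
      ∀ η > 0, ∀ᶠ h in 𝓝 (0 : V),
        |F (x + h) - F x - ⟪A x, h⟫ - ⟪X h, h⟫ / 2| ≤ η * ‖h‖ ^ 2 := by
  classical
  borelize V
  obtain ⟨g, hg, hbg⟩ : ∃ g > 0, ∀ x, ‖x‖ = r → F x - ⟪l, x⟫ - ⟪S x, x⟫ / 2 + g ≤ F 0 := by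
    by_cases hne : (sphere (0 : V) r).Nonempty
    · have hcont : Continuous fun x => F x - ⟪l, x⟫ - ⟪S x, x⟫ / 2 := by fun_prop
      obtain ⟨x, hx, hmax⟩ := (isCompact_sphere (0 : V) r).exists_isMaxOn hne hcont.continuousOn
      refine ⟨F 0 - (F x - ⟪l, x⟫ - ⟪S x, x⟫ / 2), by linarith [hb x (by simpa using hx)], ?_⟩
      intro y hy
      have := hmax (show y ∈ sphere (0 : V) r by simpa using hy)
      simp only [mem_ofPred_eq] at this
      linarith
    · refine ⟨1, one_pos, fun x hx => absurd ⟨x, by simpa using hx⟩ hne⟩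
  set δ' := min δ (g / r) with hδ'
  have hδ'p : 0 < δ' := lt_min hδ (by positivity)
  have hcon : ∀ τ ∈ ball (0 : V) δ', ∃ x, ‖x‖ < r ∧ A x = l + S x + τ ∧
      ∀ᶠ h in 𝓝 (0 : V), F (x + h) - F x ≤ ⟪l + S x + τ, h⟫ + ⟪S h, h⟫ / 2 := by
    intro τ hτ
    apply aj_contact F A hF hA l S hS r g hr hbg
    have h1 : ‖τ‖ < g / r := lt_of_lt_of_le (mem_ball_zero_iff.mp hτ) (min_le_right _ _)
    exact (lt_div_iff₀ hr).mp h1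
  have hmono : ∀ x y, 0 ≤ ⟪A x - A y, x - y⟫ := by
    intro x y
    have h1 := hA x y
    have h2 := hA y x
    have e : y - x = -(x - y) := by abel
    rw [e, inner_neg_right] at h1
    rw [inner_sub_left]; linarith
  have hexp : ∀ x y, ‖x - y‖ ≤ ‖(x + A x) - (y + A y)‖ := by
    intro x y
    have h1 := hmono x y
    have e : (x + A x) - (y + A y) = (x - y) + (A x - A y) := by abel
    have h2 : ‖x - y‖ ^ 2 ≤ ⟪(x + A x) - (y + A y), x - y⟫ := by
      rw [e, inner_add_left, real_inner_self_eq_norm_sq]; linarith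
    have h3 := real_inner_le_norm ((x + A x) - (y + A y)) (x - y)
    by_contra hlt
    push Not at hlt
    have h4 : 0 < ‖x - y‖ := lt_of_le_of_lt (norm_nonneg _) hlt
    nlinarith
  set s := range fun x => x + A x with hs
  have hinj : Function.Injective fun x => x + A x := by
    intro x y hxy
    have h1 := hexp x y
    simp only at hxy
    rw [hxy, sub_self, norm_zero] at h1
    exact sub_eq_zero.mp (norm_le_zero_iff.mp h1)
  set J : V → V := Function.invFun fun x => x + A x with hJdef
  have hJ : ∀ x, J (x + A x) = x := fun x => Function.leftInverse_invFun hinj x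
  have hJL : LipschitzOnWith 1 J s := by
    apply LipschitzOnWith.of_dist_le_mul
    rintro _ ⟨x, rfl⟩ _ ⟨y, rfl⟩
    simp only [hJ, dist_eq_norm]
    simpa using hexp x y
  set μ : Measure V := Measure.hausdorffMeasure (Module.finrank ℝ V) with hμ
  have hae := hJL.ae_differentiableWithinAt_of_mem (μ := μ)
  set Nset := {ω | ¬ (ω ∈ s → DifferentiableWithinAt ℝ J s ω)} with hN
  have hN0 : μ Nset = 0 := hae
  set Sig : V → V := fun ω => (ω - J ω) - l - S (J ω) with hSig
  have hSigL : ∃ K : NNReal, LipschitzOnWith K Sig s := by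
    have hid : LipschitzOnWith 1 (fun ω : V => ω) s := LipschitzWith.id.lipschitzOnWith
    have h2 : LipschitzOnWith (‖S‖₊ * 1) (fun ω => S (J ω)) s := S.lipschitz.comp_lipschitzOnWith hJL
    have hc : LipschitzOnWith 0 (fun _ : V => l) s := (LipschitzWith.const l).lipschitzOnWith
    exact ⟨_, ((hid.sub hJL).sub hc).sub h2⟩
  obtain ⟨K, hK⟩ := hSigL
  obtain ⟨τ, hτ, x, hxr, hAx, hev, hxd⟩ : ∃ τ ∈ ball (0 : V) δ', ∃ x, ‖x‖ < r ∧ A x = l + S x + τ ∧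
      (∀ᶠ h in 𝓝 (0 : V), F (x + h) - F x ≤ ⟪l + S x + τ, h⟫ + ⟪S h, h⟫ / 2) ∧
      DifferentiableWithinAt ℝ J s (x + A x) := by
    by_contra hno
    push Not at hno
    have hsub : ball (0 : V) δ' ⊆ Sig '' (Nset ∩ s) := by
      intro τ hτ
      obtain ⟨x, hxr, hAx, hev⟩ := hcon τ hτ
      refine ⟨x + A x, ⟨?_, ⟨x, rfl⟩⟩, ?_⟩
      · intro h
        exact hno τ hτ x hxr hAx hev (h ⟨x, rfl⟩)
      · simp only [hSig, hJ]
        rw [hAx]; abel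
    have h1 : μ (Sig '' (Nset ∩ s)) = 0 := by
      have := (hK.mono (inter_subset_right : Nset ∩ s ⊆ s)).hausdorffMeasure_image_le
        (d := (Module.finrank ℝ V : ℝ)) (by positivity)
      have h0 : μ (Nset ∩ s) = 0 := measure_mono_null inter_subset_left hN0
      rw [← hμ, h0, mul_zero] at this
      exact le_antisymm this zero_le
    have h2 : μ (ball (0 : V) δ') = 0 := measure_mono_null hsub h1
    exact (measure_ball_pos μ (0 : V) hδ'p).ne' h2
  have hev' : ∀ᶠ h in 𝓝 (0 : V), F (x + h) - F x ≤ ⟪A x, h⟫ + (‖S‖ / 2) * ‖h‖ ^ 2 := by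
    filter_upwards [hev] with h hh
    rw [hAx]
    have h1 := real_inner_le_norm (S h) h
    have h2 : ‖S h‖ * ‖h‖ ≤ ‖S‖ * ‖h‖ * ‖h‖ := by gcongr; exact S.le_opNorm h
    nlinarith
  have hlip := aj_lip F A hA x (‖S‖ / 2) hev' (by positivity)
  obtain ⟨X, hX⟩ := aj_deriv A x _ J hJ hlip hxd
  have hT := aj_taylor F A hA x X hX
  refine ⟨x, τ, X, hxr, lt_of_lt_of_le (mem_ball_zero_iff.mp hτ) (min_le_left _ _), hAx, ?_, hT⟩
  intro h
  apply le_of_forall_pos_le_add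
  intro ε hε
  have hc : Tendsto (fun t : ℝ => t • h) (𝓝[>] 0) (𝓝 0) := by
    have : Tendsto (fun t : ℝ => t • h) (𝓝 0) (𝓝 ((0:ℝ) • h)) :=
      (continuous_id.smul continuous_const).tendsto 0
    rw [zero_smul] at this
    exact this.mono_left nhdsWithin_le_nhds
  have hη : 0 < ε / (2 * (‖h‖ ^ 2 + 1)) := by positivity
  obtain ⟨t, ⟨ht1, ht2⟩, ht0⟩ := (((hc.eventually hev).and (hc.eventually (hT _ hη))).and
    self_mem_nhdsWithin).exists
  have ht0 : 0 < t := ht0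
  have h1 := (abs_le.mp ht2).1
  rw [← hAx] at ht1
  simp only [map_smul, inner_smul_left, inner_smul_right, RCLike.conj_to_real] at ht1 h1
  rw [norm_smul, Real.norm_of_nonneg ht0.le, mul_pow] at h1
  have h3 : t ^ 2 * (⟪X h, h⟫ - ⟪S h, h⟫) ≤ t ^ 2 * (2 * (ε / (2 * (‖h‖ ^ 2 + 1)) * ‖h‖ ^ 2)) := by
    nlinarith
  have h4 := le_of_mul_le_mul_left h3 (by positivity)
  have h5 : 2 * (ε / (2 * (‖h‖ ^ 2 + 1)) * ‖h‖ ^ 2) ≤ ε := by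
    have : 2 * (ε / (2 * (‖h‖ ^ 2 + 1)) * ‖h‖ ^ 2) = ε * (‖h‖ ^ 2 / (‖h‖ ^ 2 + 1)) := by
      field_simp
    rw [this]
    have : ‖h‖ ^ 2 / (‖h‖ ^ 2 + 1) ≤ 1 := by
      rw [div_le_one (by positivity)]; linarith
    nlinarith
  linarith
end AJ2

section SupConv
variable {V : Type*} [NormedAddCommGroup V] [InnerProductSpace ℝ V] [FiniteDimensional ℝ V]

local notation "⟪" x ", " y "⟫" => inner ℝ x y

set_option maxHeartbeats 1000000 in
lemma supconv_core (K : Set V) (hK : IsCompact K) (h0K : (0 : V) ∈ K) (g : V → ℝ)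
    (hg : UpperSemicontinuousOn g K) (hg0 : g 0 = 0) (l : V) (T : V →L[ℝ] V)
    (hT : ∀ x y, ⟪T x, y⟫ = ⟪x, T y⟫) (η : ℝ) (hη : 0 < η)
    (hgK : ∀ z ∈ K, g z ≤ ⟪l, z⟫ + ⟪T z, z⟫ / 2 - η * ‖z‖ ^ 2) (ε : ℝ) (hε : 0 < ε) :
    ∃ (κ : ℝ) (θ : V → ℝ) (ξ ζ P : V) (X : V →L[ℝ] V),
      (∀ y, ∀ z ∈ K, g z - κ / 2 * ‖z - y‖ ^ 2 ≤ θ y) ∧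
      (∀ y, ∃ z ∈ K, θ y = g z - κ / 2 * ‖z - y‖ ^ 2) ∧
      ζ ∈ K ∧ ‖ζ‖ < ε ∧ θ ξ = g ζ - κ / 2 * ‖ζ - ξ‖ ^ 2 ∧ ‖P - l‖ < ε ∧
      (∀ h, ⟪X h, h⟫ ≤ ⟪T h, h⟫) ∧
      ∀ η' > 0, ∀ᶠ h in 𝓝 (0 : V),
        |θ (ξ + h) - θ ξ - ⟪P, h⟫ - ⟪X h, h⟫ / 2| ≤ η' * ‖h‖ ^ 2 := by
  obtain ⟨R, hR⟩ := hK.isBounded.exists_norm_le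
  have hR0 : 0 ≤ R := le_trans (norm_nonneg _) (hR 0 h0K)
  obtain ⟨r, hr, hr1, hr2⟩ : ∃ r > 0, r ≤ ε / 4 ∧ ‖T‖ * r ≤ ε / 4 := by
    refine ⟨min (ε / 4) (ε / (4 * (‖T‖ + 1))), lt_min (by positivity) (by positivity),
      min_le_left _ _, ?_⟩
    calc ‖T‖ * min (ε / 4) (ε / (4 * (‖T‖ + 1))) ≤ (‖T‖ + 1) * (ε / (4 * (‖T‖ + 1))) := by
          gcongr
          · linarith
          · exact min_le_right _ _
      _ = ε / 4 := by field_simp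
  set M := ‖l‖ + ‖T‖ * (R + r) with hM
  have hM0 : 0 ≤ M := by positivity
  obtain ⟨κ, hκ0, hκ1, hκ2, hκ3⟩ : ∃ κ > 0, 2 * M ^ 2 < κ * (η * r ^ 2) ∧ 4 * M < κ * r ∧
      4 * (‖l‖ + ε) ≤ κ * ε := by
    refine ⟨(2 * M ^ 2 + 1) / (η * r ^ 2) + (4 * M + 1) / r + 4 * (‖l‖ + ε) / ε, by positivity,
      ?_, ?_, ?_⟩
    · have e : (2 * M ^ 2 + 1) / (η * r ^ 2) * (η * r ^ 2) = 2 * M ^ 2 + 1 := by field_simp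
      have : 0 ≤ ((4 * M + 1) / r + 4 * (‖l‖ + ε) / ε) * (η * r ^ 2) := by positivity
      nlinarith
    · have e : (4 * M + 1) / r * r = 4 * M + 1 := by field_simp
      have : 0 ≤ ((2 * M ^ 2 + 1) / (η * r ^ 2) + 4 * (‖l‖ + ε) / ε) * r := by positivity
      nlinarith
    · have e : 4 * (‖l‖ + ε) / ε * ε = 4 * (‖l‖ + ε) := by field_simp
      have : 0 ≤ ((2 * M ^ 2 + 1) / (η * r ^ 2) + (4 * M + 1) / r) * ε := by positivity
      nlinarith
  have hex : ∀ y : V, ∃ z ∈ K, ∀ z' ∈ K,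
      g z' + (κ * ⟪z', y⟫ - κ / 2 * ‖z'‖ ^ 2) ≤ g z + (κ * ⟪z, y⟫ - κ / 2 * ‖z‖ ^ 2) := by
    intro y
    have hc : Continuous fun z : V => κ * ⟪z, y⟫ - κ / 2 * ‖z‖ ^ 2 := by fun_prop
    have hu : UpperSemicontinuousOn (fun z => g z + (κ * ⟪z, y⟫ - κ / 2 * ‖z‖ ^ 2)) K :=
      hg.add (hc.upperSemicontinuous.upperSemicontinuousOn K)
    obtain ⟨z, hz, hm⟩ := hu.exists_isMaxOn ⟨0, h0K⟩ hK
    exact ⟨z, hz, fun z' hz' => hm hz'⟩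
  choose Z hZK hZ using hex
  set F : V → ℝ := fun y => g (Z y) + (κ * ⟪Z y, y⟫ - κ / 2 * ‖Z y‖ ^ 2) with hF
  have hA : ∀ x y, F x + ⟪κ • Z x, y - x⟫ ≤ F y := by
    intro x y
    have := hZ y (Z x) (hZK x)
    simp only [hF, inner_smul_left, RCLike.conj_to_real, inner_sub_right]
    linarith
  have hFc : Continuous F := by
    have hle : ∀ x y, F x - F y ≤ κ * R * dist x y := by
      intro x y
      have h1 := hA x y
      have h2 := abs_real_inner_le_norm (κ • Z x) (y - x)
      rw [norm_smul, Real.norm_of_nonneg hκ0.le] at h2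
      have h3 : κ * ‖Z x‖ * ‖y - x‖ ≤ κ * R * ‖y - x‖ := by
        gcongr; exact hR _ (hZK x)
      have h4 := (abs_le.mp (h2.trans h3)).1
      rw [dist_comm, dist_eq_norm]
      linarith
    have : LipschitzWith (κ * R).toNNReal F := by
      apply LipschitzWith.of_dist_le_mul
      intro x y
      rw [Real.dist_eq, Real.coe_toNNReal _ (by positivity), abs_le]
      have h1 := hle x y
      have h2 := hle y x
      rw [dist_comm] at h2
      constructor <;> linarith
    exact this.continuous
  set S : V →L[ℝ] V := T + κ • ContinuousLinearMap.id ℝ V with hS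
  have hSa : ∀ x, S x = T x + κ • x := fun x => rfl
  have hSs : ∀ x y, ⟪S x, y⟫ = ⟪x, S y⟫ := by
    intro x y
    rw [hSa, hSa, inner_add_left, inner_add_right, hT, inner_smul_left, inner_smul_right]
    rfl
  have hFθ : ∀ y, F y = (g (Z y) - κ / 2 * ‖Z y - y‖ ^ 2) + κ / 2 * ‖y‖ ^ 2 := by
    intro y
    simp only [hF, norm_sub_sq_real]; ring
  have hb : ∀ x, ‖x‖ = r → F x - ⟪l, x⟫ - ⟪S x, x⟫ / 2 < F 0 := by
    intro x hx
    have hF0 : 0 ≤ F 0 := by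
      have := hZ 0 0 h0K
      simp only [hg0, inner_zero_right, norm_zero] at this
      simp only [hF, inner_zero_right]
      linarith
    refine lt_of_lt_of_le ?_ hF0
    rw [hFθ, hSa, inner_add_left, inner_smul_left, real_inner_self_eq_norm_sq]
    simp only [RCLike.conj_to_real]
    set z := Z x with hz
    have hgz := hgK z (hZK x)
    set d := ‖z - x‖ with hd
    have hd0 : 0 ≤ d := norm_nonneg _
    have h1 : ⟪l, z⟫ - ⟪l, x⟫ ≤ ‖l‖ * d := by
      rw [← inner_sub_right]; exact real_inner_le_norm _ _
    have h2 : ⟪T z, z⟫ - ⟪T x, x⟫ ≤ ‖T‖ * (R + r) * d := by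
      have e : ⟪T z, z⟫ - ⟪T x, x⟫ = ⟪T (z - x), z + x⟫ := by
        have := hT z x
        rw [real_inner_comm (T x) z] at this
        simp only [map_sub, inner_sub_left, inner_add_right]
        linarith
      rw [e]
      calc _ ≤ ‖T (z - x)‖ * ‖z + x‖ := real_inner_le_norm _ _
        _ ≤ (‖T‖ * ‖z - x‖) * (R + r) := by
          gcongr
          · exact T.le_opNorm _
          · calc _ ≤ ‖z‖ + ‖x‖ := norm_add_le _ _
              _ ≤ R + r := by rw [hx]; gcongr; exact hR _ (hZK x)
        _ = _ := by ring
    have h3 : ‖T‖ * (R + r) * d ≤ 2 * (‖T‖ * (R + r) * d) := by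
      have : 0 ≤ ‖T‖ * (R + r) * d := by positivity
      linarith
    have hmain : M * d - η * ‖z‖ ^ 2 - κ / 2 * d ^ 2 < 0 := by
      have hzr : r - d ≤ ‖z‖ := by
        have : ‖x‖ ≤ ‖z‖ + ‖z - x‖ := by
          calc ‖x‖ = ‖z - (z - x)‖ := by congr 1; abel
            _ ≤ _ := norm_sub_le _ _
        rw [hx] at this; linarith
      rcases le_or_gt d (r / 2) with hdr | hdr
      · have h5 : (r / 2) ^ 2 ≤ ‖z‖ ^ 2 := by
          apply pow_le_pow_left₀ (by positivity); linarith
        have h6 : η * (r / 2) ^ 2 ≤ η * ‖z‖ ^ 2 := by gcongr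
        have h7 : κ * (M * d - κ / 2 * d ^ 2) ≤ M ^ 2 / 2 := by
          nlinarith [sq_nonneg (M - κ * d)]
        have h8 : κ * (M * d - η * ‖z‖ ^ 2 - κ / 2 * d ^ 2) < 0 := by nlinarith
        exact neg_of_mul_neg_right h8 hκ0.le
      · have h5 : 0 ≤ η * ‖z‖ ^ 2 := by positivity
        have h6 : 0 < d := by linarith
        have h7 : M < κ * d / 2 := by nlinarith
        have h8 : M * d < κ * d / 2 * d := by gcongr
        nlinarith
    have h9 : M * d = ‖l‖ * d + ‖T‖ * (R + r) * d := by rw [hM]; ring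
    rw [hx]
    linarith
  obtain ⟨ξ, τ, X, hξ, hτ, hAξ, hXS, hTay⟩ :=
    aj_core F (fun y => κ • Z y) hFc hA l S hSs r (ε / 4) hr (by positivity) hb
  have hAξ2 : κ • Z ξ = l + (T ξ + κ • ξ) + τ := hAξ
  have hXa : ∀ h, (X - κ • ContinuousLinearMap.id ℝ V) h = X h - κ • h := fun h => rfl
  refine ⟨κ, fun y => F y - κ / 2 * ‖y‖ ^ 2, ξ, Z ξ, l + T ξ + τ,
    X - κ • ContinuousLinearMap.id ℝ V, ?_, ?_, hZK ξ, ?_, ?_, ?_, ?_, ?_⟩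
  · intro y z hz
    have h1 := hZ y z hz
    simp only [hF]
    rw [norm_sub_sq_real]
    linarith
  · intro y
    exact ⟨Z y, hZK y, by simp only [hFθ]; ring⟩
  · have e : κ • (Z ξ - ξ) = l + T ξ + τ := by
      rw [smul_sub, hAξ2]; abel
    have h1 : κ * ‖Z ξ - ξ‖ ≤ ‖l‖ + ε / 4 + ε / 4 := by
      have : κ * ‖Z ξ - ξ‖ = ‖l + T ξ + τ‖ := by
        rw [← e, norm_smul, Real.norm_of_nonneg hκ0.le]
      rw [this]
      calc _ ≤ ‖l‖ + ‖T ξ‖ + ‖τ‖ := norm_add₃_le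
        _ ≤ _ := by
          have : ‖T ξ‖ ≤ ‖T‖ * r := (T.le_opNorm ξ).trans (by gcongr)
          linarith
    have h2 : ‖Z ξ - ξ‖ ≤ ε / 4 := by
      have : κ * ‖Z ξ - ξ‖ ≤ κ * (ε / 4) := by linarith
      exact le_of_mul_le_mul_left this hκ0
    have h3 : ‖Z ξ‖ ≤ ‖Z ξ - ξ‖ + ‖ξ‖ := by
      calc ‖Z ξ‖ = ‖(Z ξ - ξ) + ξ‖ := by congr 1; abel
        _ ≤ _ := norm_add_le _ _
    linarith
  · simp only [hFθ]; ring
  · have : l + T ξ + τ - l = T ξ + τ := by abel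
    rw [this]
    have h1 : ‖T ξ‖ ≤ ‖T‖ * r := (T.le_opNorm ξ).trans (by gcongr)
    have h2 := norm_add_le (T ξ) τ
    linarith
  · intro h
    have := hXS h
    rw [hXa, inner_sub_left, inner_smul_left, real_inner_self_eq_norm_sq]
    rw [hSa, inner_add_left, inner_smul_left, real_inner_self_eq_norm_sq] at this
    linarith
  · intro η' hη'
    filter_upwards [hTay η' hη'] with h hh
    have e : F (ξ + h) - κ / 2 * ‖ξ + h‖ ^ 2 - (F ξ - κ / 2 * ‖ξ‖ ^ 2) - ⟪l + T ξ + τ, h⟫ -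
        ⟪(X - κ • ContinuousLinearMap.id ℝ V) h, h⟫ / 2 =
        F (ξ + h) - F ξ - ⟪κ • Z ξ, h⟫ - ⟪X h, h⟫ / 2 := by
      have e1 : κ • Z ξ = l + T ξ + τ + κ • ξ := by rw [hAξ2]; abel
      rw [e1, hXa, inner_sub_left, inner_add_left _ (κ • ξ), inner_smul_left, inner_smul_left,
        real_inner_self_eq_norm_sq, norm_add_sq_real]
      simp only [RCLike.conj_to_real]
      ring
    rw [e]; exact hh
end SupConv

section TSApprox
variable {E : Type*} [NormedAddCommGroup E] [InnerProductSpace ℝ E] [FiniteDimensional ℝ E]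

local notation "⟪" x ", " y "⟫" => inner ℝ x y

lemma exists_sym_op {V : Type*} [NormedAddCommGroup V] [InnerProductSpace ℝ V]
    [FiniteDimensional ℝ V] (B : V →L[ℝ] V →L[ℝ] ℝ) :
    ∃ S : V →L[ℝ] V, (∀ x y, ⟪S x, y⟫ = ⟪x, S y⟫) ∧ ∀ x, ⟪S x, x⟫ = B x x := by
  have : CompleteSpace V := FiniteDimensional.complete ℝ V
  set C : V →L[ℝ] V →L[ℝ] ℝ := (1/2 : ℝ) • (B + B.flip) with hC
  have hCa : ∀ x y, C x y = (1/2) * (B x y + B y x) := fun x y => rfl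
  let S0 : V →ₗ[ℝ] V :=
    { toFun := fun x => (InnerProductSpace.toDual ℝ V).symm (C x)
      map_add' := fun x y => by rw [map_add, map_add]
      map_smul' := fun c x => by rw [map_smul, map_smulₛₗ]; rfl }
  have hS0 : ∀ x y, ⟪S0 x, y⟫ = C x y := fun x y => InnerProductSpace.toDual_symm_apply
  refine ⟨LinearMap.toContinuousLinearMap S0, fun x y => ?_, fun x => ?_⟩
  · change ⟪S0 x, y⟫ = ⟪x, S0 y⟫
    rw [real_inner_comm, real_inner_comm (S0 x), hS0, real_inner_comm, hS0, hCa, hCa]; ring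
  · change ⟪S0 x, x⟫ = B x x
    rw [hS0, hCa]; ring

set_option maxHeartbeats 1000000 in
lemma ts_approx (u v : E → ℝ) (x₀ y₀ p q : E) (T : (E × E) →L[ℝ] (E × E) →L[ℝ] ℝ)
    (ρ : ℝ) (hρ : 0 < ρ) (hv : UpperSemicontinuousOn v (closedBall x₀ ρ))
    (hu : LowerSemicontinuousOn u (closedBall y₀ ρ))
    (hT : ∀ η > 0, ∀ᶠ h : E × E in 𝓝 0, v (x₀ + h.1) - u (y₀ + h.2) ≤ v x₀ - u y₀ +
      ⟪p, h.1⟫ - ⟪q, h.2⟫ + T h h / 2 + η * (‖h.1‖ ^ 2 + ‖h.2‖ ^ 2)) (ε : ℝ) (hε : 0 < ε) :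
    ∃ (x y p' q' : E) (X₁ X₂ : E →L[ℝ] E), ‖x - x₀‖ < ε ∧ ‖y - y₀‖ < ε ∧ ‖p' - p‖ < ε ∧
      ‖q' - q‖ < ε ∧
      (∀ η > 0, ∀ᶠ h in 𝓝 (0 : E), v (x + h) - v x ≤ ⟪p', h⟫ + ⟪X₁ h, h⟫ / 2 + η * ‖h‖ ^ 2) ∧
      (∀ η > 0, ∀ᶠ h in 𝓝 (0 : E), ⟪q', h⟫ + ⟪X₂ h, h⟫ / 2 - η * ‖h‖ ^ 2 ≤ u (y + h) - u y) ∧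
      ∀ a b, ⟪X₁ a, a⟫ - ⟪X₂ b, b⟫ ≤ T (a, b) (a, b) + ε * (‖a‖ ^ 2 + ‖b‖ ^ 2) := by
  set e := WithLp.prodContinuousLinearEquiv 2 ℝ E E with he
  set η := ε / 4 with hη
  have hηp : 0 < η := by positivity
  obtain ⟨ρ', hρ', hTb⟩ := Metric.eventually_nhds_iff.mp (hT η hηp)
  set ρ₁ := min ρ (ρ' / 2) with hρ₁
  have hρ₁p : 0 < ρ₁ := lt_min hρ (by positivity)
  have hρ₁ρ : ρ₁ ≤ ρ := min_le_left _ _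
  have hρ₁ρ' : ρ₁ < ρ' := lt_of_le_of_lt (min_le_right _ _) (by linarith)
  set K : Set (WithLp 2 (E × E)) := e.toHomeomorph ⁻¹' (closedBall 0 ρ₁ ×ˢ closedBall 0 ρ₁) with hK
  have hKc : IsCompact K := e.toHomeomorph.isCompact_preimage.mpr
    ((isCompact_closedBall _ _).prod (isCompact_closedBall _ _))
  have hKm : ∀ z, z ∈ K ↔ ‖z.fst‖ ≤ ρ₁ ∧ ‖z.snd‖ ≤ ρ₁ := by
    intro z
    rw [hK, mem_preimage, mem_prod, mem_closedBall_zero_iff, mem_closedBall_zero_iff]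
    rfl
  have hns : ∀ z : WithLp 2 (E × E), ‖z‖ ^ 2 = ‖z.fst‖ ^ 2 + ‖z.snd‖ ^ 2 :=
    fun z => WithLp.prod_norm_sq_eq_of_L2 z
  have hin : ∀ z w : WithLp 2 (E × E), ⟪z, w⟫ = ⟪z.fst, w.fst⟫ + ⟪z.snd, w.snd⟫ :=
    fun z w => WithLp.prod_inner_apply z w
  have hfc : Continuous fun z : WithLp 2 (E × E) => z.fst := continuous_fst.comp e.continuous
  have hsc : Continuous fun z : WithLp 2 (E × E) => z.snd := continuous_snd.comp e.continuous
  set g : WithLp 2 (E × E) → ℝ := fun z => v (x₀ + z.fst) - u (y₀ + z.snd) - (v x₀ - u y₀) with hg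
  have hgu : UpperSemicontinuousOn g K := by
    have h1 : UpperSemicontinuousOn (fun z : WithLp 2 (E × E) => v (x₀ + z.fst)) K := by
      refine hv.comp (f := v) (g := fun z : WithLp 2 (E × E) => x₀ + z.fst)
        (by fun_prop) ?_
      intro z hz
      simp only [mem_closedBall, dist_self_add_left]
      exact ((hKm z).mp hz).1.trans hρ₁ρ
    have h2 : UpperSemicontinuousOn (fun z : WithLp 2 (E × E) => - u (y₀ + z.snd)) K := by
      have h3 : LowerSemicontinuousOn (fun z : WithLp 2 (E × E) => u (y₀ + z.snd)) K := by
        refine hu.comp (f := u) (g := fun z : WithLp 2 (E × E) => y₀ + z.snd)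
          (by fun_prop) ?_
        intro z hz
        simp only [mem_closedBall, dist_self_add_left]
        exact ((hKm z).mp hz).2.trans hρ₁ρ
      intro z hz c hc
      have := h3 z hz (-c) (by linarith)
      filter_upwards [this] with z' hz'
      linarith
    have h3 : UpperSemicontinuousOn (fun _ : WithLp 2 (E × E) => -(v x₀ - u y₀)) K :=
      upperSemicontinuousOn_const
    have h4 := (h1.add h2).add h3
    have e4 : g = fun z => v (x₀ + z.fst) + -u (y₀ + z.snd) + -(v x₀ - u y₀) := by
      funext z; simp only [hg]; ring
    rw [e4]; exact h4
  set T0 : WithLp 2 (E × E) →L[ℝ] WithLp 2 (E × E) →L[ℝ] ℝ :=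
    T.bilinearComp (e : WithLp 2 (E × E) →L[ℝ] E × E) (e : WithLp 2 (E × E) →L[ℝ] E × E) with hT0
  have hT0a : ∀ z, T0 z z = T (z.fst, z.snd) (z.fst, z.snd) := fun z => rfl
  obtain ⟨S, hSs, hSq⟩ := exists_sym_op T0
  set S' : WithLp 2 (E × E) →L[ℝ] WithLp 2 (E × E) :=
    S + (4 * η) • ContinuousLinearMap.id ℝ _ with hS'
  have hS'a : ∀ z, S' z = S z + (4 * η) • z := fun z => rfl
  have hS's : ∀ x y, ⟪S' x, y⟫ = ⟪x, S' y⟫ := by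
    intro x y
    rw [hS'a, hS'a, inner_add_left, inner_add_right, hSs, inner_smul_left, inner_smul_right]
    rfl
  have hS'q : ∀ z, ⟪S' z, z⟫ = T (z.fst, z.snd) (z.fst, z.snd) + 4 * η * ‖z‖ ^ 2 := by
    intro z
    rw [hS'a, inner_add_left, hSq, hT0a, inner_smul_left, real_inner_self_eq_norm_sq]; rfl
  have hgK : ∀ z ∈ K, g z ≤ ⟪WithLp.toLp 2 (p, -q), z⟫ + ⟪S' z, z⟫ / 2 - η * ‖z‖ ^ 2 := by
    intro z hz
    have h1 := hTb (y := (z.fst, z.snd)) (by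
      rw [dist_zero_right, Prod.norm_def]
      exact lt_of_le_of_lt (max_le ((hKm z).mp hz).1 ((hKm z).mp hz).2) hρ₁ρ')
    rw [hS'q, hin, hns]
    simp only [hg, WithLp.toLp_fst, WithLp.toLp_snd, inner_neg_left] at h1 ⊢
    linarith
  obtain ⟨κ, θ, ξ, ζ, P, X, hθ1, hθ2, hζK, hζε, hθξ, hPl, hXT, hTay⟩ :=
    supconv_core K hKc ((hKm 0).mpr (by simp [hρ₁p.le])) g hgu (by simp [hg])
      (WithLp.toLp 2 (p, -q)) S' hS's η hηp hgK (min ε ρ₁) (lt_min hε hρ₁p)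
  have hfs : ∀ z : WithLp 2 (E × E), ‖z.fst‖ ≤ ‖z‖ := by
    intro z
    apply le_of_sq_le_sq _ (norm_nonneg _)
    rw [hns]; nlinarith [norm_nonneg z.snd]
  have hss : ∀ z : WithLp 2 (E × E), ‖z.snd‖ ≤ ‖z‖ := by
    intro z
    apply le_of_sq_le_sq _ (norm_nonneg _)
    rw [hns]; nlinarith [norm_nonneg z.fst]
  have hζ1 : ‖ζ‖ < ε := lt_of_lt_of_le hζε (min_le_left _ _)
  have hζ2 : ‖ζ‖ < ρ₁ := lt_of_lt_of_le hζε (min_le_right _ _)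
  have hP1 : ‖P - WithLp.toLp 2 (p, -q)‖ < ε := lt_of_lt_of_le hPl (min_le_left _ _)
  set i₁ : E →L[ℝ] WithLp 2 (E × E) :=
    (e.symm : E × E →L[ℝ] WithLp 2 (E × E)).comp (ContinuousLinearMap.inl ℝ E E) with hi₁
  set i₂ : E →L[ℝ] WithLp 2 (E × E) :=
    (e.symm : E × E →L[ℝ] WithLp 2 (E × E)).comp (ContinuousLinearMap.inr ℝ E E) with hi₂
  set π₁ : WithLp 2 (E × E) →L[ℝ] E :=
    (ContinuousLinearMap.fst ℝ E E).comp (e : WithLp 2 (E × E) →L[ℝ] E × E) with hπ₁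
  set π₂ : WithLp 2 (E × E) →L[ℝ] E :=
    (ContinuousLinearMap.snd ℝ E E).comp (e : WithLp 2 (E × E) →L[ℝ] E × E) with hπ₂
  have i₁f : ∀ a, (i₁ a).fst = a := fun a => rfl
  have i₁s : ∀ a, (i₁ a).snd = 0 := fun a => rfl
  have i₂f : ∀ a, (i₂ a).fst = 0 := fun a => rfl
  have i₂s : ∀ a, (i₂ a).snd = a := fun a => rfl
  have i₁n : ∀ a, ‖i₁ a‖ ^ 2 = ‖a‖ ^ 2 := fun a => by rw [hns, i₁f, i₁s]; simp
  have i₂n : ∀ a, ‖i₂ a‖ ^ 2 = ‖a‖ ^ 2 := fun a => by rw [hns, i₂f, i₂s]; simp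
  set X₁ : E →L[ℝ] E := π₁.comp (X.comp i₁) with hX₁
  set X₂ : E →L[ℝ] E := -(π₂.comp (X.comp i₂)) with hX₂
  have hX₁q : ∀ a, ⟪X (i₁ a), i₁ a⟫ = ⟪X₁ a, a⟫ := fun a => by
    rw [hin, i₁f, i₁s, inner_zero_right, add_zero]; rfl
  have hX₂q : ∀ a, ⟪X (i₂ a), i₂ a⟫ = - ⟪X₂ a, a⟫ := fun a => by
    rw [hin, i₂f, i₂s, inner_zero_right, zero_add, ← inner_neg_left]
    congr 1
    simp only [hX₂, neg_apply, neg_neg]; rfl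
  have ht1 : Tendsto i₁ (𝓝 0) (𝓝 0) := by simpa using i₁.continuous.tendsto 0
  have ht2 : Tendsto i₂ (𝓝 0) (𝓝 0) := by simpa using i₂.continuous.tendsto 0
  have hsmall1 : ∀ᶠ h in 𝓝 (0 : E), ζ + i₁ h ∈ K := by
    have hc : Continuous fun h : E => ‖ζ + i₁ h‖ := by fun_prop
    have := hc.continuousAt.eventually_lt (x₀ := 0) continuousAt_const
      (show ‖ζ + i₁ 0‖ < ρ₁ by simpa using hζ2)
    filter_upwards [this] with h hh
    exact (hKm _).mpr ⟨(hfs _).trans hh.le, (hss _).trans hh.le⟩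
  have hsmall2 : ∀ᶠ h in 𝓝 (0 : E), ζ + i₂ h ∈ K := by
    have hc : Continuous fun h : E => ‖ζ + i₂ h‖ := by fun_prop
    have := hc.continuousAt.eventually_lt (x₀ := 0) continuousAt_const
      (show ‖ζ + i₂ 0‖ < ρ₁ by simpa using hζ2)
    filter_upwards [this] with h hh
    exact (hKm _).mpr ⟨(hfs _).trans hh.le, (hss _).trans hh.le⟩
  refine ⟨x₀ + ζ.fst, y₀ + ζ.snd, P.fst, -P.snd, X₁, X₂, ?_, ?_, ?_, ?_, ?_, ?_, ?_⟩
  · rw [add_sub_cancel_left]; exact lt_of_le_of_lt (hfs _) hζ1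
  · rw [add_sub_cancel_left]; exact lt_of_le_of_lt (hss _) hζ1
  · exact lt_of_le_of_lt (hfs (P - WithLp.toLp 2 (p, -q))) hP1
  · have h1 := lt_of_le_of_lt (hss (P - WithLp.toLp 2 (p, -q))) hP1
    have e1 : -P.snd - q = -((P - WithLp.toLp 2 (p, -q)).snd) := by
      change -P.snd - q = -(P.snd - -q)
      abel
    rw [e1, norm_neg]; exact h1
  · intro η' hη'
    filter_upwards [ht1.eventually (hTay η' hη'), hsmall1] with h hh hhK
    have h1 := (abs_le.mp hh).2
    have h2 := hθ1 (ξ + i₁ h) _ hhK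
    have e2 : ζ + i₁ h - (ξ + i₁ h) = ζ - ξ := by abel
    rw [e2] at h2
    rw [hX₁q, i₁n, hin, i₁f, i₁s, inner_zero_right] at h1
    simp only [hg, WithLp.add_fst, WithLp.add_snd, i₁f, i₁s, add_zero] at h2 hθξ
    rw [add_assoc x₀]
    linarith
  · intro η' hη'
    filter_upwards [ht2.eventually (hTay η' hη'), hsmall2] with h hh hhK
    have h1 := (abs_le.mp hh).2
    have h2 := hθ1 (ξ + i₂ h) _ hhK
    have e2 : ζ + i₂ h - (ξ + i₂ h) = ζ - ξ := by abel
    rw [e2] at h2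
    rw [hX₂q, i₂n, hin, i₂f, i₂s, inner_zero_right] at h1
    simp only [hg, WithLp.add_fst, WithLp.add_snd, i₂f, i₂s, add_zero] at h2 hθξ
    rw [add_assoc y₀, inner_neg_left]
    linarith
  · have hsuper : ∀ a b, θ (ξ + i₁ a) + θ (ξ + i₂ b) ≤ θ (ξ + (i₁ a + i₂ b)) + θ ξ := by
      intro a b
      obtain ⟨z, hz, hze⟩ := hθ2 (ξ + i₁ a)
      obtain ⟨w, hw, hwe⟩ := hθ2 (ξ + i₂ b)
      have h1 := hθ1 (ξ + (i₁ a + i₂ b)) (WithLp.toLp 2 (z.fst, w.snd))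
        ((hKm _).mpr ⟨((hKm z).mp hz).1, ((hKm w).mp hw).2⟩)
      have h2 := hθ1 ξ (WithLp.toLp 2 (w.fst, z.snd))
        ((hKm _).mpr ⟨((hKm w).mp hw).1, ((hKm z).mp hz).2⟩)
      rw [hns] at h1 h2 hze hwe
      simp only [hg, WithLp.add_fst, WithLp.add_snd, WithLp.sub_fst, WithLp.sub_snd, i₂f, i₂s,
        i₁f, i₁s, add_zero, zero_add, WithLp.toLp_fst, WithLp.toLp_snd] at h1 h2 hze hwe
      rw [hze, hwe]
      linarith
    intro a b
    have hXab : ⟪X₁ a, a⟫ - ⟪X₂ b, b⟫ ≤ ⟪X (i₁ a + i₂ b), i₁ a + i₂ b⟫ := by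
      apply le_of_forall_pos_le_add
      intro ε' hε'
      set Mn := ‖i₁ a‖ ^ 2 + ‖i₂ b‖ ^ 2 + ‖i₁ a + i₂ b‖ ^ 2 + 1 with hMn
      have hMp : 0 < Mn := by positivity
      have hc : ∀ w : WithLp 2 (E × E), Tendsto (fun t : ℝ => t • w) (𝓝[>] 0) (𝓝 0) := by
        intro w
        have : Tendsto (fun t : ℝ => t • w) (𝓝 0) (𝓝 ((0:ℝ) • w)) :=
          (continuous_id.smul continuous_const).tendsto 0
        rw [zero_smul] at this
        exact this.mono_left nhdsWithin_le_nhds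
      have hηη : 0 < ε' / (2 * Mn) := by positivity
      obtain ⟨t, ⟨⟨k1, k2⟩, k3⟩, ht0⟩ := (((((hc (i₁ a)).eventually (hTay _ hηη)).and
        ((hc (i₂ b)).eventually (hTay _ hηη))).and
        ((hc (i₁ a + i₂ b)).eventually (hTay _ hηη))).and self_mem_nhdsWithin).exists
      have ht0 : 0 < t := ht0
      have s1 := hsuper (t • a) (t • b)
      simp only [map_smul, ← smul_add] at s1
      have k1 := (abs_le.mp k1).1
      have k2 := (abs_le.mp k2).1
      have k3 := (abs_le.mp k3).2
      simp only [map_smul, inner_smul_left, inner_smul_right, RCLike.conj_to_real,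
        norm_smul, Real.norm_of_nonneg ht0.le, mul_pow] at k1 k2 k3
      rw [hX₁q] at k1
      rw [hX₂q] at k2
      rw [inner_add_right P] at k3
      have h5 : t ^ 2 * (⟪X₁ a, a⟫ - ⟪X₂ b, b⟫ - ⟪X (i₁ a + i₂ b), i₁ a + i₂ b⟫) ≤
          t ^ 2 * (2 * (ε' / (2 * Mn)) * (‖i₁ a‖ ^ 2 + ‖i₂ b‖ ^ 2 + ‖i₁ a + i₂ b‖ ^ 2)) := by
        nlinarith
      have h6 := le_of_mul_le_mul_left h5 (by positivity)
      have h7 : 2 * (ε' / (2 * Mn)) * (‖i₁ a‖ ^ 2 + ‖i₂ b‖ ^ 2 + ‖i₁ a + i₂ b‖ ^ 2) ≤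
          2 * (ε' / (2 * Mn)) * Mn := by gcongr; linarith
      have h8 : 2 * (ε' / (2 * Mn)) * Mn = ε' := by field_simp
      linarith
    refine hXab.trans ((hXT _).trans ?_)
    rw [hS'q, hns]
    simp only [WithLp.add_fst, WithLp.add_snd, i₁f, i₁s, i₂f, i₂s, add_zero, zero_add]
    have : 4 * η = ε := by rw [hη]; ring
    rw [this]
end TSApprox

section MC
variable {N : ℕ}

local notation "⟪" x ", " y "⟫" => inner ℝ x y
local notation "𝔼" => EuclideanSpace ℝ (Fin N)

noncomputable def Wf {N : ℕ} (p : EuclideanSpace ℝ (Fin N)) : ℝ := Real.sqrt (1 + ‖p‖ ^ 2)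

lemma Wf_sq (p : 𝔼) : Wf p ^ 2 = 1 + ‖p‖ ^ 2 := Real.sq_sqrt (by positivity)
lemma Wf_pos (p : 𝔼) : 0 < Wf p := Real.sqrt_pos.mpr (by positivity)
lemma Wf_one_le (p : 𝔼) : 1 ≤ Wf p := by
  rw [Wf, Real.one_le_sqrt]; nlinarith [norm_nonneg p]
lemma Wf_cont : Continuous (Wf : 𝔼 → ℝ) := by unfold Wf; fun_prop

lemma hasGradient_poly (S : 𝔼 →L[ℝ] 𝔼) (hS : ∀ x y, ⟪S x, y⟫ = ⟪x, S y⟫) (c : ℝ) (p x y : 𝔼) :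
    gradient (fun y => c + ⟪p, y - x⟫ + ⟪S (y - x), y - x⟫ / 2) y = p + S (y - x) := by
  apply HasGradientAt.gradient
  rw [hasGradientAt_iff_hasFDerivAt]
  have h1 : HasFDerivAt (fun y : 𝔼 => y - x) (ContinuousLinearMap.id ℝ 𝔼) y :=
    (hasFDerivAt_id y).sub_const x
  have h2 : HasFDerivAt (fun y : 𝔼 => S (y - x)) (S.comp (ContinuousLinearMap.id ℝ 𝔼)) y :=
    S.hasFDerivAt.comp y h1
  have h3 := (hasFDerivAt_const p y).inner ℝ h1
  have h4 := h2.inner ℝ h1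
  have h5 := ((h3.const_add c).add (h4.const_mul (1/2)))
  have ef : (fun y => c + ⟪p, y - x⟫ + ⟪S (y - x), y - x⟫ / 2) =
      ((fun x_1 => c + ⟪p, x_1 - x⟫) + fun y => 1 / 2 * ⟪S (y - x), y - x⟫) := by
    funext z; simp only [Pi.add_apply]; ring
  rw [ef]
  refine h5.congr_fderiv ?_
  ext h
  have e1 : ⟪S h, y - x⟫ = ⟪S (y - x), h⟫ := by rw [hS h, real_inner_comm]
  change (⟪p, h⟫ + ⟪(0 : 𝔼), y - x⟫) +
    (1 / 2) * (⟪S (y - x), h⟫ + ⟪S h, y - x⟫) = ⟪p + S (y - x), h⟫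
  rw [e1, inner_add_left, inner_zero_left]
  ring

lemma mcOp_poly (S : 𝔼 →L[ℝ] 𝔼) (hS : ∀ x y, ⟪S x, y⟫ = ⟪x, S y⟫) (c : ℝ) (p x : 𝔼) :
    mcOp (fun y => c + ⟪p, y - x⟫ + ⟪S (y - x), y - x⟫ / 2) x =
      (Wf p)⁻¹ * (∑ i, ⟪S (EuclideanSpace.basisFun (Fin N) ℝ i), EuclideanSpace.basisFun (Fin N) ℝ i⟫ -
        ⟪S p, p⟫ / Wf p ^ 2) := by
  unfold mcOp
  simp only [hasGradient_poly S hS c p x]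
  have hW := Wf_pos p
  have key : ∀ i : Fin N, fderiv ℝ (fun y => (Real.sqrt (1 + ‖p + S (y - x)‖ ^ 2))⁻¹ *
      (p + S (y - x)) i) x (EuclideanSpace.single i 1) =
      (Wf p)⁻¹ * S (EuclideanSpace.single i 1) i -
        (Wf p)⁻¹ * ((⟪S p, EuclideanSpace.single i (1:ℝ)⟫ * p i) / Wf p ^ 2) := by
    intro i
    have h1 : HasFDerivAt (fun y : 𝔼 => y - x) (ContinuousLinearMap.id ℝ 𝔼) x :=
      (hasFDerivAt_id x).sub_const x
    have h2 : HasFDerivAt (fun y : 𝔼 => p + S (y - x)) (S.comp (ContinuousLinearMap.id ℝ 𝔼)) x :=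
      (S.hasFDerivAt.comp x h1).const_add p
    have h3 : HasDerivAt (fun s : ℝ => (Real.sqrt (1 + s))⁻¹)
        (-(1 / (2 * Wf p)) / Wf p ^ 2) (‖p + S (x - x)‖ ^ 2) := by
      have e : Wf p = Real.sqrt (1 + ‖p + S (x - x)‖ ^ 2) := by simp [Wf]
      have hd : HasDerivAt (fun s : ℝ => 1 + s) 1 (‖p + S (x - x)‖ ^ 2) :=
        (hasDerivAt_id _).const_add 1
      have h0 : 1 + ‖p + S (x - x)‖ ^ 2 ≠ 0 := by positivity
      have := (hd.sqrt h0).inv (by rw [← e]; exact hW.ne')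
      rw [← e] at this
      exact this
    have h4 := h3.comp_hasFDerivAt x h2.norm_sq
    have h5 : HasFDerivAt (fun y : 𝔼 => (p + S (y - x)) i)
        ((EuclideanSpace.proj i : 𝔼 →L[ℝ] ℝ).comp (S.comp (ContinuousLinearMap.id ℝ 𝔼))) x :=
      (EuclideanSpace.proj i : 𝔼 →L[ℝ] ℝ).hasFDerivAt.comp x h2
    have h6 := h4.mul h5
    have h7 : HasFDerivAt (fun y => (Real.sqrt (1 + ‖p + S (y - x)‖ ^ 2))⁻¹ *
      (p + S (y - x)) i) _ x := h6
    rw [h7.fderiv]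
    simp [hS]
    have e : Real.sqrt (1 + ‖p‖ ^ 2) = Wf p := rfl
    rw [e]
    field_simp
    ring
  rw [Finset.sum_congr rfl fun i _ => key i, Finset.sum_sub_distrib, ← Finset.mul_sum,
    ← Finset.mul_sum, mul_sub, ← Finset.sum_div]
  have e1 : ∑ i, (S (EuclideanSpace.single i 1)) i = ∑ i, ⟪S (EuclideanSpace.basisFun (Fin N) ℝ i),
      EuclideanSpace.basisFun (Fin N) ℝ i⟫ := by
    apply Finset.sum_congr rfl
    intro i _
    rw [EuclideanSpace.basisFun_apply, EuclideanSpace.inner_single_right]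
    simp
  have e2 : ∑ i, ⟪S p, EuclideanSpace.single i (1:ℝ)⟫ * p i = ⟪S p, p⟫ := by
    rw [PiLp.inner_apply]
    apply Finset.sum_congr rfl
    intro i _
    rw [EuclideanSpace.inner_single_right]
    simp [mul_comm]
  rw [e1, e2]

noncomputable def tM {N : ℕ} (p : EuclideanSpace ℝ (Fin N)) :
    EuclideanSpace ℝ (Fin N) →L[ℝ] EuclideanSpace ℝ (Fin N) :=
  ContinuousLinearMap.id ℝ _ - (Wf p * (Wf p + 1))⁻¹ • (innerSL ℝ p).smulRight p

noncomputable def tI {N : ℕ} (p : EuclideanSpace ℝ (Fin N)) :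
    EuclideanSpace ℝ (Fin N) →L[ℝ] EuclideanSpace ℝ (Fin N) :=
  ContinuousLinearMap.id ℝ _ + (Wf p + 1)⁻¹ • (innerSL ℝ p).smulRight p

lemma tM_apply (p a : 𝔼) : tM p a = a - ((Wf p * (Wf p + 1))⁻¹ * ⟪p, a⟫) • p := by
  simp [tM, smul_smul]

lemma tI_apply (p a : 𝔼) : tI p a = a + ((Wf p + 1)⁻¹ * ⟪p, a⟫) • p := by
  simp [tI, smul_smul]

lemma inner_pp (p : 𝔼) : ⟪p, p⟫ = Wf p ^ 2 - 1 := by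
  rw [real_inner_self_eq_norm_sq, Wf_sq]; ring

lemma tM_tI (p a : 𝔼) : tM p (tI p a) = a := by
  have hW := Wf_pos p
  rw [tM_apply, tI_apply, inner_add_right, inner_smul_right, inner_pp, add_sub_assoc, ← sub_smul]
  have : (Wf p + 1)⁻¹ * ⟪p, a⟫ - (Wf p * (Wf p + 1))⁻¹ *
      (⟪p, a⟫ + (Wf p + 1)⁻¹ * ⟪p, a⟫ * (Wf p ^ 2 - 1)) = 0 := by
    field_simp; ring
  rw [this, zero_smul, add_zero]

lemma tI_tM (p a : 𝔼) : tI p (tM p a) = a := by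
  have hW := Wf_pos p
  rw [tI_apply, tM_apply, inner_sub_right, inner_smul_right, inner_pp, sub_add, ← sub_smul]
  have : (Wf p * (Wf p + 1))⁻¹ * ⟪p, a⟫ - (Wf p + 1)⁻¹ *
      (⟪p, a⟫ - (Wf p * (Wf p + 1))⁻¹ * ⟪p, a⟫ * (Wf p ^ 2 - 1)) = 0 := by
    field_simp; ring
  rw [this, zero_smul, sub_zero]

lemma tI_norm (p a : 𝔼) : ‖tI p a‖ ^ 2 = ‖a‖ ^ 2 + ⟪p, a⟫ ^ 2 := by
  have hW := Wf_pos p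
  rw [tI_apply, ← real_inner_self_eq_norm_sq, ← real_inner_self_eq_norm_sq]
  simp only [inner_add_left, inner_add_right, inner_smul_left, inner_smul_right, inner_pp,
    RCLike.conj_to_real, real_inner_comm p a]
  field_simp; ring

lemma tM_metric (p w : 𝔼) : ‖tM p w‖ ^ 2 + ⟪p, tM p w⟫ ^ 2 = ‖w‖ ^ 2 := by
  rw [← tI_norm, tI_tM]

lemma tM_norm (p a : 𝔼) : ‖tM p a‖ ^ 2 = ‖a‖ ^ 2 - ⟪p, a⟫ ^ 2 / Wf p ^ 2 := by
  have hW := Wf_pos p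
  rw [tM_apply, ← real_inner_self_eq_norm_sq, ← real_inner_self_eq_norm_sq]
  simp only [inner_sub_left, inner_sub_right, inner_smul_left, inner_smul_right, inner_pp,
    RCLike.conj_to_real, real_inner_comm p a]
  field_simp; ring

lemma tM_symm (p a b : 𝔼) : ⟪tM p a, b⟫ = ⟪a, tM p b⟫ := by
  rw [tM_apply, tM_apply]
  simp only [inner_sub_left, inner_sub_right, inner_smul_left, inner_smul_right,
    RCLike.conj_to_real, real_inner_comm p a]
  ring

lemma tM_cont (w : 𝔼) : Continuous fun p : 𝔼 => tM p w := by
  simp only [tM_apply]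
  have h : Continuous fun p : 𝔼 => (Wf p * (Wf p + 1))⁻¹ := by
    have hc : Continuous (Wf : 𝔼 → ℝ) := Wf_cont
    exact (hc.mul (hc.add continuous_const)).inv₀ fun p => by have := Wf_pos p; exact (mul_pos this (add_pos this one_pos)).ne'
  fun_prop

lemma sum_tM_sq (p e : 𝔼) (b : OrthonormalBasis (Fin N) ℝ 𝔼) :
    ∑ i, ⟪e, tM p (b i)⟫ ^ 2 = ‖e‖ ^ 2 - ⟪p, e⟫ ^ 2 / Wf p ^ 2 := by
  rw [← tM_norm, ← b.sum_sq_inner_left]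
  apply Finset.sum_congr rfl
  intro i _
  rw [tM_symm]

lemma sum_tM_quad (p : 𝔼) (X : 𝔼 →L[ℝ] 𝔼) (b : OrthonormalBasis (Fin N) ℝ 𝔼) :
    ∑ i, ⟪X (tM p (b i)), tM p (b i)⟫ =
      ∑ i, ⟪X (EuclideanSpace.basisFun (Fin N) ℝ i), EuclideanSpace.basisFun (Fin N) ℝ i⟫ -
        ⟪X p, p⟫ / Wf p ^ 2 := by
  have hW := Wf_pos p
  have htr : ∑ i, ⟪X (EuclideanSpace.basisFun (Fin N) ℝ i), EuclideanSpace.basisFun (Fin N) ℝ i⟫ =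
      ∑ i, ⟪X (b i), b i⟫ := by
    have h1 := LinearMap.trace_eq_sum_inner (X : 𝔼 →ₗ[ℝ] 𝔼) b
    have h2 := LinearMap.trace_eq_sum_inner (X : 𝔼 →ₗ[ℝ] 𝔼) (EuclideanSpace.basisFun (Fin N) ℝ)
    rw [h1] at h2
    simp only [ContinuousLinearMap.coe_coe] at h2
    rw [Finset.sum_congr rfl fun i _ => real_inner_comm (EuclideanSpace.basisFun (Fin N) ℝ i) _,
      Finset.sum_congr rfl fun i _ => real_inner_comm (b i) _]
    exact h2.symm
  rw [htr]
  have h1 : ∑ i, ⟪p, b i⟫ * ⟪X p, b i⟫ = ⟪X p, p⟫ := by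
    rw [real_inner_comm, ← b.sum_inner_mul_inner p (X p)]
    apply Finset.sum_congr rfl; intro i _; rw [real_inner_comm (b i) (X p)]
  have h2 : ∑ i, ⟪p, b i⟫ * ⟪X (b i), p⟫ = ⟪X p, p⟫ := by
    have e : X p = ∑ i, ⟪b i, p⟫ • X (b i) := by
      conv_lhs => rw [← b.sum_repr' p]
      rw [map_sum]; simp only [map_smul]
    rw [e, sum_inner]
    apply Finset.sum_congr rfl; intro i _
    rw [inner_smul_left, real_inner_comm (b i) p, RCLike.conj_to_real]
  have h3 : ∑ i, ⟪p, b i⟫ ^ 2 = Wf p ^ 2 - 1 := by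
    rw [b.sum_sq_inner_left, Wf_sq]; ring
  set α := (Wf p * (Wf p + 1))⁻¹ with hα
  have e : ∀ i, ⟪X (tM p (b i)), tM p (b i)⟫ = ⟪X (b i), b i⟫ - α * (⟪p, b i⟫ * ⟪X (b i), p⟫) -
      α * (⟪p, b i⟫ * ⟪X p, b i⟫) + α ^ 2 * ⟪X p, p⟫ * ⟪p, b i⟫ ^ 2 := by
    intro i
    rw [tM_apply, ← hα]
    simp only [map_sub, map_smul, inner_sub_left, inner_sub_right, inner_smul_left,
      inner_smul_right, RCLike.conj_to_real]
    ring
  rw [Finset.sum_congr rfl fun i _ => e i, Finset.sum_add_distrib, Finset.sum_sub_distrib,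
    Finset.sum_sub_distrib, ← Finset.mul_sum, ← Finset.mul_sum, ← Finset.mul_sum, h1, h2, h3, hα]
  field_simp
  ring
end MC

section TSMain
variable {N : ℕ}

local notation "⟪" x ", " y "⟫" => inner ℝ x y
local notation "𝔼" => EuclideanSpace ℝ (Fin N)

lemma sum_basis_le (X Y : 𝔼 →L[ℝ] 𝔼) (η : ℝ) (p : 𝔼) (hη : 0 ≤ η)
    (h : ∀ a, ⟪Y a, a⟫ ≤ ⟪X a, a⟫ + η * ‖a‖ ^ 2) (b : OrthonormalBasis (Fin N) ℝ 𝔼) :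
    ∑ i, ⟪Y (tM p (b i)), tM p (b i)⟫ ≤ ∑ i, ⟪X (tM p (b i)), tM p (b i)⟫ + η * N := by
  have h1 : ∀ i, ⟪Y (tM p (b i)), tM p (b i)⟫ ≤ ⟪X (tM p (b i)), tM p (b i)⟫ + η := by
    intro i
    have h2 := h (tM p (b i))
    have h3 : ‖tM p (b i)‖ ^ 2 ≤ 1 := by
      have := tM_metric p (b i)
      rw [b.norm_eq_one] at this
      nlinarith [sq_nonneg ⟪p, tM p (b i)⟫]
    nlinarith
  calc _ ≤ ∑ i, (⟪X (tM p (b i)), tM p (b i)⟫ + η) := Finset.sum_le_sum fun i _ => h1 i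
    _ = _ := by rw [Finset.sum_add_distrib]; simp [mul_comm]

lemma contDiff_poly (S : 𝔼 →L[ℝ] 𝔼) (c : ℝ) (p x : 𝔼) :
    ContDiff ℝ 2 (fun y : 𝔼 => c + ⟪p, y - x⟫ + ⟪S (y - x), y - x⟫ / 2) := by
  have h1 : ContDiff ℝ 2 fun y : 𝔼 => y - x := contDiff_id.sub contDiff_const
  have h2 : ContDiff ℝ 2 fun y : 𝔼 => S (y - x) := S.contDiff.comp h1
  exact (contDiff_const.add (contDiff_const.inner ℝ h1)).add ((h2.inner ℝ h1).div_const 2)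

lemma sub_test (Ω : Set 𝔼) (H v : 𝔼 → ℝ) (hv : IsViscositySubsol Ω H v) (x : 𝔼) (hx : x ∈ Ω)
    (p : 𝔼) (X : 𝔼 →L[ℝ] 𝔼)
    (h : ∀ η > 0, ∀ᶠ h in 𝓝 (0 : 𝔼), v (x + h) - v x ≤ ⟪p, h⟫ + ⟪X h, h⟫ / 2 + η * ‖h‖ ^ 2)
    (b : OrthonormalBasis (Fin N) ℝ 𝔼) :
    Wf p * (N * H x) ≤ ∑ i, ⟪X (tM p (b i)), tM p (b i)⟫ := by
  apply le_of_forall_pos_le_add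
  intro ε hε
  set η := ε / (2 * (N + 1)) with hη
  have hηp : 0 < η := by positivity
  obtain ⟨S, hSs, hSq⟩ := exists_sym_op ((innerSL ℝ).comp X)
  have hSq' : ∀ a, ⟪S a, a⟫ = ⟪X a, a⟫ := hSq
  set Y : 𝔼 →L[ℝ] 𝔼 := S + (2 * η) • ContinuousLinearMap.id ℝ 𝔼 with hY
  have hYa : ∀ a, Y a = S a + (2 * η) • a := fun a => rfl
  have hYs : ∀ x y, ⟪Y x, y⟫ = ⟪x, Y y⟫ := by
    intro x y
    rw [hYa, hYa, inner_add_left, inner_add_right, hSs, inner_smul_left, inner_smul_right]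
    rfl
  have hYq : ∀ a, ⟪Y a, a⟫ = ⟪X a, a⟫ + 2 * η * ‖a‖ ^ 2 := by
    intro a
    rw [hYa, inner_add_left, hSq', inner_smul_left, real_inner_self_eq_norm_sq]; rfl
  have hmax : IsLocalMaxOn (fun y => v y - (v x + ⟪p, y - x⟫ + ⟪Y (y - x), y - x⟫ / 2)) Ω x := by
    have ht : Tendsto (fun y => y - x) (𝓝 x) (𝓝 0) := by
      have : Continuous fun y : 𝔼 => y - x := by fun_prop
      simpa using this.tendsto x
    have h1 := ht.eventually (h η hηp)
    apply Filter.Eventually.filter_mono nhdsWithin_le_nhds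
    filter_upwards [h1] with y hy
    rw [add_sub_cancel] at hy
    rw [hYq]
    simp only [sub_self, inner_zero_right, map_zero]
    linarith
  have h2 := hv _ (contDiff_poly Y (v x) p x).contDiffOn x hx hmax
  rw [mcOp_poly Y hYs, ← sum_tM_quad p Y b] at h2
  have hW := Wf_pos p
  have h3 : Wf p * (N * H x) ≤ ∑ i, ⟪Y (tM p (b i)), tM p (b i)⟫ := by
    calc _ ≤ Wf p * ((Wf p)⁻¹ * ∑ i, ⟪Y (tM p (b i)), tM p (b i)⟫) := by gcongr
      _ = _ := by field_simp
  have h4 := sum_basis_le X Y (2 * η) p (by positivity) (fun a => (hYq a).le) b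
  have h5 : 2 * η * N ≤ ε := by
    rw [hη]
    have : 2 * (ε / (2 * (N + 1))) * N = ε * (N / (N + 1)) := by field_simp
    rw [this]
    have : (N / (N + 1) : ℝ) ≤ 1 := by rw [div_le_one (by positivity)]; linarith
    nlinarith
  linarith

lemma super_test (Ω : Set 𝔼) (H u : 𝔼 → ℝ) (hu : IsViscositySupersol Ω H u) (x : 𝔼) (hx : x ∈ Ω)
    (p : 𝔼) (X : 𝔼 →L[ℝ] 𝔼)
    (h : ∀ η > 0, ∀ᶠ h in 𝓝 (0 : 𝔼), ⟪p, h⟫ + ⟪X h, h⟫ / 2 - η * ‖h‖ ^ 2 ≤ u (x + h) - u x)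
    (b : OrthonormalBasis (Fin N) ℝ 𝔼) :
    ∑ i, ⟪X (tM p (b i)), tM p (b i)⟫ ≤ Wf p * (N * H x) := by
  apply le_of_forall_pos_le_add
  intro ε hε
  set η := ε / (2 * (N + 1)) with hη
  have hηp : 0 < η := by positivity
  obtain ⟨S, hSs, hSq⟩ := exists_sym_op ((innerSL ℝ).comp X)
  have hSq' : ∀ a, ⟪S a, a⟫ = ⟪X a, a⟫ := hSq
  set Y : 𝔼 →L[ℝ] 𝔼 := S + (-2 * η) • ContinuousLinearMap.id ℝ 𝔼 with hY
  have hYa : ∀ a, Y a = S a + (-2 * η) • a := fun a => rfl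
  have hYs : ∀ x y, ⟪Y x, y⟫ = ⟪x, Y y⟫ := by
    intro x y
    rw [hYa, hYa, inner_add_left, inner_add_right, hSs, inner_smul_left, inner_smul_right]
    rfl
  have hYq : ∀ a, ⟪Y a, a⟫ = ⟪X a, a⟫ + (-2 * η) * ‖a‖ ^ 2 := by
    intro a
    rw [hYa, inner_add_left, hSq', inner_smul_left, real_inner_self_eq_norm_sq]; rfl
  have hmin : IsLocalMinOn (fun y => u y - (u x + ⟪p, y - x⟫ + ⟪Y (y - x), y - x⟫ / 2)) Ω x := by
    have ht : Tendsto (fun y => y - x) (𝓝 x) (𝓝 0) := by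
      have : Continuous fun y : 𝔼 => y - x := by fun_prop
      simpa using this.tendsto x
    have h1 := ht.eventually (h η hηp)
    apply Filter.Eventually.filter_mono nhdsWithin_le_nhds
    filter_upwards [h1] with y hy
    rw [add_sub_cancel] at hy
    have hq := hYq (y - x)
    simp only [sub_self, inner_zero_right, map_zero]
    linarith
  have h2 := hu _ (contDiff_poly Y (u x) p x).contDiffOn x hx hmin
  rw [mcOp_poly Y hYs, ← sum_tM_quad p Y b] at h2
  have hW := Wf_pos p
  have h3 : ∑ i, ⟪Y (tM p (b i)), tM p (b i)⟫ ≤ Wf p * (N * H x) := by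
    calc _ = Wf p * ((Wf p)⁻¹ * ∑ i, ⟪Y (tM p (b i)), tM p (b i)⟫) := by field_simp
      _ ≤ _ := by gcongr
  have h4 := sum_basis_le Y X (2 * η) p (by positivity) (fun a => by rw [hYq]; linarith) b
  have h5 : 2 * η * N ≤ ε := by
    rw [hη]
    have : 2 * (ε / (2 * (N + 1))) * N = ε * (N / (N + 1)) := by field_simp
    rw [this]
    have : (N / (N + 1) : ℝ) ≤ 1 := by rw [div_le_one (by positivity)]; linarith
    nlinarith
  linarith

lemma ts_main (Ω : Set 𝔼) (hΩ : IsOpen Ω) (H u v : 𝔼 → ℝ) (hH : ContinuousOn H Ω)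
    (hu : IsViscositySupersol Ω H u) (hv : IsViscositySubsol Ω H v)
    (hul : LowerSemicontinuousOn u Ω) (hvu : UpperSemicontinuousOn v Ω)
    (x₀ y₀ p q : 𝔼) (hx₀ : x₀ ∈ Ω) (hy₀ : y₀ ∈ Ω) (T : (𝔼 × 𝔼) →L[ℝ] (𝔼 × 𝔼) →L[ℝ] ℝ)
    (hT : ∀ η > 0, ∀ᶠ h : 𝔼 × 𝔼 in 𝓝 0, v (x₀ + h.1) - u (y₀ + h.2) ≤ v x₀ - u y₀ +
      ⟪p, h.1⟫ - ⟪q, h.2⟫ + T h h / 2 + η * (‖h.1‖ ^ 2 + ‖h.2‖ ^ 2))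
    (B : 𝔼 →ₗ[ℝ] 𝔼) (hB : ∀ a, ‖B a‖ ^ 2 + ⟪q, B a⟫ ^ 2 = ‖a‖ ^ 2 + ⟪p, a⟫ ^ 2) :
    Wf p * (N * H x₀) - Wf q * (N * H y₀) ≤
      ∑ i, T (tM p (EuclideanSpace.basisFun (Fin N) ℝ i),
          B (tM p (EuclideanSpace.basisFun (Fin N) ℝ i)))
        (tM p (EuclideanSpace.basisFun (Fin N) ℝ i),
          B (tM p (EuclideanSpace.basisFun (Fin N) ℝ i))) := by
  set b := EuclideanSpace.basisFun (Fin N) ℝ with hb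
  let U : 𝔼 →ₗᵢ[ℝ] 𝔼 :=
    { toLinearMap := (tI q : 𝔼 →ₗ[ℝ] 𝔼).comp (B.comp (tM p : 𝔼 →ₗ[ℝ] 𝔼))
      norm_map' := fun w => by
        have h1 : ‖tI q (B (tM p w))‖ ^ 2 = ‖w‖ ^ 2 := by rw [tI_norm, hB, tM_metric]
        exact (sq_eq_sq₀ (norm_nonneg _) (norm_nonneg _)).mp h1 }
  set c : OrthonormalBasis (Fin N) ℝ 𝔼 := b.map (U.toLinearIsometryEquiv rfl) with hc
  have hca : ∀ i, tM q (c i) = B (tM p (b i)) := by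
    intro i
    have : c i = tI q (B (tM p (b i))) := by
      rw [hc, OrthonormalBasis.map_apply]; rfl
    rw [this, tM_tI]
  obtain ⟨ρ, hρ, hρΩ⟩ : ∃ ρ > 0, closedBall x₀ ρ ⊆ Ω ∧ closedBall y₀ ρ ⊆ Ω := by
    obtain ⟨r1, h1, h1'⟩ := Metric.nhds_basis_closedBall.mem_iff.mp (hΩ.mem_nhds hx₀)
    obtain ⟨r2, h2, h2'⟩ := Metric.nhds_basis_closedBall.mem_iff.mp (hΩ.mem_nhds hy₀)
    exact ⟨min r1 r2, lt_min h1 h2, (closedBall_subset_closedBall (min_le_left _ _)).trans h1',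
      (closedBall_subset_closedBall (min_le_right _ _)).trans h2'⟩
  have hex := fun n : ℕ => ts_approx u v x₀ y₀ p q T ρ hρ (hvu.mono hρΩ.1) (hul.mono hρΩ.2) hT
    (1 / ((n : ℝ) + 1)) (by positivity)
  choose x y p' q' X₁ X₂ hx hy hp hq hX₁ hX₂ hXT using hex
  have hε : Tendsto (fun n : ℕ => 1 / ((n : ℝ) + 1)) atTop (𝓝 0) :=
    tendsto_one_div_add_atTop_nhds_zero_nat
  have lim : ∀ (z : ℕ → 𝔼) (z₀ : 𝔼), (∀ n, ‖z n - z₀‖ < 1 / ((n : ℝ) + 1)) →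
      Tendsto z atTop (𝓝 z₀) := by
    intro z z₀ hz
    rw [tendsto_iff_norm_sub_tendsto_zero]
    exact squeeze_zero (fun n => norm_nonneg _) (fun n => (hz n).le) hε
  have lx := lim x x₀ hx
  have ly := lim y y₀ hy
  have lp := lim p' p hp
  have lq := lim q' q hq
  have hHx : ContinuousAt H x₀ := hH.continuousAt (hΩ.mem_nhds hx₀)
  have hHy : ContinuousAt H y₀ := hH.continuousAt (hΩ.mem_nhds hy₀)
  have hL : Tendsto (fun n => Wf (p' n) * (N * H (x n)) - Wf (q' n) * (N * H (y n))) atTop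
      (𝓝 (Wf p * (N * H x₀) - Wf q * (N * H y₀))) := by
    have w1 := (Wf_cont.tendsto p).comp lp
    have w2 := (Wf_cont.tendsto q).comp lq
    exact (w1.mul ((hHx.tendsto.comp lx).const_mul (N : ℝ))).sub
      (w2.mul ((hHy.tendsto.comp ly).const_mul (N : ℝ)))
  have hR : Tendsto (fun n => ∑ i, (T (tM (p' n) (b i), tM (q' n) (c i))
      (tM (p' n) (b i), tM (q' n) (c i)) +
      1 / ((n : ℝ) + 1) * (‖tM (p' n) (b i)‖ ^ 2 + ‖tM (q' n) (c i)‖ ^ 2))) atTop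
      (𝓝 (∑ i, (T (tM p (b i), tM q (c i)) (tM p (b i), tM q (c i)) +
        0 * (‖tM p (b i)‖ ^ 2 + ‖tM q (c i)‖ ^ 2)))) := by
    apply tendsto_finsetSum
    intro i _
    have a1 := ((tM_cont (b i)).tendsto p).comp lp
    have a2 := ((tM_cont (c i)).tendsto q).comp lq
    have a3 := a1.prodMk_nhds a2
    have hTc : Continuous fun z : 𝔼 × 𝔼 => T z z := by fun_prop
    exact ((hTc.tendsto _).comp a3).add (hε.mul ((a1.norm.pow 2).add (a2.norm.pow 2)))
  have hle := le_of_tendsto_of_tendsto hL hR (by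
    filter_upwards [lx.eventually (hΩ.mem_nhds hx₀), ly.eventually (hΩ.mem_nhds hy₀)] with n h1 h2
    have s1 := sub_test Ω H v hv (x n) h1 (p' n) (X₁ n) (hX₁ n) b
    have s2 := super_test Ω H u hu (y n) h2 (q' n) (X₂ n) (hX₂ n) c
    have s3 := Finset.sum_le_sum fun i (_ : i ∈ Finset.univ) =>
      hXT n (tM (p' n) (b i)) (tM (q' n) (c i))
    rw [Finset.sum_sub_distrib] at s3
    linarith)
  simpa only [hca, zero_mul, add_zero] using hle
end TSMain

section Jets
variable {E : Type*} [NormedAddCommGroup E] [NormedSpace ℝ E]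

def Jet (f ℓ Q : E → ℝ) : Prop :=
  ∃ (L : E →L[ℝ] ℝ) (T : E →L[ℝ] E →L[ℝ] ℝ), (∀ h, L h = ℓ h) ∧ (∀ h, T h h = Q h) ∧
    (fun h => f h - f 0 - ℓ h - Q h / 2) =o[𝓝 0] fun h : E => ‖h‖ ^ 2

lemma Jet.add {f ℓ Q f' ℓ' Q' : E → ℝ} (h : Jet f ℓ Q) (h' : Jet f' ℓ' Q') :
    Jet (fun x => f x + f' x) (fun x => ℓ x + ℓ' x) (fun x => Q x + Q' x) := by
  obtain ⟨L, T, hL, hT, ho⟩ := h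
  obtain ⟨L', T', hL', hT', ho'⟩ := h'
  refine ⟨L + L', T + T', fun h => by simp [hL, hL'], fun h => by simp [hT, hT'], ?_⟩
  refine (ho.add ho').congr_left fun h => by ring

lemma Jet.smul {f ℓ Q : E → ℝ} (h : Jet f ℓ Q) (c : ℝ) :
    Jet (fun x => c * f x) (fun x => c * ℓ x) (fun x => c * Q x) := by
  obtain ⟨L, T, hL, hT, ho⟩ := h
  refine ⟨c • L, c • T, fun h => by simp [hL], fun h => by simp [hT], ?_⟩
  refine (ho.const_mul_left c).congr_left fun h => by ring

lemma Jet.congr {f ℓ Q f' ℓ' Q' : E → ℝ} (h : Jet f ℓ Q) (h1 : ∀ x, f x = f' x)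
    (h2 : ∀ x, ℓ x = ℓ' x) (h3 : ∀ x, Q x = Q' x) : Jet f' ℓ' Q' := by
  obtain rfl : f = f' := funext h1
  obtain rfl : ℓ = ℓ' := funext h2
  obtain rfl : Q = Q' := funext h3
  exact h

lemma jet_lin (c : ℝ) (L : E →L[ℝ] ℝ) : Jet (fun x => c + L x) (fun x => L x) (fun _ => 0) := by
  refine ⟨L, 0, fun h => rfl, fun h => rfl, ?_⟩
  have : (fun h : E => c + L h - (c + L 0) - L h - 0 / 2) = fun _ => 0 := by
    funext h; simp
  rw [this]
  exact Asymptotics.isLittleO_zero _ _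

lemma jet_quad (c : ℝ) (L : E →L[ℝ] ℝ) (T : E →L[ℝ] E →L[ℝ] ℝ) :
    Jet (fun x => c + L x + T x x / 2) (fun x => L x) (fun x => T x x) := by
  refine ⟨L, T, fun h => rfl, fun h => rfl, ?_⟩
  have : (fun h : E => c + L h + T h h / 2 - (c + L 0 + T 0 0 / 2) - L h - T h h / 2)
      = fun _ => 0 := by
    funext h; simp; ring
  rw [this]
  exact Asymptotics.isLittleO_zero _ _

lemma peano2 (φ φ' : ℝ → ℝ) (t₀ φ2 : ℝ) (h1 : ∀ᶠ t in 𝓝 t₀, HasDerivAt φ (φ' t) t)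
    (h2 : HasDerivAt φ' φ2 t₀) :
    (fun δ => φ (t₀ + δ) - φ t₀ - φ' t₀ * δ - φ2 * δ ^ 2 / 2) =o[𝓝 0] fun δ : ℝ => δ ^ 2 := by
  rw [Asymptotics.isLittleO_iff]
  intro c hc
  have h3 := (hasDerivAt_iff_isLittleO_nhds_zero.mp h2)
  rw [Asymptotics.isLittleO_iff] at h3
  have h3 := h3 hc
  have ht : Tendsto (fun δ : ℝ => t₀ + δ) (𝓝 0) (𝓝 t₀) := by
    have : Continuous fun δ : ℝ => t₀ + δ := by fun_prop
    simpa using this.tendsto 0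
  obtain ⟨r, hr, hball⟩ := Metric.eventually_nhds_iff_ball.mp (h3.and (ht.eventually h1))
  filter_upwards [Metric.ball_mem_nhds (0 : ℝ) hr] with δ hδ
  set g : ℝ → ℝ := fun δ => φ (t₀ + δ) - φ t₀ - φ' t₀ * δ - φ2 * δ ^ 2 / 2 with hg
  have hder : ∀ x ∈ Metric.closedBall (0 : ℝ) |δ|,
      HasDerivWithinAt g (φ' (t₀ + x) - φ' t₀ - φ2 * x) (Metric.closedBall (0 : ℝ) |δ|) x := by
    intro x hx
    have hx' : x ∈ Metric.ball (0 : ℝ) r := by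
      simp at hx hδ ⊢; linarith
    have hd := (hball x hx').2
    have e1 : HasDerivAt (fun δ => φ (t₀ + δ)) (φ' (t₀ + x)) x := by
      simpa using hd.comp_const_add t₀ x
    have e2 := ((e1.sub_const (φ t₀)).sub ((hasDerivAt_id x).const_mul (φ' t₀))).sub
      ((((hasDerivAt_id x).pow 2).const_mul φ2).div_const 2)
    refine (e2.congr_deriv ?_).hasDerivWithinAt
    simp; ring
  have hb : ∀ x ∈ Metric.closedBall (0 : ℝ) |δ|, ‖φ' (t₀ + x) - φ' t₀ - φ2 * x‖ ≤ c * |δ| := by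
    intro x hx
    have hx' : x ∈ Metric.ball (0 : ℝ) r := by
      simp at hx hδ ⊢; linarith
    have := (hball x hx').1
    simp only [smul_eq_mul, Real.norm_eq_abs] at this
    rw [mul_comm φ2 x]
    simp only [mem_closedBall, dist_zero_right, Real.norm_eq_abs] at hx
    calc _ ≤ c * |x| := this
      _ ≤ _ := by gcongr
  have := (convex_closedBall (0 : ℝ) |δ|).norm_image_sub_le_of_norm_hasDerivWithin_le hder hb
    (x := 0) (y := δ) (by simp) (by simp)
  have hg0 : g 0 = 0 := by simp [hg]
  rw [hg0, sub_zero, sub_zero] at this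
  calc ‖g δ‖ ≤ c * |δ| * ‖δ‖ := this
    _ = c * ‖δ ^ 2‖ := by rw [norm_pow, Real.norm_eq_abs]; ring

lemma Jet.comp {f ℓ Q : E → ℝ} (h : Jet f ℓ Q) (φ φ' : ℝ → ℝ) (φ2 : ℝ)
    (h1 : ∀ᶠ t in 𝓝 (f 0), HasDerivAt φ (φ' t) t) (h2 : HasDerivAt φ' φ2 (f 0)) :
    Jet (fun x => φ (f x)) (fun x => φ' (f 0) * ℓ x)
      (fun x => φ' (f 0) * Q x + φ2 * ℓ x ^ 2) := by
  obtain ⟨L, T, hL, hT, ho⟩ := h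
  refine ⟨φ' (f 0) • L, φ' (f 0) • T + φ2 • L.smulRight L, fun h => by simp [hL],
    fun h => by simp [hT, hL, sq], ?_⟩
  have hn1 : (fun h : E => ‖h‖) =o[𝓝 0] fun _ : E => (1 : ℝ) := by
    rw [Asymptotics.isLittleO_one_iff]
    simpa using (continuous_norm (E := E)).tendsto 0
  have hn2 : (fun h : E => ‖h‖ ^ 2) =O[𝓝 0] fun h : E => ‖h‖ := by
    have := hn1.isBigO.mul (Asymptotics.isBigO_refl (fun h : E => ‖h‖) (𝓝 0))
    simpa [sq] using this
  have hlO : ℓ =O[𝓝 0] fun h : E => ‖h‖ := by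
    have : ℓ = fun h => L h := funext fun h => (hL h).symm
    rw [this]
    exact (L.isBigO_id (𝓝 0)).norm_right
  have hQO : Q =O[𝓝 0] fun h : E => ‖h‖ ^ 2 := by
    refine Asymptotics.IsBigO.of_bound ‖T‖ (Eventually.of_forall fun h => ?_)
    rw [← hT]
    calc _ ≤ ‖T‖ * ‖h‖ * ‖h‖ := T.le_opNorm₂ h h
      _ = _ := by rw [norm_pow, norm_norm]; ring
  set d : E → ℝ := fun h => f h - f 0 with hd
  have hdl : (fun h => d h - ℓ h) =O[𝓝 0] fun h : E => ‖h‖ ^ 2 := by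
    refine (ho.isBigO.add (hQO.const_mul_left (1 / 2))).congr_left fun h => ?_
    simp only [hd]; ring
  have hdO : d =O[𝓝 0] fun h : E => ‖h‖ := by
    refine ((hdl.trans hn2).add hlO).congr_left fun h => by ring
  have hdt : Tendsto d (𝓝 0) (𝓝 0) := by
    rw [← Asymptotics.isLittleO_one_iff ℝ]
    exact hdO.trans_isLittleO hn1
  have hp := (peano2 φ φ' (f 0) φ2 h1 h2).comp_tendsto hdt
  have hp2 : ((fun δ => φ (f 0 + δ) - φ (f 0) - φ' (f 0) * δ - φ2 * δ ^ 2 / 2) ∘ d) =o[𝓝 0]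
      fun h : E => ‖h‖ ^ 2 := hp.trans_isBigO (by
        have := hdO.pow 2
        exact this)
  have hsq : (fun h => d h ^ 2 - ℓ h ^ 2) =o[𝓝 0] fun h : E => ‖h‖ ^ 2 := by
    have a1 := hdl.mul (hdO.add hlO)
    have a2 : (fun h : E => ‖h‖ ^ 2 * ‖h‖) =o[𝓝 0] fun h : E => ‖h‖ ^ 2 := by
      have := (Asymptotics.isBigO_refl (fun h : E => ‖h‖ ^ 2) (𝓝 0)).mul_isLittleO hn1
      simpa using this
    exact (a1.trans_isLittleO a2).congr_left fun h => by ring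
  refine ((hp2.add (ho.const_mul_left (φ' (f 0)))).add (hsq.const_mul_left (φ2 / 2))).congr_left
    fun h => ?_
  simp only [hd, Function.comp, add_sub_cancel]
  ring

end Jets

section JetTS
variable {N : ℕ}
local notation "⟪" x ", " y "⟫" => inner ℝ x y
local notation "𝔼" => EuclideanSpace ℝ (Fin N)

lemma jet_normsq (z : 𝔼) : Jet (fun h : 𝔼 × 𝔼 => ‖z + (h.1 - h.2)‖ ^ 2)
    (fun h => 2 * ⟪z, h.1 - h.2⟫) (fun h => 2 * ‖h.1 - h.2‖ ^ 2) := by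
  set D : 𝔼 × 𝔼 →L[ℝ] 𝔼 := ContinuousLinearMap.fst ℝ 𝔼 𝔼 - ContinuousLinearMap.snd ℝ 𝔼 𝔼
  have hD : ∀ h, D h = h.1 - h.2 := fun h => rfl
  refine (jet_quad (‖z‖ ^ 2) ((2 : ℝ) • (innerSL ℝ z).comp D)
    ((2 : ℝ) • (innerSL ℝ).bilinearComp D D)).congr ?_ ?_ ?_
  · intro h
    rw [norm_add_sq_real]
    simp [hD, ← inner_sub_left]
  · intro h
    simp [hD]
  · intro h
    simp [hD, ← inner_sub_left]

lemma jet_fst (c : ℝ) (e : 𝔼) : Jet (fun h : 𝔼 × 𝔼 => c + ⟪e, h.1⟫)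
    (fun h => ⟪e, h.1⟫) (fun _ => 0) :=
  jet_lin c ((innerSL ℝ e).comp (ContinuousLinearMap.fst ℝ 𝔼 𝔼))

lemma ts_jet (Ω : Set 𝔼) (hΩ : IsOpen Ω) (H u v : 𝔼 → ℝ) (hH : ContinuousOn H Ω)
    (hu : IsViscositySupersol Ω H u) (hv : IsViscositySubsol Ω H v)
    (hul : LowerSemicontinuousOn u Ω) (hvu : UpperSemicontinuousOn v Ω)
    (x₀ y₀ p q : 𝔼) (hx₀ : x₀ ∈ Ω) (hy₀ : y₀ ∈ Ω) (f ℓ Q : 𝔼 × 𝔼 → ℝ) (hJ : Jet f ℓ Q)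
    (hℓ : ∀ h, ℓ h = ⟪p, h.1⟫ - ⟪q, h.2⟫)
    (hf : ∀ᶠ h : 𝔼 × 𝔼 in 𝓝 0, v (x₀ + h.1) - u (y₀ + h.2) ≤ v x₀ - u y₀ + (f h - f 0))
    (B : 𝔼 →ₗ[ℝ] 𝔼) (hB : ∀ a, ‖B a‖ ^ 2 + ⟪q, B a⟫ ^ 2 = ‖a‖ ^ 2 + ⟪p, a⟫ ^ 2) :
    Wf p * (N * H x₀) - Wf q * (N * H y₀) ≤
      ∑ i, Q (tM p (EuclideanSpace.basisFun (Fin N) ℝ i),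
          B (tM p (EuclideanSpace.basisFun (Fin N) ℝ i))) := by
  obtain ⟨L, T, hL, hT, ho⟩ := hJ
  have := ts_main Ω hΩ H u v hH hu hv hul hvu x₀ y₀ p q hx₀ hy₀ T (by
    intro η hη
    filter_upwards [hf, (Asymptotics.isLittleO_iff.mp ho) hη] with h h1 h2
    rw [hT]
    rw [Real.norm_eq_abs, norm_pow, norm_norm] at h2
    have h3 := (abs_le.mp h2).2
    have h4 : ‖h‖ ^ 2 ≤ ‖h.1‖ ^ 2 + ‖h.2‖ ^ 2 := by
      rw [Prod.norm_def]
      rcases max_cases ‖h.1‖ ‖h.2‖ with ⟨h5, _⟩ | ⟨h5, _⟩ <;> rw [h5] <;>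
        nlinarith [sq_nonneg ‖h.1‖, sq_nonneg ‖h.2‖]
    have h5 : η * ‖h‖ ^ 2 ≤ η * (‖h.1‖ ^ 2 + ‖h.2‖ ^ 2) := by gcongr
    rw [hℓ] at h3
    linarith) B hB
  simpa only [hT] using this
end JetTS

section Setup
variable {N : ℕ}
local notation "⟪" x ", " y "⟫" => inner ℝ x y
local notation "𝔼" => EuclideanSpace ℝ (Fin N)

lemma usc_pair (K : Set 𝔼) (u v : 𝔼 → ℝ)
    (hu : LowerSemicontinuousOn u K) (hv : UpperSemicontinuousOn v K) :
    UpperSemicontinuousOn (fun z : 𝔼 × 𝔼 => v z.1 - u z.2) (K ×ˢ K) := by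
  have h1 : UpperSemicontinuousOn (fun z : 𝔼 × 𝔼 => v z.1) (K ×ˢ K) :=
    UpperSemicontinuousOn.comp (f := v) (g := Prod.fst) hv continuous_fst.continuousOn
      (fun z hz => hz.1)
  have h2 : LowerSemicontinuousOn (fun z : 𝔼 × 𝔼 => u z.2) (K ×ˢ K) :=
    LowerSemicontinuousOn.comp (f := u) (g := Prod.snd) hu continuous_snd.continuousOn
      (fun z hz => hz.2)
  have h3 : UpperSemicontinuousOn (fun z : 𝔼 × 𝔼 => -(u z.2)) (K ×ˢ K) := by
    intro z hz y hy
    have := h2 z hz (-y) (by simp at hy ⊢; linarith)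
    filter_upwards [this] with w hw
    linarith
  simpa only [sub_eq_add_neg] using h1.add h3

lemma pair_max (K : Set 𝔼) (hK : IsCompact K) (u v : 𝔼 → ℝ)
    (hu : LowerSemicontinuousOn u K) (hv : UpperSemicontinuousOn v K) (ρ : ℝ) (hρ : 0 ≤ ρ)
    (x₀ : 𝔼) (hx₀ : x₀ ∈ K) (Φ : 𝔼 × 𝔼 → ℝ) (hΦ : Continuous Φ) :
    ∃ x ∈ K, ∃ y ∈ K, ‖x - y‖ ≤ ρ ∧ ∀ x' ∈ K, ∀ y' ∈ K, ‖x' - y'‖ ≤ ρ →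
      v x' - u y' - Φ (x', y') ≤ v x - u y - Φ (x, y) := by
  set S : Set (𝔼 × 𝔼) := (K ×ˢ K) ∩ {z | ‖z.1 - z.2‖ ≤ ρ} with hS
  have hSc : IsCompact S := (hK.prod hK).inter_right
    (isClosed_le (by fun_prop) continuous_const)
  have hne : S.Nonempty := ⟨(x₀, x₀), ⟨hx₀, hx₀⟩, by simpa using hρ⟩
  have h1 : UpperSemicontinuousOn (fun z : 𝔼 × 𝔼 => v z.1 - u z.2 + -(Φ z)) S :=
    ((usc_pair K u v hu hv).mono inter_subset_left).add
      (hΦ.neg.upperSemicontinuous.upperSemicontinuousOn S)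
  obtain ⟨z, hz, hmax⟩ := UpperSemicontinuousOn.exists_isMaxOn hne hSc h1
  refine ⟨z.1, hz.1.1, z.2, hz.1.2, hz.2, fun x' hx' y' hy' h => ?_⟩
  have := hmax (show (x', y') ∈ S from ⟨⟨hx', hy'⟩, h⟩)
  simp only [mem_ofPred_eq] at this
  linarith

lemma strip (Ω : Set 𝔼) (hΩo : IsOpen Ω) (K : Set 𝔼) (hK : IsCompact K) (u v : 𝔼 → ℝ)
    (hu : LowerSemicontinuousOn u K) (hv : UpperSemicontinuousOn v K) (m : ℝ) (hm : 0 < m)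
    (hb : ∀ x ∈ K, x ∉ Ω → v x ≤ u x) :
    ∃ ρ > 0, ∃ K' ⊆ Ω, IsCompact K' ∧ ∀ x ∈ K, ∀ y ∈ K, ‖x - y‖ ≤ ρ → m / 2 ≤ v x - u y →
      x ∈ K' ∧ y ∈ K' := by
  have husc := usc_pair K u v hu hv
  set A : Set (𝔼 × 𝔼) := (K ×ˢ K) ∩ {z | m / 2 ≤ v z.1 - u z.2} with hA
  have hAc : IsCompact A := by
    obtain ⟨C, hC, hC'⟩ := (upperSemicontinuousOn_iff_preimage_Ici.mp husc) (m / 2)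
    have : A = (K ×ˢ K) ∩ C := by
      rw [← hC']; rfl
    rw [this]
    exact (hK.prod hK).inter_right hC
  have hBc : IsCompact (A \ (Ω ×ˢ Ω)) := hAc.diff (hΩo.prod hΩo)
  have hpos : ∃ ρ > 0, ∀ z ∈ A \ (Ω ×ˢ Ω), ρ < ‖z.1 - z.2‖ := by
    rcases (A \ (Ω ×ˢ Ω)).eq_empty_or_nonempty with h | h
    · exact ⟨1, one_pos, by rw [h]; simp⟩
    · obtain ⟨z, hz, hmin⟩ := hBc.exists_isMinOn h
        (f := fun z : 𝔼 × 𝔼 => ‖z.1 - z.2‖) (by fun_prop)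
      have hz0 : 0 < ‖z.1 - z.2‖ := by
        rw [norm_pos_iff, sub_ne_zero]
        intro he
        have h1 : z.1 ∉ Ω := fun h => hz.2 ⟨h, he ▸ h⟩
        have h2 := hb z.1 hz.1.1.1 h1
        have h3 : m / 2 ≤ v z.1 - u z.2 := hz.1.2
        rw [← he] at h3
        linarith
      refine ⟨‖z.1 - z.2‖ / 2, by linarith, fun w hw => ?_⟩
      have : ‖z.1 - z.2‖ ≤ ‖w.1 - w.2‖ := hmin hw
      linarith
  obtain ⟨ρ, hρ, hρ'⟩ := hpos
  set A' : Set (𝔼 × 𝔼) := A ∩ {z | ‖z.1 - z.2‖ ≤ ρ} with hA'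
  have hA'c : IsCompact A' := hAc.inter_right (isClosed_le (by fun_prop) continuous_const)
  have hA'O : ∀ z ∈ A', z ∈ Ω ×ˢ Ω := by
    intro z hz
    by_contra hcon
    have := hρ' z ⟨hz.1, hcon⟩
    have h2 : ‖z.1 - z.2‖ ≤ ρ := hz.2
    linarith
  refine ⟨ρ, hρ, Prod.fst '' A' ∪ Prod.snd '' A', ?_,
    (hA'c.image continuous_fst).union (hA'c.image continuous_snd), ?_⟩
  · rintro _ (⟨z, hz, rfl⟩ | ⟨z, hz, rfl⟩)
    · exact (hA'O z hz).1
    · exact (hA'O z hz).2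
  · intro x hx y hy h h'
    have : (x, y) ∈ A' := ⟨⟨⟨hx, hy⟩, h'⟩, h⟩
    exact ⟨Or.inl ⟨_, this, rfl⟩, Or.inr ⟨_, this, rfl⟩⟩

lemma LocLipschitzOn.contOn {Ω : Set 𝔼} {H : 𝔼 → ℝ} (hH : LocLipschitzOn Ω H) :
    ContinuousOn H Ω := by
  have : LocallyLipschitzOn Ω H := hH
  exact this.continuousOn

lemma setup (Ω : Set 𝔼) (hΩo : IsOpen Ω) (hΩb : Bornology.IsBounded Ω) (H : 𝔼 → ℝ)
    (hH : LocLipschitzOn Ω H) (u v : 𝔼 → ℝ)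
    (hu : LowerSemicontinuousOn u (closure Ω)) (hv : UpperSemicontinuousOn v (closure Ω))
    (hbdry : ∀ x ∈ frontier Ω, v x ≤ u x) (x₁ : 𝔼) (hx₁ : x₁ ∈ Ω) (hlt : u x₁ < v x₁) :
    ∃ m > 0, ∃ xs ∈ Ω, v xs - u xs = m ∧ (∀ x ∈ closure Ω, v x - u x ≤ m) ∧
      (∃ M, ∀ x ∈ closure Ω, ∀ y ∈ closure Ω, v x - u y ≤ M) ∧
      ∃ ρ > 0, ∃ L ≥ 0, ∃ Hm ≥ 0, ∀ x ∈ closure Ω, ∀ y ∈ closure Ω, ‖x - y‖ ≤ ρ →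
        m / 2 ≤ v x - u y → x ∈ Ω ∧ y ∈ Ω ∧ |H x - H y| ≤ L * ‖x - y‖ ∧ |H x| ≤ Hm := by
  have hK : IsCompact (closure Ω) := hΩb.isCompact_closure
  have hb : ∀ x ∈ closure Ω, x ∉ Ω → v x ≤ u x := by
    intro x hx hx'
    apply hbdry
    rw [hΩo.frontier_eq]; exact ⟨hx, hx'⟩
  obtain ⟨xs, hxs, ys, hys, hxy, hmax⟩ := pair_max (closure Ω) hK u v hu hv 0 le_rfl x₁
    (subset_closure hx₁) (fun _ => 0) continuous_const
  obtain rfl : xs = ys := by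
    rw [← sub_eq_zero, ← norm_le_zero_iff]; exact hxy
  have hmx : ∀ x ∈ closure Ω, v x - u x ≤ v xs - u xs := by
    intro x hx
    have := hmax x hx x hx (by simp)
    simpa using this
  have hm : 0 < v xs - u xs := by
    have := hmx x₁ (subset_closure hx₁); linarith
  have hxsΩ : xs ∈ Ω := by
    by_contra h
    have := hb xs hxs h; linarith
  have hM : ∃ M, ∀ x ∈ closure Ω, ∀ y ∈ closure Ω, v x - u y ≤ M := by
    obtain ⟨z, hz, hz'⟩ := UpperSemicontinuousOn.exists_isMaxOn
      (s := closure Ω ×ˢ closure Ω) ⟨(xs, xs), hxs, hxs⟩ (hK.prod hK) (usc_pair _ u v hu hv)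
    exact ⟨v z.1 - u z.2, fun x hx y hy => hz' (show (x, y) ∈ _ from ⟨hx, hy⟩)⟩
  refine ⟨_, hm, xs, hxsΩ, rfl, hmx, hM, ?_⟩
  obtain ⟨ρ, hρ, K', hK'Ω, hK'c, hK'⟩ := strip Ω hΩo (closure Ω) hK u v hu hv _ hm hb
  have hHl : LocallyLipschitzOn K' H := LocallyLipschitzOn.mono (show LocallyLipschitzOn Ω H from hH) hK'Ω
  obtain ⟨L, hL⟩ := hHl.exists_lipschitzOnWith_of_compact hK'c
  obtain ⟨Hm, hHm⟩ := hK'c.exists_bound_of_continuousOn hHl.continuousOn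
  refine ⟨ρ, hρ, L, L.2, max Hm 0, le_max_right _ _, fun x hx y hy h h' => ?_⟩
  obtain ⟨a, b⟩ := hK' x hx y hy h h'
  refine ⟨hK'Ω a, hK'Ω b, ?_, (hHm x a).trans (le_max_left _ _)⟩
  have := hL.norm_sub_le a b
  simpa using this
end Setup

section GradBound
variable {N : ℕ}
local notation "⟪" x ", " y "⟫" => inner ℝ x y
local notation "𝔼" => EuclideanSpace ℝ (Fin N)

lemma Jet.sqrt {E : Type*} [NormedAddCommGroup E] [NormedSpace ℝ E] {f ℓ Q : E → ℝ}
    (h : Jet f ℓ Q) (s : ℝ) (hs : 0 < s) (hf : f 0 = s ^ 2) :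
    Jet (fun x => Real.sqrt (f x)) (fun x => ℓ x / (2 * s))
      (fun x => Q x / (2 * s) - ℓ x ^ 2 / (4 * s ^ 3)) := by
  have h0 : 0 < f 0 := by rw [hf]; positivity
  have hsq : √(f 0) = s := by rw [hf, Real.sqrt_sq hs.le]
  have h1 : ∀ᶠ t in 𝓝 (f 0), HasDerivAt Real.sqrt ((fun t => 1 / (2 * √t)) t) t := by
    filter_upwards [lt_mem_nhds h0] with t ht
    exact Real.hasDerivAt_sqrt ht.ne'
  have h2 : HasDerivAt (fun t => 1 / (2 * √t)) (-(1 / (4 * s ^ 3))) (f 0) := by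
    have e := ((Real.hasDerivAt_sqrt h0.ne').const_mul 2).inv (by rw [hsq]; positivity)
    have e2 : (fun t => 1 / (2 * √t)) = (fun y => 2 * √y)⁻¹ := funext fun t => one_div _
    rw [e2]
    refine e.congr_deriv ?_
    rw [hsq]; field_simp; norm_num
  refine (h.comp _ _ _ h1 h2).congr (fun x => rfl) (fun x => ?_) (fun x => ?_)
  · simp only [hsq]; ring
  · simp only [hsq]; ring

lemma jet_norm (z : 𝔼) (hz : z ≠ 0) : Jet (fun h : 𝔼 × 𝔼 => ‖z + (h.1 - h.2)‖)
    (fun h => ⟪z, h.1 - h.2⟫ / ‖z‖)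
    (fun h => (‖h.1 - h.2‖ ^ 2 - (⟪z, h.1 - h.2⟫ / ‖z‖) ^ 2) / ‖z‖) := by
  have hr : 0 < ‖z‖ := norm_pos_iff.mpr hz
  refine ((jet_normsq z).sqrt ‖z‖ hr (by simp)).congr (fun x => ?_) (fun x => ?_) (fun x => ?_)
  · exact Real.sqrt_sq (norm_nonneg _)
  · field_simp
  · field_simp; ring

lemma local_from_max (Ω : Set 𝔼) (hΩ : IsOpen Ω) (u v : 𝔼 → ℝ) (ρ : ℝ) (x y : 𝔼)
    (hx : x ∈ Ω) (hy : y ∈ Ω) (hxy : ‖x - y‖ < ρ) (Φ : 𝔼 × 𝔼 → ℝ) (f : 𝔼 × 𝔼 → ℝ)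
    (hmax : ∀ x' ∈ closure Ω, ∀ y' ∈ closure Ω, ‖x' - y'‖ ≤ ρ →
      v x' - u y' - Φ (x', y') ≤ v x - u y - Φ (x, y))
    (hf : ∀ᶠ h : 𝔼 × 𝔼 in 𝓝 0, Φ (x + h.1, y + h.2) ≤ f h) (hf0 : Φ (x, y) = f 0) :
    ∀ᶠ h : 𝔼 × 𝔼 in 𝓝 0, v (x + h.1) - u (y + h.2) ≤ v x - u y + (f h - f 0) := by
  have t1 : Tendsto (fun h : 𝔼 × 𝔼 => x + h.1) (𝓝 0) (𝓝 x) := by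
    have : Continuous fun h : 𝔼 × 𝔼 => x + h.1 := by fun_prop
    simpa using this.tendsto 0
  have t2 : Tendsto (fun h : 𝔼 × 𝔼 => y + h.2) (𝓝 0) (𝓝 y) := by
    have : Continuous fun h : 𝔼 × 𝔼 => y + h.2 := by fun_prop
    simpa using this.tendsto 0
  have t3 := (t1.sub t2).norm
  filter_upwards [hf, t1.eventually (hΩ.mem_nhds hx), t2.eventually (hΩ.mem_nhds hy),
    t3.eventually (gt_mem_nhds hxy)] with h h1 h2 h3 h4
  have := hmax _ (subset_closure h2) _ (subset_closure h3) h4.le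
  linarith

set_option maxHeartbeats 1000000 in
lemma grad_bound (Ω : Set 𝔼) (hΩo : IsOpen Ω) (hΩb : Bornology.IsBounded Ω) (H : 𝔼 → ℝ)
    (hH : ContinuousOn H Ω) (u v : 𝔼 → ℝ)
    (hul : LowerSemicontinuousOn u (closure Ω)) (hvu : UpperSemicontinuousOn v (closure Ω))
    (hu : IsViscositySupersol Ω H u) (hv : IsViscositySubsol Ω H v)
    (m : ℝ) (hm : 0 < m) (xs : 𝔼) (hxs : xs ∈ Ω) (hxm : v xs - u xs = m)
    (hmx : ∀ x ∈ closure Ω, v x - u x ≤ m)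
    (M : ℝ) (hM : ∀ x ∈ closure Ω, ∀ y ∈ closure Ω, v x - u y ≤ M)
    (ρ₀ : ℝ) (hρ₀ : 0 < ρ₀) (L : ℝ) (hL : 0 ≤ L)
    (hin : ∀ x ∈ closure Ω, ∀ y ∈ closure Ω, ‖x - y‖ ≤ ρ₀ →
        m / 2 ≤ v x - u y → x ∈ Ω ∧ y ∈ Ω ∧ |H x - H y| ≤ L * ‖x - y‖) :
    ∃ C ≥ 0, ∃ ρ > 0, ρ ≤ ρ₀ ∧ ∀ x ∈ closure Ω, ∀ y ∈ closure Ω, ‖x - y‖ ≤ ρ →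
      v x - u y ≤ m + C * ‖x - y‖ := by
  set β : ℝ := 1 + N * L with hβ
  have hNL : 0 ≤ N * L := by positivity
  have hβ1 : 1 ≤ β := by linarith
  have hβ0 : 0 < β := by linarith
  set ρ : ℝ := min ρ₀ (1 / (2 * β)) with hρ
  have hρ0 : 0 < ρ := lt_min hρ₀ (by positivity)
  set τ : ℝ := min (1 / (2 * β)) (ρ / Real.exp (β * (M - m))) with hτ
  have hτ0 : 0 < τ := lt_min (by positivity) (by positivity)
  have hβρ : β * (ρ + τ) ≤ 1 := by
    have h1 : ρ ≤ 1 / (2 * β) := min_le_right _ _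
    have h2 : τ ≤ 1 / (2 * β) := min_le_left _ _
    calc β * (ρ + τ) ≤ β * (1 / (2 * β) + 1 / (2 * β)) := by gcongr
      _ = 1 := by field_simp; norm_num
  have hφρ : M - m < 1 / β * Real.log (1 + ρ / τ) := by
    have h2 : τ ≤ ρ / Real.exp (β * (M - m)) := min_le_right _ _
    have h3 : Real.exp (β * (M - m)) ≤ ρ / τ := by
      rw [le_div_iff₀ hτ0]; rw [le_div_iff₀ (Real.exp_pos _)] at h2; linarith
    have h4 : β * (M - m) < Real.log (1 + ρ / τ) := by
      rw [Real.lt_log_iff_exp_lt (by positivity)]; linarith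
    rw [one_div, lt_inv_mul_iff₀ hβ0]; exact h4
  set Φ : 𝔼 × 𝔼 → ℝ := fun z => 1 / β * Real.log (1 + ‖z.1 - z.2‖ / τ) with hΦ
  have hΦc : Continuous Φ := by
    apply Continuous.mul continuous_const
    apply Continuous.log (by fun_prop)
    intro z
    positivity
  have hΦ0 : ∀ z, 0 ≤ Φ z := fun z => by
    have h1 : 0 ≤ Real.log (1 + ‖z.1 - z.2‖ / τ) :=
      Real.log_nonneg (by have : 0 ≤ ‖z.1 - z.2‖ / τ := by positivity
                          linarith)
    positivity
  obtain ⟨x, hx, y, hy, hxy, hmax⟩ := pair_max (closure Ω) hΩb.isCompact_closure u v hul hvu ρ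
    hρ0.le xs (subset_closure hxs) Φ hΦc
  have hval : m ≤ v x - u y - Φ (x, y) := by
    have := hmax xs (subset_closure hxs) xs (subset_closure hxs) (by simpa using hρ0.le)
    have h2 : Φ (xs, xs) = 0 := by simp [hΦ]
    linarith
  have hrρ : ‖x - y‖ < ρ := by
    refine lt_of_le_of_ne hxy fun he => ?_
    have h1 := hM x hx y hy
    have h2 : Φ (x, y) = 1 / β * Real.log (1 + ρ / τ) := by simp only [hΦ]; rw [he]
    linarith
  obtain ⟨hxΩ, hyΩ, hLip⟩ := hin x hx y hy (hxy.trans (min_le_left _ _))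
    (by have := hΦ0 (x, y); linarith)
  have hxy0 : x - y = 0 := by
    by_contra hz
    set z := x - y with hzdef
    set r := ‖z‖ with hr
    have hr0 : 0 < r := norm_pos_iff.mpr hz
    set e : 𝔼 := r⁻¹ • z with he
    have he1 : ‖e‖ = 1 := by rw [he, norm_smul, norm_inv, norm_norm]; field_simp
    have hee : ⟪e, e⟫ = 1 := by rw [real_inner_self_eq_norm_sq, he1]; norm_num
    set φ1 : ℝ := 1 / (β * (τ + r)) with hφ1
    set φ2 : ℝ := -(1 / (β * (τ + r) ^ 2)) with hφ2
    have hφ1p : 0 < φ1 := by positivity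
    have hφ1' : 1 ≤ φ1 := by
      rw [hφ1, le_div_iff₀ (by positivity), one_mul]
      calc β * (τ + r) ≤ β * (ρ + τ) := by
            have : τ + r ≤ ρ + τ := by linarith
            gcongr
        _ ≤ 1 := hβρ
    have hJ : Jet (fun h : 𝔼 × 𝔼 => 1 / β * Real.log (1 + ‖z + (h.1 - h.2)‖ / τ))
        (fun h => φ1 * ⟪e, h.1 - h.2⟫)
        (fun h => φ1 * ((‖h.1 - h.2‖ ^ 2 - ⟪e, h.1 - h.2⟫ ^ 2) / r) + φ2 * ⟪e, h.1 - h.2⟫ ^ 2) := by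
      have hei : ∀ c, ⟪z, c⟫ / ‖z‖ = ⟪e, c⟫ := by
        intro c; rw [he, real_inner_smul_left, ← hr]; field_simp
      have d1 : ∀ t : ℝ, -τ < t →
          HasDerivAt (fun t => 1 / β * Real.log (1 + t / τ)) (1 / (β * (τ + t))) t := by
        intro t ht
        have hpos : 0 < 1 + t / τ := by
          have : 1 + t / τ = (τ + t) / τ := by field_simp
          rw [this]; apply div_pos _ hτ0; linarith
        have := ((((hasDerivAt_id t).div_const τ).const_add 1).log hpos.ne').const_mul (1 / β)
        refine this.congr_deriv ?_
        have h3 : τ + t ≠ 0 := by linarith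
        simp only [id]
        field_simp
      have d2 : HasDerivAt (fun t => 1 / (β * (τ + t))) φ2 r := by
        have h3 : β * (τ + r) ≠ 0 := by positivity
        have := (((hasDerivAt_id r).const_add τ).const_mul β).inv h3
        have e2 : (fun t => 1 / (β * (τ + t))) = (fun y => β * (τ + id y))⁻¹ :=
          funext fun t => one_div _
        rw [e2]
        refine this.congr_deriv ?_
        rw [hφ2]; simp only [id]; field_simp
      have hj := jet_norm z hz
      refine (hj.comp (fun t => 1 / β * Real.log (1 + t / τ)) (fun t => 1 / (β * (τ + t))) φ2
        ?_ ?_).congr (fun h => rfl) (fun h => ?_) (fun h => ?_)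
      · simp only [Prod.fst_zero, Prod.snd_zero, sub_zero, add_zero]
        filter_upwards [lt_mem_nhds (show -τ < ‖z‖ by linarith)] with t ht using d1 t ht
      · simpa using d2
      · simp only [Prod.fst_zero, Prod.snd_zero, sub_zero, add_zero, hei]
        rfl
      · simp only [Prod.fst_zero, Prod.snd_zero, sub_zero, add_zero, hei]
        rfl
    set p : 𝔼 := φ1 • e with hp
    have hpi : ∀ c, ⟪p, c⟫ = φ1 * ⟪e, c⟫ := fun c => real_inner_smul_left e c φ1
    let B : 𝔼 →ₗ[ℝ] 𝔼 := LinearMap.id - (2 : ℝ) • ((innerSL ℝ e : 𝔼 →ₗ[ℝ] ℝ).smulRight e)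
    have hBa : ∀ a, B a = a - (2 * ⟪e, a⟫) • e := fun a => by
      simp [B, smul_smul]
    have hBe : ∀ a, ⟪e, B a⟫ = -⟪e, a⟫ := by
      intro a; rw [hBa, inner_sub_right, inner_smul_right, hee]; ring
    have hBn : ∀ a, ‖B a‖ ^ 2 = ‖a‖ ^ 2 := by
      intro a
      rw [hBa, norm_sub_sq_real, inner_smul_right, norm_smul, he1, mul_one, Real.norm_eq_abs,
        sq_abs, real_inner_comm]; ring
    have hts := ts_jet Ω hΩo H u v hH hu hv (hul.mono subset_closure) (hvu.mono subset_closure)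
      x y p p hxΩ hyΩ _ _ _ hJ (by
        intro h
        rw [hpi, hpi, inner_sub_right]; ring)
      (local_from_max Ω hΩo u v ρ x y hxΩ hyΩ hrρ Φ _ hmax (by
        refine Eventually.of_forall fun h => le_of_eq ?_
        simp only [hΦ]
        rw [hzdef]
        congr 5
        abel) (by simp [hΦ, hzdef])) B (by
        intro a
        rw [hBn, hpi, hpi, hBe]; ring)
    have hQ : ∀ a, φ1 * ((‖a - B a‖ ^ 2 - ⟪e, a - B a⟫ ^ 2) / r) + φ2 * ⟪e, a - B a⟫ ^ 2
        = 4 * φ2 * ⟪e, a⟫ ^ 2 := by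
      intro a
      have h1 : a - B a = (2 * ⟪e, a⟫) • e := by rw [hBa]; abel
      rw [h1, inner_smul_right, hee, norm_smul, he1, mul_one, Real.norm_eq_abs, sq_abs]
      ring
    simp only [hQ] at hts
    rw [← Finset.mul_sum, sum_tM_sq] at hts
    have hpe : ⟪p, e⟫ = φ1 := by rw [hpi, hee, mul_one]
    have hpn : ‖p‖ ^ 2 = φ1 ^ 2 := by
      rw [hp, norm_smul, he1, mul_one, Real.norm_eq_abs, sq_abs]
    have hW2 := Wf_sq p
    have hW := Wf_pos p
    rw [hpe, he1] at hts
    rw [hpn] at hW2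
    set W := Wf p with hWdef
    have hsum : 4 * φ2 * (1 ^ 2 - φ1 ^ 2 / W ^ 2) = 4 * φ2 / W ^ 2 := by
      have : φ1 ^ 2 = W ^ 2 - 1 := by linarith
      rw [this]; field_simp; ring
    rw [hsum] at hts
    have hW32 : W ≤ 3 / 2 * φ1 := by
      apply abs_le_of_sq_le_sq' _ (by positivity) |>.2
      nlinarith
    have hφ2' : φ2 = -(β * φ1 ^ 2) := by
      rw [hφ2, hφ1]; field_simp
    have hβrφ : β * (r * φ1) ≤ 1 := by
      rw [hφ1]
      have : β * (r * (1 / (β * (τ + r)))) = r / (τ + r) := by field_simp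
      rw [this, div_le_one (by positivity)]; linarith
    have hlow : -(W * (N * (L * r))) ≤ W * (N * H x) - W * (N * H y) := by
      have h1 := (abs_le.mp hLip).1
      have : W * (N * H x) - W * (N * H y) = W * (N * (H x - H y)) := by ring
      rw [this, ← mul_neg, ← mul_neg]
      gcongr
    have h5 : -(W * (N * (L * r))) ≤ 4 * φ2 / W ^ 2 := hlow.trans hts
    rw [le_div_iff₀ (by positivity), hφ2'] at h5
    have h6 : 4 * β * φ1 ^ 2 ≤ N * L * r * W ^ 3 := by nlinarith
    have h7 : W ^ 3 ≤ 27 / 8 * φ1 ^ 3 := by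
      calc W ^ 3 ≤ (3 / 2 * φ1) ^ 3 := by gcongr
        _ = _ := by ring
    have h8 : 4 * β * φ1 ^ 2 ≤ (27 / 8 * (N * L) * (r * φ1)) * φ1 ^ 2 := by
      calc _ ≤ N * L * r * W ^ 3 := h6
        _ ≤ N * L * r * (27 / 8 * φ1 ^ 3) := by gcongr
        _ = _ := by ring
    have h9 : 4 * β ≤ 27 / 8 * (N * L) * (r * φ1) := le_of_mul_le_mul_right h8 (by positivity)
    have h10 : 4 * β ^ 2 ≤ 27 / 8 * (N * L) := by
      calc 4 * β ^ 2 = β * (4 * β) := by ring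
        _ ≤ β * (27 / 8 * (N * L) * (r * φ1)) := by gcongr
        _ = 27 / 8 * (N * L) * (β * (r * φ1)) := by ring
        _ ≤ 27 / 8 * (N * L) * 1 := by gcongr
        _ = _ := by ring
    nlinarith
  refine ⟨1 / (β * τ), by positivity, ρ, hρ0, min_le_left _ _, fun x' hx' y' hy' h => ?_⟩
  have h1 := hmax x' hx' y' hy' h
  have h2 : x = y := sub_eq_zero.mp hxy0
  subst h2
  have h3 := hmx x hx
  have h4 := hΦ0 (x, x)
  have h5 : Φ (x', y') ≤ 1 / (β * τ) * ‖x' - y'‖ := by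
    have := Real.log_le_sub_one_of_pos (show 0 < 1 + ‖x' - y'‖ / τ by positivity)
    calc Φ (x', y') ≤ 1 / β * (1 + ‖x' - y'‖ / τ - 1) := by simp only [hΦ]; gcongr
      _ = _ := by field_simp; ring
  linarith
end GradBound

section Coupling
variable {N : ℕ}
local notation "⟪" x ", " y "⟫" => inner ℝ x y
local notation "𝔼" => EuclideanSpace ℝ (Fin N)

lemma Wf_norm_le (p : 𝔼) : ‖p‖ ≤ Wf p := by
  have h1 := Wf_sq p
  have h2 := Wf_pos p
  exact (abs_le_of_sq_le_sq' (by linarith) h2.le).2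

lemma Wf_lip (p q : 𝔼) : |Wf p - Wf q| ≤ ‖p - q‖ := by
  have h1 := Wf_sq p
  have h2 := Wf_pos p
  have h3 := Wf_sq q
  have h4 := Wf_pos q
  have h5 := Wf_norm_le p
  have h6 := Wf_norm_le q
  have h7 := abs_norm_sub_norm_le p q
  have e1 : |Wf p - Wf q| * (Wf p + Wf q) = |‖p‖ - ‖q‖| * (‖p‖ + ‖q‖) := by
    rw [← abs_of_pos (show 0 < Wf p + Wf q by linarith), ← abs_mul,
      ← abs_of_nonneg (show 0 ≤ ‖p‖ + ‖q‖ by positivity), ← abs_mul]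
    congr 1
    linarith
  have e2 : |‖p‖ - ‖q‖| * (‖p‖ + ‖q‖) ≤ ‖p - q‖ * (Wf p + Wf q) := by gcongr
  rw [← e1] at e2
  exact le_of_mul_le_mul_right e2 (by linarith)

lemma kappa_ex (h t : ℝ) (hh : 0 < h) (hh1 : h ≤ 1) (ht : t ^ 2 ≤ 1 / 2) :
    ∃ κ : ℝ, 2 * κ + κ ^ 2 * h = t ^ 2 * (1 + κ * h) ^ 2 ∧
      κ ^ 2 * (h - t ^ 2 * h ^ 2) ≤ 1 / 2 * t ^ 2 := by
  set x := h * t ^ 2 with hx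
  have hx0 : 0 ≤ x := by positivity
  have hx1 : x ≤ 1 / 2 := by nlinarith [sq_nonneg t]
  set g := √(1 - x) with hg
  have hg2 : g ^ 2 = 1 - x := Real.sq_sqrt (by linarith)
  have hg0 : 0 < g := Real.sqrt_pos.mpr (by linarith)
  set κ := (1 / g - 1) / h with hκ
  have hκh : κ * h = 1 / g - 1 := by rw [hκ]; field_simp
  have h1 : (1 + κ * h) * g = 1 := by rw [hκh]; field_simp; ring
  have hg1 : g ≤ 1 := (abs_le_of_sq_le_sq' (by linarith) one_pos.le).2
  have hκ0 : 0 ≤ κ := by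
    rw [hκ]; apply div_nonneg _ hh.le
    rw [sub_nonneg, le_div_iff₀ hg0]; linarith
  have hκ1 : κ ≤ t ^ 2 := by
    have h2 : 1 ≤ (1 + x) * g := by
      have : (1 : ℝ) ^ 2 ≤ ((1 + x) * g) ^ 2 := by
        rw [mul_pow, hg2]
        have : 0 ≤ x * (1 - x - x ^ 2) := mul_nonneg hx0 (by nlinarith)
        linarith
      exact (abs_le_of_sq_le_sq' this (by positivity)).2
    have h3 : 1 + κ * h ≤ 1 + x := by
      have h2' : (1 + κ * h) * g ≤ (1 + x) * g := by rw [h1]; exact h2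
      exact le_of_mul_le_mul_right h2' hg0
    have h4 : κ * h ≤ t ^ 2 * h := by rw [hx] at h3; linarith
    exact le_of_mul_le_mul_right h4 hh
  refine ⟨κ, ?_, ?_⟩
  · have h2 : (1 + κ * h) ^ 2 * (1 - x) = 1 := by
      rw [← hg2, ← mul_pow, h1]; norm_num
    have h3 : h * (2 * κ + κ ^ 2 * h) = h * (t ^ 2 * (1 + κ * h) ^ 2) := by
      rw [hx] at h2; linear_combination h2
    exact mul_left_cancel₀ hh.ne' h3
  · have a1 : h - t ^ 2 * h ^ 2 ≤ 1 := by nlinarith [sq_nonneg (t * h)]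
    have a2 : 0 ≤ h - t ^ 2 * h ^ 2 := by nlinarith
    calc κ ^ 2 * (h - t ^ 2 * h ^ 2) ≤ (t ^ 2) ^ 2 * 1 := by gcongr
      _ ≤ 1 / 2 * t ^ 2 := by nlinarith [sq_nonneg t]

set_option maxHeartbeats 1000000 in
lemma coupling (q e p : 𝔼) (he : ‖e‖ = 1) (t : ℝ) (ht : t ^ 2 ≤ 1 / 2)
    (hp : p = q - (Wf q * t) • e) :
    ∃ B : 𝔼 →ₗ[ℝ] 𝔼, (∀ a, ‖B a‖ ^ 2 + ⟪q, B a⟫ ^ 2 = ‖a‖ ^ 2 + ⟪p, a⟫ ^ 2) ∧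
      ∀ a, ‖a - B a - (t * ⟪e, a⟫ / Wf q) • q‖ ^ 2 +
        ⟪q, a - B a - (t * ⟪e, a⟫ / Wf q) • q⟫ ^ 2 ≤ 1 / 2 * t ^ 2 * ⟪e, a⟫ ^ 2 := by
  have hW2 := Wf_sq q
  have hW := Wf_pos q
  have hV2 := Wf_sq p
  have hV := Wf_pos p
  set W := Wf q with hWd
  set V := Wf p with hVd
  have hpa : ∀ a, ⟪p, a⟫ = ⟪q, a⟫ - W * t * ⟪e, a⟫ := by
    intro a; rw [hp, inner_sub_left, real_inner_smul_left]
  have hee : ⟪e, e⟫ = 1 := by rw [real_inner_self_eq_norm_sq, he]; norm_num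
  let Lm : 𝔼 →ₗ[ℝ] 𝔼 := LinearMap.id - (t / W) • ((innerSL ℝ e : 𝔼 →ₗ[ℝ] ℝ).smulRight q)
  have hLa : ∀ a, Lm a = a - (t / W * ⟪e, a⟫) • q := fun a => by
    simp [Lm, smul_smul]
  have hLq : ∀ a, ‖Lm a‖ ^ 2 + ⟪q, Lm a⟫ ^ 2 = ‖a‖ ^ 2 + ⟪p, a⟫ ^ 2 - t ^ 2 * ⟪e, a⟫ ^ 2 := by
    intro a
    rw [hLa, norm_sub_sq_real, inner_sub_right, inner_smul_right, inner_smul_right, norm_smul,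
      real_inner_self_eq_norm_sq, mul_pow, Real.norm_eq_abs, sq_abs, hpa, real_inner_comm q a]
    have : ‖q‖ ^ 2 = W ^ 2 - 1 := by linarith
    rw [this]
    field_simp
    ring
  set g : 𝔼 := e - (⟪p, e⟫ / V ^ 2) • p with hg
  have hga : ∀ a, ⟪g, a⟫ = ⟪e, a⟫ - ⟪p, e⟫ / V ^ 2 * ⟪p, a⟫ := by
    intro a; rw [hg, inner_sub_left, real_inner_smul_left]
  have hpp : ⟪p, p⟫ = V ^ 2 - 1 := by rw [real_inner_self_eq_norm_sq]; linarith
  have hpg : ⟪p, g⟫ = ⟪p, e⟫ / V ^ 2 := by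
    rw [real_inner_comm, hga, real_inner_comm p e, hpp]; field_simp; ring
  have hgY : ∀ a, ⟪g, a⟫ + ⟪p, g⟫ * ⟪p, a⟫ = ⟪e, a⟫ := by
    intro a; rw [hga, hpg]; ring
  set h := ⟪e, g⟫ with hh
  have hgg : ‖g‖ ^ 2 + ⟪p, g⟫ ^ 2 = h := by
    rw [hh, ← hgY g, real_inner_self_eq_norm_sq]; ring
  have hhe : h = 1 - ⟪p, e⟫ ^ 2 / V ^ 2 := by
    rw [hh, real_inner_comm, hga, hee]; ring
  have hh1 : h ≤ 1 := by
    rw [hhe]; have : 0 ≤ ⟪p, e⟫ ^ 2 / V ^ 2 := by positivity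
    linarith
  have hpe2 : ⟪p, e⟫ ^ 2 ≤ ‖p‖ ^ 2 := by
    have := abs_real_inner_le_norm p e
    rw [he, mul_one] at this
    rw [← sq_abs]; gcongr
  have hh0 : 0 < h := by
    rw [hhe, sub_pos, div_lt_one (by positivity)]; linarith
  obtain ⟨κ, hκ1, hκ2⟩ := kappa_ex h t hh0 hh1 ht
  let Km : 𝔼 →ₗ[ℝ] 𝔼 := LinearMap.id + κ • ((innerSL ℝ e : 𝔼 →ₗ[ℝ] ℝ).smulRight g)
  have hKa : ∀ a, Km a = a + (κ * ⟪e, a⟫) • g := fun a => by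
    simp [Km, smul_smul]
  refine ⟨Lm.comp Km, fun a => ?_, fun a => ?_⟩
  · rw [LinearMap.comp_apply, hLq, hKa, norm_add_sq_real, inner_add_right, inner_add_right,
      inner_smul_right, inner_smul_right, inner_smul_right, norm_smul, mul_pow, Real.norm_eq_abs,
      sq_abs, ← hh]
    have e1 : ⟪a, g⟫ = ⟪e, a⟫ - ⟪p, g⟫ * ⟪p, a⟫ := by
      rw [real_inner_comm, ← hgY a]; ring
    have e2 : ‖g‖ ^ 2 = h - ⟪p, g⟫ ^ 2 := by linarith
    rw [e1, e2]
    linear_combination ⟪e, a⟫ ^ 2 * hκ1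
  · have hd : a - Lm (Km a) - (t * ⟪e, a⟫ / W) • q = (-(κ * ⟪e, a⟫)) • Lm g := by
      rw [hKa, map_add, map_smul, hLa a, mul_div_right_comm, neg_smul]
      abel
    rw [LinearMap.comp_apply, hd, norm_smul, inner_smul_right, mul_pow, mul_pow, Real.norm_eq_abs,
      sq_abs, ← mul_add, hLq, hgg, ← hh]
    calc (-(κ * ⟪e, a⟫)) ^ 2 * (h - t ^ 2 * h ^ 2)
        = κ ^ 2 * (h - t ^ 2 * h ^ 2) * ⟪e, a⟫ ^ 2 := by ring
      _ ≤ 1 / 2 * t ^ 2 * ⟪e, a⟫ ^ 2 := by gcongr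

lemma core_ineq (Ω : Set 𝔼) (hΩ : IsOpen Ω) (H u v : 𝔼 → ℝ) (hH : ContinuousOn H Ω)
    (hu : IsViscositySupersol Ω H u) (hv : IsViscositySubsol Ω H v)
    (hul : LowerSemicontinuousOn u Ω) (hvu : UpperSemicontinuousOn v Ω)
    (x₀ y₀ p q e : 𝔼) (hx₀ : x₀ ∈ Ω) (hy₀ : y₀ ∈ Ω) (f ℓ Q : 𝔼 × 𝔼 → ℝ) (hJ : Jet f ℓ Q)
    (he : ‖e‖ = 1) (lam s : ℝ) (hs : 0 < s) (ht : (lam * s) ^ 2 ≤ 1 / 2)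
    (hp : p = q - (Wf q * (lam * s)) • e)
    (hℓ : ∀ h, ℓ h = ⟪p, h.1⟫ - ⟪q, h.2⟫)
    (hQ : ∀ a b, Q (a, b) ≤ Wf q / s * (‖a - b - (lam * s * ⟪e, a⟫ / Wf q) • q‖ ^ 2 +
        ⟪q, a - b - (lam * s * ⟪e, a⟫ / Wf q) • q⟫ ^ 2) - Wf q * s * lam ^ 2 * ⟪e, a⟫ ^ 2)
    (hf : ∀ᶠ h : 𝔼 × 𝔼 in 𝓝 0, v (x₀ + h.1) - u (y₀ + h.2) ≤ v x₀ - u y₀ + (f h - f 0)) :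
    Wf p * (N * H x₀) - Wf q * (N * H y₀) ≤ -(1 / 2 * Wf q * s * lam ^ 2 / Wf p ^ 2) := by
  obtain ⟨B, hB1, hB2⟩ := coupling q e p he (lam * s) ht hp
  have h1 := ts_jet Ω hΩ H u v hH hu hv hul hvu x₀ y₀ p q hx₀ hy₀ f ℓ Q hJ hℓ hf B hB1
  have hW := Wf_pos q
  have h2 : ∀ a, Q (a, B a) ≤ -(1 / 2 * Wf q * s * lam ^ 2) * ⟪e, a⟫ ^ 2 := by
    intro a
    calc Q (a, B a) ≤ _ := hQ a (B a)
      _ ≤ Wf q / s * (1 / 2 * (lam * s) ^ 2 * ⟪e, a⟫ ^ 2) - Wf q * s * lam ^ 2 * ⟪e, a⟫ ^ 2 := by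
        gcongr
        exact hB2 a
      _ = _ := by field_simp; ring
  have h3 := h1.trans (Finset.sum_le_sum fun i _ => h2 _)
  rw [← Finset.mul_sum, sum_tM_sq, he] at h3
  have hV := Wf_pos p
  have hV2 := Wf_sq p
  have hpe2 : ⟪p, e⟫ ^ 2 ≤ ‖p‖ ^ 2 := by
    have := abs_real_inner_le_norm p e
    rw [he, mul_one] at this
    rw [← sq_abs]; gcongr
  have h4 : 1 / Wf p ^ 2 ≤ 1 ^ 2 - ⟪p, e⟫ ^ 2 / Wf p ^ 2 := by
    rw [div_le_iff₀ (by positivity), sub_mul, div_mul_cancel₀ _ (by positivity)]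
    linarith
  have h5 : 0 ≤ 1 / 2 * Wf q * s * lam ^ 2 := by positivity
  calc _ ≤ _ := h3
    _ = -(1 / 2 * Wf q * s * lam ^ 2 * (1 ^ 2 - ⟪p, e⟫ ^ 2 / Wf p ^ 2)) := by ring
    _ ≤ -(1 / 2 * Wf q * s * lam ^ 2 * (1 / Wf p ^ 2)) := by gcongr
    _ = _ := by ring
end Coupling

section Cap
variable {N : ℕ}
local notation "⟪" x ", " y "⟫" => inner ℝ x y
local notation "𝔼" => EuclideanSpace ℝ (Fin N)

noncomputable def Gc (P W r s : ℝ) : ℝ :=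
  -√(s ^ 2 - (min r (P / W * s)) ^ 2) + P * (r - min r (P / W * s))

lemma Gc_small (P W r s : ℝ) (h : r ≤ P / W * s) : Gc P W r s = -√(s ^ 2 - r ^ 2) := by
  unfold Gc; rw [min_eq_left h]; ring

lemma Gc_large (P W r s : ℝ) (hW : 0 < W) (hPW : W ^ 2 = 1 + P ^ 2) (hs : 0 < s)
    (h : P / W * s ≤ r) : Gc P W r s = P * r - W * s := by
  unfold Gc; rw [min_eq_right h]
  have h1 : s ^ 2 - (P / W * s) ^ 2 = (s / W) ^ 2 := by
    field_simp; rw [hPW]; ring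
  rw [h1, Real.sqrt_sq (by positivity)]
  field_simp
  have : P ^ 2 = W ^ 2 - 1 := by linarith
  linear_combination (-s) * this

lemma line_le_cap (P W r s : ℝ) (hW : 0 < W) (hPW : W ^ 2 = 1 + P ^ 2) (hs : 0 < s)
    (h0 : 0 ≤ r) (h : r ≤ s) : P * r - W * s ≤ -√(s ^ 2 - r ^ 2) := by
  have h1 : 0 ≤ s ^ 2 - r ^ 2 := by nlinarith
  have h2 := Real.sq_sqrt h1
  set g := √(s ^ 2 - r ^ 2)
  have h3 : (P * r + g) ^ 2 ≤ (W * s) ^ 2 := by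
    have : (W * s) ^ 2 - (P * r + g) ^ 2 = (r - P * g) ^ 2 := by
      have hs2 : s ^ 2 = g ^ 2 + r ^ 2 := by linarith
      rw [mul_pow, hPW, hs2]; ring
    nlinarith [sq_nonneg (r - P * g)]
  have := (abs_le_of_sq_le_sq' h3 (by positivity)).2
  linarith

lemma zeta_lt (P W : ℝ) (hP : 0 ≤ P) (hW : 0 < W) (hPW : W ^ 2 = 1 + P ^ 2) : P / W < 1 := by
  rw [div_lt_one hW]; nlinarith

lemma line_le_Gc (P W r s : ℝ) (hP : 0 ≤ P) (hW : 0 < W) (hPW : W ^ 2 = 1 + P ^ 2) (hs : 0 < s)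
    (h0 : 0 ≤ r) : P * r - W * s ≤ Gc P W r s := by
  rcases le_total r (P / W * s) with h | h
  · rw [Gc_small _ _ _ _ h]
    refine line_le_cap P W r s hW hPW hs h0 (h.trans ?_)
    have := zeta_lt P W hP hW hPW
    nlinarith
  · rw [Gc_large _ _ _ _ hW hPW hs h]

lemma Gc_le_cap (P W r s : ℝ) (hW : 0 < W) (hPW : W ^ 2 = 1 + P ^ 2) (hs : 0 < s)
    (h0 : 0 ≤ r) (h : r ≤ s) : Gc P W r s ≤ -√(s ^ 2 - r ^ 2) := by
  rcases le_total r (P / W * s) with h' | h'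
  · rw [Gc_small _ _ _ _ h']
  · rw [Gc_large _ _ _ _ hW hPW hs h']
    exact line_le_cap P W r s hW hPW hs h0 h

noncomputable def sF (ε lam R : ℝ) (e x : 𝔼) : ℝ := ε * Real.exp (lam * (⟪e, x⟫ - R))

lemma jet_s (ε lam R : ℝ) (e x : 𝔼) : Jet (fun h : 𝔼 × 𝔼 => sF ε lam R e (x + h.1))
    (fun h => lam * sF ε lam R e x * ⟪e, h.1⟫)
    (fun h => lam ^ 2 * sF ε lam R e x * ⟪e, h.1⟫ ^ 2) := by
  have hd : ∀ (c : ℝ) (t : ℝ), HasDerivAt (fun t => c * Real.exp (lam * (t - R)))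
      (lam * c * Real.exp (lam * (t - R))) t := by
    intro c t
    refine (((((hasDerivAt_id t).sub_const R).const_mul lam).exp).const_mul c).congr_deriv ?_
    simp only [id]; ring
  refine ((jet_fst ⟪e, x⟫ e).comp (fun t => ε * Real.exp (lam * (t - R)))
    (fun t => lam * ε * Real.exp (lam * (t - R)))
    (lam * (lam * ε) * Real.exp (lam * (⟪e, x⟫ - R)))
    (Eventually.of_forall fun t => hd ε t) ?_).congr (fun h => ?_) (fun h => ?_) (fun h => ?_)
  · simpa using hd (lam * ε) ⟪e, x⟫
  · simp only [sF, inner_add_right]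
  · simp only [sF, Prod.fst_zero, inner_zero_right, add_zero]; ring
  · simp only [sF, Prod.fst_zero, inner_zero_right, add_zero]; ring

lemma jet_line (P W ε lam R : ℝ) (e x z : 𝔼) (hz : z ≠ 0) :
    Jet (fun h : 𝔼 × 𝔼 => P * ‖z + (h.1 - h.2)‖ + (-W) * sF ε lam R e (x + h.1))
    (fun h => P * (⟪z, h.1 - h.2⟫ / ‖z‖) + (-W) * (lam * sF ε lam R e x * ⟪e, h.1⟫))
    (fun h => P * ((‖h.1 - h.2‖ ^ 2 - (⟪z, h.1 - h.2⟫ / ‖z‖) ^ 2) / ‖z‖) +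
      (-W) * (lam ^ 2 * sF ε lam R e x * ⟪e, h.1⟫ ^ 2)) :=
  ((jet_norm z hz).smul P).add ((jet_s ε lam R e x).smul (-W))

lemma jet_cap (ε lam R : ℝ) (e x z : 𝔼) (s ω : ℝ) (hs : s = sF ε lam R e x) (hω : 0 < ω)
    (hω2 : ω ^ 2 = s ^ 2 - ‖z‖ ^ 2) :
    Jet (fun h : 𝔼 × 𝔼 => -√(sF ε lam R e (x + h.1) ^ 2 - ‖z + (h.1 - h.2)‖ ^ 2))
    (fun h => (⟪z, h.1 - h.2⟫ - lam * s ^ 2 * ⟪e, h.1⟫) / ω)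
    (fun h => (lam * s ^ 2 * ⟪e, h.1⟫ - ⟪z, h.1 - h.2⟫) ^ 2 / ω ^ 3 -
      (2 * lam ^ 2 * s ^ 2 * ⟪e, h.1⟫ ^ 2 - ‖h.1 - h.2‖ ^ 2) / ω) := by
  have h1 := (jet_s ε lam R e x).comp (fun t => t ^ 2) (fun t => 2 * t) 2
    (Eventually.of_forall fun t => by simpa using hasDerivAt_pow 2 t)
    (by simpa using (hasDerivAt_id (sF ε lam R e (x + (0 : 𝔼 × 𝔼).1))).const_mul 2)
  have h2 := h1.add ((jet_normsq z).smul (-1))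
  have h3 := (h2.sqrt ω hω (by
    simp only [Prod.fst_zero, Prod.snd_zero, sub_zero, add_zero]
    rw [hω2, hs]; ring)).smul (-1)
  refine h3.congr (fun h => ?_) (fun h => ?_) (fun h => ?_)
  · rw [neg_one_mul, neg_one_mul, ← sub_eq_add_neg]
  · simp only [Prod.fst_zero, add_zero, ← hs]
    field_simp; ring
  · simp only [Prod.fst_zero, add_zero, ← hs]
    field_simp; ring

lemma cap_Q (e z : 𝔼) (s ω lam W : ℝ) (hs : 0 < s) (hω : 0 < ω)
    (hω2 : ω ^ 2 = s ^ 2 - ‖z‖ ^ 2) (hW : W = s / ω) (a b : 𝔼) :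
    (lam * s ^ 2 * ⟪e, a⟫ - ⟪z, a - b⟫) ^ 2 / ω ^ 3 -
      (2 * lam ^ 2 * s ^ 2 * ⟪e, a⟫ ^ 2 - ‖a - b‖ ^ 2) / ω =
    W / s * (‖a - b - (lam * s * ⟪e, a⟫ / W) • (ω⁻¹ • z)‖ ^ 2 +
        ⟪ω⁻¹ • z, a - b - (lam * s * ⟪e, a⟫ / W) • (ω⁻¹ • z)⟫ ^ 2) -
        W * s * lam ^ 2 * ⟪e, a⟫ ^ 2 := by
  generalize a - b = c
  have h1 : (lam * s * ⟪e, a⟫ / W) • (ω⁻¹ • z) = (lam * ⟪e, a⟫) • z := by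
    rw [smul_smul, hW]; congr 1; field_simp
  rw [h1, real_inner_smul_left, norm_sub_sq_real, inner_sub_right, inner_smul_right,
    inner_smul_right, norm_smul, real_inner_self_eq_norm_sq, mul_pow, Real.norm_eq_abs, sq_abs,
    real_inner_comm z c, hW]
  have h2 : ‖z‖ ^ 2 = s ^ 2 - ω ^ 2 := by linarith
  rw [h2]
  field_simp
  ring

lemma line_Q (e z : 𝔼) (s lam P W : ℝ) (hs : 0 < s) (hz : z ≠ 0) (hP : 0 ≤ P) (hW : 0 < W)
    (hr : P / W * s ≤ ‖z‖) (a b : 𝔼) :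
    P * ((‖a - b‖ ^ 2 - (⟪z, a - b⟫ / ‖z‖) ^ 2) / ‖z‖) +
      (-W) * (lam ^ 2 * s * ⟪e, a⟫ ^ 2) ≤
    W / s * (‖a - b - (lam * s * ⟪e, a⟫ / W) • ((P / ‖z‖) • z)‖ ^ 2 +
        ⟪(P / ‖z‖) • z, a - b - (lam * s * ⟪e, a⟫ / W) • ((P / ‖z‖) • z)⟫ ^ 2) -
        W * s * lam ^ 2 * ⟪e, a⟫ ^ 2 := by
  have hr0 : 0 < ‖z‖ := norm_pos_iff.mpr hz
  generalize a - b = c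
  set k := lam * s * ⟪e, a⟫ / W * (P / ‖z‖) with hk
  rw [smul_smul, ← hk]
  set d := c - k • z with hd
  have h1 : ‖c‖ ^ 2 - (⟪z, c⟫ / ‖z‖) ^ 2 = ‖d‖ ^ 2 - (⟪z, d⟫ / ‖z‖) ^ 2 := by
    rw [hd, norm_sub_sq_real, inner_sub_right, inner_smul_right,
      inner_smul_right, norm_smul, real_inner_self_eq_norm_sq, mul_pow, Real.norm_eq_abs, sq_abs,
      real_inner_comm z c]
    field_simp
    ring
  rw [h1]
  have h2 : P / ‖z‖ ≤ W / s := by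
    rw [div_le_div_iff₀ hr0 hs]
    have : P / W * s * W ≤ ‖z‖ * W := by gcongr
    have h3 : P / W * s * W = P * s := by field_simp
    linarith
  have h3 : ‖d‖ ^ 2 - (⟪z, d⟫ / ‖z‖) ^ 2 ≤ ‖d‖ ^ 2 + ⟪(P / ‖z‖) • z, d⟫ ^ 2 := by
    have := sq_nonneg (⟪z, d⟫ / ‖z‖)
    have := sq_nonneg (⟪(P / ‖z‖) • z, d⟫)
    linarith
  have h4 : P / ‖z‖ * (‖d‖ ^ 2 - (⟪z, d⟫ / ‖z‖) ^ 2) ≤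
      W / s * (‖d‖ ^ 2 + ⟪(P / ‖z‖) • z, d⟫ ^ 2) :=
    (mul_le_mul_of_nonneg_left h3 (by positivity)).trans
      (mul_le_mul_of_nonneg_right h2 (by positivity))
  have h5 : P * ((‖d‖ ^ 2 - (⟪z, d⟫ / ‖z‖) ^ 2) / ‖z‖) =
    P / ‖z‖ * (‖d‖ ^ 2 - (⟪z, d⟫ / ‖z‖) ^ 2) := by ring
  rw [h5]
  linarith

lemma numeric (n L Hm W0 lam s r Wp Wq t Hx Hy : ℝ) (hn : 0 ≤ n) (hL : 0 ≤ L) (hHm : 0 ≤ Hm)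
    (hW0 : 1 ≤ W0) (hlam : lam = 8 * W0 ^ 2 * (n * L * W0 + n * Hm + 1) + 1) (hs : 0 < s)
    (hr : r ≤ W0 * s) (hWp : 0 < Wp) (hWq : 0 < Wq) (hWqW : Wq ≤ W0) (ht : t = lam * s)
    (ht1 : t ≤ 1) (hWpq : |Wp - Wq| ≤ Wq * t) (hHx : |Hx| ≤ Hm) (hHxy : |Hx - Hy| ≤ L * r)
    (h : Wp * (n * Hx) - Wq * (n * Hy) ≤ -(1 / 2 * Wq * s * lam ^ 2 / Wp ^ 2)) : False := by
  have hA : 0 ≤ n * L * W0 := by positivity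
  have hB : 0 ≤ n * Hm := by positivity
  have hlam1 : 1 ≤ lam := by
    rw [hlam]; have : 0 ≤ 8 * W0 ^ 2 * (n * L * W0 + n * Hm + 1) := by positivity
    linarith
  have h1 : Wp ≤ 2 * W0 := by
    have := (abs_le.mp hWpq).2
    nlinarith
  have hWt : 0 ≤ Wq * t := (abs_nonneg _).trans hWpq
  have h2 : -(Wq * t * (n * Hm)) ≤ (Wp - Wq) * (n * Hx) := by
    have : |(Wp - Wq) * (n * Hx)| ≤ Wq * t * (n * Hm) := by
      rw [abs_mul, abs_mul, abs_of_nonneg hn]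
      gcongr
    exact (abs_le.mp this).1
  have h3 : -(Wq * (n * (L * (W0 * s)))) ≤ Wq * (n * (Hx - Hy)) := by
    have h4 : -(L * (W0 * s)) ≤ Hx - Hy := by
      have := (abs_le.mp hHxy).1
      have : L * r ≤ L * (W0 * s) := by gcongr
      linarith
    rw [← mul_neg, ← mul_neg]; gcongr
  have h5 : 1 / 2 * Wq * s * lam ^ 2 / Wp ^ 2 ≤ Wq * s * (lam * (n * Hm) + n * L * W0) := by
    rw [ht] at h2
    nlinarith
  have h6 : Wq * s * (lam ^ 2 / (8 * W0 ^ 2)) ≤ 1 / 2 * Wq * s * lam ^ 2 / Wp ^ 2 := by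
    calc Wq * s * (lam ^ 2 / (8 * W0 ^ 2)) = 1 / 2 * Wq * s * lam ^ 2 / (2 * W0) ^ 2 := by
          field_simp; norm_num
      _ ≤ _ := by gcongr
  have h7 : lam ^ 2 / (8 * W0 ^ 2) ≤ lam * (n * Hm) + n * L * W0 :=
    le_of_mul_le_mul_left (h6.trans h5) (by positivity)
  rw [div_le_iff₀ (by positivity)] at h7
  have h8 : 8 * W0 ^ 2 * (n * L * W0 + n * Hm + 1) ≤ lam := by linarith
  have h9 : lam * (8 * W0 ^ 2 * (n * L * W0 + n * Hm + 1)) ≤ lam ^ 2 := by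
    rw [sq lam]; exact mul_le_mul_of_nonneg_left h8 (by linarith)
  have h10 : 0 < 8 * W0 ^ 2 := by positivity
  have h11 : (lam * (n * L * W0 + n * Hm + 1)) * (8 * W0 ^ 2) ≤
      (lam * (n * Hm) + n * L * W0) * (8 * W0 ^ 2) := by linarith
  have h12 := le_of_mul_le_mul_right h11 h10
  nlinarith
end Cap

section Final
variable {N : ℕ}
local notation "⟪" x ", " y "⟫" => inner ℝ x y
local notation "𝔼" => EuclideanSpace ℝ (Fin N)

lemma sF_pos (ε lam R : ℝ) (e x : 𝔼) (h : 0 < ε) : 0 < sF ε lam R e x := by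
  unfold sF; positivity

lemma sF_cont (ε lam R : ℝ) (e : 𝔼) : Continuous (sF ε lam R e) := by
  unfold sF; fun_prop

set_option maxHeartbeats 1000000 in
lemma step_two (Ω : Set 𝔼) (hΩo : IsOpen Ω) (hΩb : Bornology.IsBounded Ω) (H : 𝔼 → ℝ)
    (hH : ContinuousOn H Ω) (u v : 𝔼 → ℝ)
    (hul : LowerSemicontinuousOn u (closure Ω)) (hvu : UpperSemicontinuousOn v (closure Ω))
    (hu : IsViscositySupersol Ω H u) (hv : IsViscositySubsol Ω H v)
    (m : ℝ) (hm : 0 < m) (xs : 𝔼) (hxs : xs ∈ Ω) (hxm : v xs - u xs = m)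
    (ρ₀ : ℝ) (L : ℝ) (hL : 0 ≤ L) (Hm : ℝ) (hHm : 0 ≤ Hm)
    (hin : ∀ x ∈ closure Ω, ∀ y ∈ closure Ω, ‖x - y‖ ≤ ρ₀ →
        m / 2 ≤ v x - u y → x ∈ Ω ∧ y ∈ Ω ∧ |H x - H y| ≤ L * ‖x - y‖ ∧ |H x| ≤ Hm)
    (C : ℝ) (hC : 0 ≤ C) (ρ : ℝ) (hρ : 0 < ρ) (hρρ : ρ ≤ ρ₀)
    (hgrad : ∀ x ∈ closure Ω, ∀ y ∈ closure Ω, ‖x - y‖ ≤ ρ → v x - u y ≤ m + C * ‖x - y‖)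
    (e : 𝔼) (he : ‖e‖ = 1) : False := by
  set P : ℝ := C + 1 with hP
  have hP0 : 0 ≤ P := by linarith
  set W : ℝ := √(1 + P ^ 2) with hW
  have hPW : W ^ 2 = 1 + P ^ 2 := Real.sq_sqrt (by positivity)
  have hW1 : 1 ≤ W := by rw [hW, Real.one_le_sqrt]; nlinarith
  have hW0 : 0 < W := by linarith
  obtain ⟨lam, hlam⟩ : ∃ lam : ℝ, lam = 8 * W ^ 2 * (N * L * W + N * Hm + 1) + 1 := ⟨_, rfl⟩
  have hlam1 : 1 ≤ lam := by
    rw [hlam]; have : 0 ≤ 8 * W ^ 2 * (N * L * W + N * Hm + 1) := by positivity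
    linarith
  obtain ⟨R, hR⟩ : ∃ R, ∀ x ∈ closure Ω, ‖x‖ ≤ R := hΩb.closure.exists_norm_le
  obtain ⟨ε, hε0, hε1, hε2, hε3⟩ : ∃ ε : ℝ, 0 < ε ∧ lam * ε ≤ 1 / 2 ∧ W * ε < ρ ∧ W * ε < m / 2 := by
    refine ⟨min (1 / (2 * lam)) (min (ρ / (2 * W)) (m / (4 * W))), ?_, ?_, ?_, ?_⟩
    · refine lt_min (by positivity) (lt_min (by positivity) (by positivity))
    · calc _ ≤ lam * (1 / (2 * lam)) := by gcongr; exact min_le_left _ _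
        _ = 1 / 2 := by field_simp
    · calc _ ≤ W * (ρ / (2 * W)) := by
            gcongr; exact (min_le_right _ _).trans (min_le_left _ _)
        _ = ρ / 2 := by field_simp
        _ < ρ := by linarith
    · calc _ ≤ W * (m / (4 * W)) := by
            gcongr; exact (min_le_right _ _).trans (min_le_right _ _)
        _ = m / 4 := by field_simp
        _ < m / 2 := by linarith
  have hsε : ∀ x ∈ closure Ω, sF ε lam R e x ≤ ε := by
    intro x hx
    have h1 : ⟪e, x⟫ ≤ R := by
      have := real_inner_le_norm e x
      rw [he, one_mul] at this
      exact this.trans (hR x hx)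
    have h2 : Real.exp (lam * (⟪e, x⟫ - R)) ≤ 1 := by
      rw [Real.exp_le_one_iff]
      exact mul_nonpos_of_nonneg_of_nonpos (by linarith) (by linarith)
    unfold sF; nlinarith
  set Φ : 𝔼 × 𝔼 → ℝ := fun z => Gc P W ‖z.1 - z.2‖ (sF ε lam R e z.1) with hΦ
  have hΦc : Continuous Φ := by
    have h1 : Continuous fun z : 𝔼 × 𝔼 => sF ε lam R e z.1 := (sF_cont ε lam R e).comp continuous_fst
    simp only [hΦ, Gc]
    fun_prop
  obtain ⟨x, hx, y, hy, hxy, hmax⟩ := pair_max (closure Ω) hΩb.isCompact_closure u v hul hvu ρ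
    hρ.le xs (subset_closure hxs) Φ hΦc
  set s := sF ε lam R e x with hs
  have hs0 : 0 < s := sF_pos _ _ _ _ _ hε0
  have hsε' : s ≤ ε := hsε x hx
  set z := x - y with hz
  have hval : m < v x - u y - Φ (x, y) := by
    have h1 := hmax xs (subset_closure hxs) xs (subset_closure hxs) (by simpa using hρ.le)
    have h2 : Φ (xs, xs) = - sF ε lam R e xs := by
      have hp := sF_pos ε lam R e xs hε0
      simp only [hΦ, sub_self, norm_zero]
      rw [Gc_small _ _ _ _ (by positivity)]
      congr 1
      rw [zero_pow two_ne_zero, sub_zero, Real.sqrt_sq hp.le]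
    have hp := sF_pos ε lam R e xs hε0
    linarith
  have hlow : P * ‖z‖ - W * s ≤ Φ (x, y) := line_le_Gc P W _ _ hP0 hW0 hPW hs0 (norm_nonneg _)
  have hr : ‖z‖ ≤ W * s := by
    have h1 := hgrad x hx y hy hxy
    have : (C + 1) * ‖z‖ = C * ‖z‖ + ‖z‖ := by ring
    rw [hP] at hlow
    linarith
  have hWs : W * s ≤ W * ε := by gcongr
  have hrρ : ‖x - y‖ < ρ := by
    have : ‖z‖ = ‖x - y‖ := rfl
    linarith
  obtain ⟨hxΩ, hyΩ, hHxy, hHx⟩ := hin x hx y hy (hxy.trans hρρ) (by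
    have : 0 ≤ P * ‖z‖ := by positivity
    linarith)
  have hls : lam * s ≤ 1 / 2 := (mul_le_mul_of_nonneg_left hsε' (by linarith)).trans hε1
  have hls0 : 0 ≤ lam * s := by positivity
  have hls2 : (lam * s) ^ 2 ≤ 1 / 2 := by nlinarith
  have hzh : ∀ h : 𝔼 × 𝔼, x + h.1 - (y + h.2) = z + (h.1 - h.2) := by
    intro h; rw [hz]; abel
  have ts : Tendsto (fun h : 𝔼 × 𝔼 => sF ε lam R e (x + h.1)) (𝓝 0) (𝓝 s) := by
    have : Continuous fun h : 𝔼 × 𝔼 => sF ε lam R e (x + h.1) :=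
      (sF_cont ε lam R e).comp (by fun_prop)
    simpa using this.tendsto 0
  have tz : Tendsto (fun h : 𝔼 × 𝔼 => ‖z + (h.1 - h.2)‖) (𝓝 0) (𝓝 ‖z‖) := by
    have : Continuous fun h : 𝔼 × 𝔼 => ‖z + (h.1 - h.2)‖ := by fun_prop
    simpa using this.tendsto 0
  have fin : ∀ (q : 𝔼) (f ℓ Q : 𝔼 × 𝔼 → ℝ), Jet f ℓ Q → Wf q ≤ W →
      (∀ h, ℓ h = ⟪q - (Wf q * (lam * s)) • e, h.1⟫ - ⟪q, h.2⟫) →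
      (∀ a b, Q (a, b) ≤ Wf q / s * (‖a - b - (lam * s * ⟪e, a⟫ / Wf q) • q‖ ^ 2 +
        ⟪q, a - b - (lam * s * ⟪e, a⟫ / Wf q) • q⟫ ^ 2) - Wf q * s * lam ^ 2 * ⟪e, a⟫ ^ 2) →
      (∀ᶠ h : 𝔼 × 𝔼 in 𝓝 0, Φ (x + h.1, y + h.2) ≤ f h) → Φ (x, y) = f 0 → False := by
    intro q f ℓ Q hJ hqW hℓ hQ hf hf0
    have h1 := core_ineq Ω hΩo H u v hH hu hv (hul.mono subset_closure) (hvu.mono subset_closure)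
      x y _ q e hxΩ hyΩ f ℓ Q hJ he lam s hs0 hls2 rfl hℓ hQ
      (local_from_max Ω hΩo u v ρ x y hxΩ hyΩ hrρ Φ f hmax hf hf0)
    refine numeric N L Hm W lam s ‖z‖ _ (Wf q) (lam * s) (H x) (H y) (by positivity) hL hHm hW1
      hlam hs0 hr (Wf_pos _) (Wf_pos q) hqW rfl (by linarith) ?_ hHx hHxy h1
    refine (Wf_lip _ _).trans (le_of_eq ?_)
    rw [sub_sub_cancel_left, norm_neg, norm_smul, he, mul_one, Real.norm_eq_abs, abs_of_nonneg]
    have := Wf_pos q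
    positivity
  rcases le_or_gt ‖z‖ (P / W * s) with hcase | hcase
  · have hzs : ‖z‖ < s := by
      have := zeta_lt P W hP0 hW0 hPW
      nlinarith
    have hpos : 0 < s ^ 2 - ‖z‖ ^ 2 := by
      have := norm_nonneg z
      nlinarith
    set ω := √(s ^ 2 - ‖z‖ ^ 2) with hω
    have hω0 : 0 < ω := Real.sqrt_pos.mpr hpos
    have hω2 : ω ^ 2 = s ^ 2 - ‖z‖ ^ 2 := Real.sq_sqrt hpos.le
    have hWq : Wf (ω⁻¹ • z) = s / ω := by
      have h1 := Wf_sq (ω⁻¹ • z)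
      have h2 := Wf_pos (ω⁻¹ • z)
      have h3 : Wf (ω⁻¹ • z) ^ 2 = (s / ω) ^ 2 := by
        rw [h1, norm_smul, norm_inv, Real.norm_eq_abs, abs_of_pos hω0]
        field_simp
        linarith
      exact (sq_eq_sq₀ h2.le (by positivity)).mp h3
    refine fin (ω⁻¹ • z) _ _ _ (jet_cap ε lam R e x z s ω hs hω0 hω2) ?_ ?_ ?_ ?_ ?_
    · rw [hWq, div_le_iff₀ hω0]
      have h1 : ‖z‖ ^ 2 ≤ (P / W * s) ^ 2 := by gcongr
      have h2 : s ^ 2 ≤ (W * ω) ^ 2 := by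
        have h3 : W ^ 2 * (P / W * s) ^ 2 = P ^ 2 * s ^ 2 := by field_simp
        have h4 : W ^ 2 * ‖z‖ ^ 2 ≤ W ^ 2 * (P / W * s) ^ 2 := by gcongr
        rw [mul_pow, hω2, mul_sub]
        rw [h3] at h4
        have h5 : W ^ 2 * s ^ 2 = s ^ 2 + P ^ 2 * s ^ 2 := by rw [hPW]; ring
        linarith
      exact (abs_le_of_sq_le_sq' h2 (by positivity)).2
    · intro h
      rw [hWq, inner_sub_left (ω⁻¹ • z), real_inner_smul_left, real_inner_smul_left, real_inner_smul_left,
        inner_sub_right z]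
      field_simp
      ring
    · intro a b
      exact (cap_Q e z s ω lam _ hs0 hω0 hω2 hWq a b).le
    · filter_upwards [tz.eventually_lt ts hzs] with h hh
      simp only [hΦ]
      rw [hzh]
      exact Gc_le_cap P W _ _ hW0 hPW (sF_pos _ _ _ _ _ hε0) (norm_nonneg _) hh.le
    · simp only [hΦ, Prod.fst_zero, Prod.snd_zero, sub_zero, add_zero]
      exact Gc_small _ _ _ _ hcase
  · have hz0 : z ≠ 0 := by
      intro h0
      rw [h0, norm_zero] at hcase
      have : 0 ≤ P / W * s := by positivity
      linarith
    have hr0 : 0 < ‖z‖ := norm_pos_iff.mpr hz0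
    have hWq : Wf ((P / ‖z‖) • z) = W := by
      have h1 := Wf_sq ((P / ‖z‖) • z)
      have h2 := Wf_pos ((P / ‖z‖) • z)
      have h3 : Wf ((P / ‖z‖) • z) ^ 2 = W ^ 2 := by
        rw [h1, norm_smul, Real.norm_eq_abs, abs_of_nonneg (by positivity), hPW]
        field_simp
      exact (sq_eq_sq₀ h2.le hW0.le).mp h3
    refine fin ((P / ‖z‖) • z) _ _ _ (jet_line P W ε lam R e x z hz0) hWq.le ?_ ?_ ?_ ?_
    · intro h
      rw [hWq, inner_sub_left ((P / ‖z‖) • z), real_inner_smul_left, real_inner_smul_left, real_inner_smul_left,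
        inner_sub_right z, ← hs]
      ring
    · intro a b
      rw [hWq]
      exact line_Q e z s lam P W hs0 hz0 hP0 hW0 hcase.le a b
    · filter_upwards [(ts.const_mul (P / W)).eventually_lt tz hcase] with h hh
      simp only [hΦ]
      rw [hzh, Gc_large P W _ _ hW0 hPW (sF_pos _ _ _ _ _ hε0) hh.le]
      linarith
    · simp only [hΦ, Prod.fst_zero, Prod.snd_zero, sub_zero, add_zero]
      rw [Gc_large P W _ _ hW0 hPW hs0 hcase.le]
      ring
end Final

/-- **Weak comparison principle** for semicontinuous viscosity super- and
subsolutions of `M = N H` on a bounded domain. -/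
theorem weak_comparison_principle {N : ℕ} (hN : 2 ≤ N)
    (Ω : Set (EuclideanSpace ℝ (Fin N))) (hΩo : IsOpen Ω) (hΩc : IsConnected Ω)
    (hΩb : Bornology.IsBounded Ω)
    (H : EuclideanSpace ℝ (Fin N) → ℝ) (hH : LocLipschitzOn Ω H)
    (u v : EuclideanSpace ℝ (Fin N) → ℝ)
    (hu_lsc : LowerSemicontinuousOn u (closure Ω)) (hu : IsViscositySupersol Ω H u)
    (hv_usc : UpperSemicontinuousOn v (closure Ω)) (hv : IsViscositySubsol Ω H v)
    (hbdry : ∀ x ∈ frontier Ω, v x ≤ u x) :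
    ∀ x ∈ Ω, v x ≤ u x := by
  intro x₁ hx₁
  by_contra hcon
  push Not at hcon
  obtain ⟨m, hm, xs, hxs, hxm, hmx, ⟨M, hM⟩, ρ₀, hρ₀, L, hL, Hm, hHm, hin⟩ :=
    setup Ω hΩo hΩb H hH u v hu_lsc hv_usc hbdry x₁ hx₁ hcon
  obtain ⟨C, hC, ρ, hρ, hρρ, hgrad⟩ := grad_bound Ω hΩo hΩb H hH.contOn u v hu_lsc hv_usc hu hv
    m hm xs hxs hxm hmx M hM ρ₀ hρ₀ L hL (fun x hx y hy h h' =>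
      ⟨(hin x hx y hy h h').1, (hin x hx y hy h h').2.1, (hin x hx y hy h h').2.2.1⟩)
  exact step_two Ω hΩo hΩb H hH.contOn u v hu_lsc hv_usc hu hv m hm xs hxs hxm ρ₀ L hL Hm hHm hin
    C hC ρ hρ hρρ hgrad (EuclideanSpace.basisFun (Fin N) ℝ ⟨0, by omega⟩) (by simp)
end

section
/- Truncation preserves viscosity supersolutions: Let Ω be a domain in ℝ^N with N ≥ 2, let H : Ω → ℝ be locally Lipschitz continuous, let u be a lower semicontinuous viscosity supersolution of M(u) = NH in Ω, let x₀ ∈ Ω and R > 0 with cl(B(x₀,R)) ⊂ Ω and H ≥ −1/R on cl(B(x₀,R)), and let K ∈ ℝ. Then the function u_R(x) := min{ u(x), K + √(R² − |x−x₀|²) } is lower semicontinuous on cl(B(x₀,R)) and is a viscosity supersolution of M(u_R) = NH in B(x₀,R). -/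
open Metric Set Filter Topology MeasureTheory

theorem mcOp_congr {N : ℕ} {f g : EuclideanSpace ℝ (Fin N) → ℝ} {x : EuclideanSpace ℝ (Fin N)}
    (h : f =ᶠ[𝓝 x] g) : mcOp f x = mcOp g x := by
  unfold mcOp
  refine Finset.sum_congr rfl fun i _ => ?_
  have : (fun y => (Real.sqrt (1 + ‖gradient f y‖ ^ 2))⁻¹ * gradient f y i) =ᶠ[𝓝 x]
      (fun y => (Real.sqrt (1 + ‖gradient g y‖ ^ 2))⁻¹ * gradient g y i) := by
    filter_upwards [h.gradient] with y hy
    rw [hy]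
  rw [this.fderiv_eq]

theorem mcOp_formula {N : ℕ} {w : EuclideanSpace ℝ (Fin N) → ℝ} {x : EuclideanSpace ℝ (Fin N)}
    {G : EuclideanSpace ℝ (Fin N) →L[ℝ] EuclideanSpace ℝ (Fin N)}
    (hG : HasFDerivAt (gradient w) G x) {p : EuclideanSpace ℝ (Fin N)} (hp : gradient w x = p)
    {W : ℝ} (hW : W = Real.sqrt (1 + ‖p‖ ^ 2)) :
    mcOp w x = W⁻¹ * (∑ i, (G (EuclideanSpace.single i 1)) i)
      - W⁻¹ ^ 3 * inner ℝ p (G p) := by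
  have hpos : 0 < 1 + ‖p‖ ^ 2 := by positivity
  have hWpos : 0 < W := by rw [hW]; exact Real.sqrt_pos.2 hpos
  have key : ∀ i, fderiv ℝ (fun y => (Real.sqrt (1 + ‖gradient w y‖ ^ 2))⁻¹ * gradient w y i) x
      (EuclideanSpace.single i 1) = W⁻¹ * (G (EuclideanSpace.single i 1)) i
        - W⁻¹ ^ 3 * (inner ℝ p (G (p i • EuclideanSpace.single i 1))) := by
    intro i
    have h1 : HasFDerivAt (fun y => 1 + ‖gradient w y‖ ^ 2) _ x := (hG.norm_sq).const_add 1
    have h2 := h1.sqrt (by rw [hp]; exact hpos.ne')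
    have h3 := (hasDerivAt_inv (x := W) hWpos.ne').comp_hasFDerivAt_of_eq x h2 (by rw [hp, hW])
    have h4 : HasFDerivAt (fun y => gradient w y i) _ x :=
      (EuclideanSpace.proj (𝕜 := ℝ) i).hasFDerivAt.comp x hG
    have h5 := h3.mul h4
    have h6 := h5.fderiv
    simp only [Function.comp_def] at h6
    change fderiv ℝ (fun y => (Real.sqrt (1 + ‖gradient w y‖ ^ 2))⁻¹ * gradient w y i) x = _ at h6
    rw [h6]
    simp [hp, ← hW, inner_smul_right]
    field_simp
    try ring
  unfold mcOp
  rw [Finset.sum_congr rfl fun i _ => key i, Finset.sum_sub_distrib, ← Finset.mul_sum,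
    ← Finset.mul_sum, ← inner_sum, ← map_sum]
  congr 4
  have := (EuclideanSpace.basisFun (Fin N) ℝ).sum_repr p
  simpa using this

theorem trace_ineq {N : ℕ} (G : EuclideanSpace ℝ (Fin N) →L[ℝ] EuclideanSpace ℝ (Fin N))
    (hG : ∀ v, 0 ≤ inner ℝ v (G v)) (p : EuclideanSpace ℝ (Fin N))
    {W : ℝ} (hW : W = Real.sqrt (1 + ‖p‖ ^ 2)) :
    0 ≤ W⁻¹ * (∑ i, (G (EuclideanSpace.single i 1)) i) - W⁻¹ ^ 3 * inner ℝ p (G p) := by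
  have hpos : 0 < 1 + ‖p‖ ^ 2 := by positivity
  have hWpos : 0 < W := by rw [hW]; exact Real.sqrt_pos.2 hpos
  have hW2 : W ^ 2 = 1 + ‖p‖ ^ 2 := by rw [hW, Real.sq_sqrt hpos.le]
  set c : ℝ := 1 / (W * (W + 1)) with hc
  have hs : ∀ i : Fin N, inner ℝ (EuclideanSpace.single i 1 - (c * p i) • p)
      (G (EuclideanSpace.single i 1 - (c * p i) • p)) =
      (G (EuclideanSpace.single i 1)) i - c * inner ℝ p (G (p i • EuclideanSpace.single i 1))
        - c * (p i * (G p) i) + c ^ 2 * inner ℝ p (G p) * (p i) ^ 2 := by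
    intro i
    simp [inner_sub_left, inner_sub_right, inner_smul_left, inner_smul_right,
      EuclideanSpace.inner_single_left]
    ring
  have hsum : 0 ≤ ∑ i : Fin N, inner ℝ (EuclideanSpace.single i 1 - (c * p i) • p)
      (G (EuclideanSpace.single i 1 - (c * p i) • p)) := Finset.sum_nonneg fun i _ => hG _
  have e1 : ∑ i, p i • (EuclideanSpace.single i 1 : EuclideanSpace ℝ (Fin N)) = p := by
    simpa using (EuclideanSpace.basisFun (Fin N) ℝ).sum_repr p
  have e2 : ∑ i, p i * (G p) i = inner ℝ p (G p) := by
    simp [PiLp.inner_apply, mul_comm]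
  have e3 : ∑ i, (p i) ^ 2 = ‖p‖ ^ 2 := by
    simp [EuclideanSpace.norm_sq_eq]
  rw [Finset.sum_congr rfl fun i _ => hs i, Finset.sum_add_distrib, Finset.sum_sub_distrib,
    Finset.sum_sub_distrib, ← Finset.mul_sum, ← Finset.mul_sum, ← Finset.mul_sum, ← inner_sum,
    ← map_sum, e1, e2, e3] at hsum
  have e4 : 2 * c - c ^ 2 * ‖p‖ ^ 2 = W⁻¹ ^ 2 := by
    have : ‖p‖ ^ 2 = W ^ 2 - 1 := by linarith
    rw [this, hc]
    field_simp
    ring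
  have e5 : 0 ≤ (∑ i, (G (EuclideanSpace.single i 1)) i) - W⁻¹ ^ 2 * inner ℝ p (G p) := by
    rw [← e4]; linarith
  have := mul_nonneg (inv_pos.2 hWpos).le e5
  linarith

theorem second_deriv_nonneg {f g : ℝ → ℝ} {a : ℝ} (hf : ∀ᶠ t in 𝓝 0, HasDerivAt f (g t) t)
    (hg : HasDerivAt g a 0) (hmin : IsLocalMin f 0) : 0 ≤ a := by
  by_contra! ha
  have hd : deriv f =ᶠ[𝓝 0] g := by
    filter_upwards [hf] with t ht using ht.deriv
  have hdd : deriv (deriv f) 0 = a := by rw [hd.deriv_eq, hg.deriv]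
  have hmax := isLocalMax_of_deriv_deriv_neg (by rw [hdd]; exact ha) hmin.deriv_eq_zero
    hf.self_of_nhds.continuousAt
  have hconst : f =ᶠ[𝓝 0] fun _ => f 0 := by
    filter_upwards [hmin, hmax] with t h1 h2 using le_antisymm h2 h1
  have h0 : deriv f =ᶠ[𝓝 0] fun _ => 0 := by
    simpa using hconst.deriv
  have := h0.deriv_eq
  rw [hdd] at this
  simp at this
  linarith

theorem gradient_diff {N : ℕ} {w : EuclideanSpace ℝ (Fin N) → ℝ} {x : EuclideanSpace ℝ (Fin N)}
    (hw : ContDiffAt ℝ 2 w x) : DifferentiableAt ℝ (gradient w) x := by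
  have h1 : DifferentiableAt ℝ (fderiv ℝ w) x :=
    (hw.fderiv_right (m := 1) (by norm_num)).differentiableAt (by norm_num)
  exact ((InnerProductSpace.toDual ℝ (EuclideanSpace ℝ (Fin N))).symm.toContinuousLinearEquiv
    : _ ≃L[ℝ] _).differentiableAt.comp x h1

theorem mcOp_le_of_isLocalMin {N : ℕ} {h φ : EuclideanSpace ℝ (Fin N) → ℝ}
    {x : EuclideanSpace ℝ (Fin N)} (hh : ContDiffAt ℝ 2 h x) (hφ : ContDiffAt ℝ 2 φ x)
    (hmin : IsLocalMin (fun y => h y - φ y) x) : mcOp φ x ≤ mcOp h x := by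
  have hGh := (gradient_diff hh).hasFDerivAt
  have hGφ := (gradient_diff hφ).hasFDerivAt
  set A := fderiv ℝ (gradient h) x
  set B := fderiv ℝ (gradient φ) x
  have dh : ∀ᶠ y in 𝓝 x, DifferentiableAt ℝ h y :=
    (hh.eventually (by simp)).mono fun y hy => hy.differentiableAt (by norm_num)
  have dφ : ∀ᶠ y in 𝓝 x, DifferentiableAt ℝ φ y :=
    (hφ.eventually (by simp)).mono fun y hy => hy.differentiableAt (by norm_num)
  have heq : gradient φ x = gradient h x := by
    have h0 := hmin.fderiv_eq_zero
    rw [fderiv_fun_sub dh.self_of_nhds dφ.self_of_nhds, sub_eq_zero] at h0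
    simp [gradient, h0]
  have hpos : ∀ v, 0 ≤ inner ℝ v ((A - B) v) := by
    intro v
    have hl : ∀ t : ℝ, HasDerivAt (fun t : ℝ => x + t • v) v t := fun t => by
      simpa using ((hasDerivAt_id t).smul_const v).const_add x
    have hcont : Tendsto (fun t : ℝ => x + t • v) (𝓝 0) (𝓝 x) := by
      simpa using (hl 0).continuousAt.tendsto
    refine second_deriv_nonneg (f := fun t => h (x + t • v) - φ (x + t • v))
      (g := fun t => inner ℝ v (gradient h (x + t • v) - gradient φ (x + t • v))) ?_ ?_ ?_
    · filter_upwards [hcont.eventually dh, hcont.eventually dφ] with t h1 h2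
      have h3 := (h1.hasFDerivAt.comp_hasDerivAt t (hl t)).sub
        (h2.hasFDerivAt.comp_hasDerivAt t (hl t))
      refine HasDerivAt.congr_deriv h3 ?_
      simp [inner_sub_right, inner_gradient_right]
    · have h3 := (hGh.comp_hasDerivAt_of_eq (0:ℝ) (hl 0) (by simp)).sub
        (hGφ.comp_hasDerivAt_of_eq (0:ℝ) (hl 0) (by simp))
      exact (innerSL ℝ v).hasFDerivAt.comp_hasDerivAt (0:ℝ) h3
    · have := hcont.eventually hmin
      simpa [IsLocalMin, IsMinFilter] using this
  have := trace_ineq (A - B) hpos (gradient h x) rfl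
  rw [mcOp_formula hGh rfl rfl, mcOp_formula hGφ heq rfl]
  simp [inner_sub_right, Finset.sum_sub_distrib] at this ⊢
  linarith

theorem hemi_contDiffAt {N : ℕ} {x₀ x : EuclideanSpace ℝ (Fin N)} {R : ℝ} (K : ℝ)
    (hx : x ∈ ball x₀ R) :
    ContDiffAt ℝ 2 (fun x => K + Real.sqrt (R ^ 2 - ‖x - x₀‖ ^ 2)) x := by
  have h0 : 0 < R ^ 2 - ‖x - x₀‖ ^ 2 := by
    rw [mem_ball, dist_eq_norm] at hx
    nlinarith [norm_nonneg (x - x₀)]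
  have h1 : ContDiffAt ℝ 2 (fun x => R ^ 2 - ‖x - x₀‖ ^ 2) x :=
    contDiffAt_const.sub ((contDiffAt_id.sub contDiffAt_const).norm_sq ℝ)
  exact contDiffAt_const.add (h1.sqrt h0.ne')

theorem hemi_grad {N : ℕ} {x₀ x : EuclideanSpace ℝ (Fin N)} {R : ℝ} (K : ℝ)
    (hx : x ∈ ball x₀ R) :
    gradient (fun x => K + Real.sqrt (R ^ 2 - ‖x - x₀‖ ^ 2)) x
      = -(Real.sqrt (R ^ 2 - ‖x - x₀‖ ^ 2))⁻¹ • (x - x₀) := by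
  have h0 : 0 < R ^ 2 - ‖x - x₀‖ ^ 2 := by
    rw [mem_ball, dist_eq_norm] at hx
    nlinarith [norm_nonneg (x - x₀)]
  have h1 : HasFDerivAt (fun x => R ^ 2 - ‖x - x₀‖ ^ 2) _ x :=
    (((hasFDerivAt_id x).sub_const x₀).norm_sq).const_sub (R ^ 2)
  have h2 := (h1.sqrt h0.ne').const_add K
  apply HasGradientAt.gradient
  rw [hasGradientAt_iff_hasFDerivAt]
  refine HasFDerivAt.congr_fderiv h2 ?_
  ext v
  have := Real.sqrt_pos.2 h0
  simp [inner_smul_left]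
  field_simp

theorem hemi_mcOp {N : ℕ} {x₀ x : EuclideanSpace ℝ (Fin N)} {R : ℝ} (hR : 0 < R) (K : ℝ)
    (hx : x ∈ ball x₀ R) :
    mcOp (fun x => K + Real.sqrt (R ^ 2 - ‖x - x₀‖ ^ 2)) x = N * (-(1 / R)) := by
  unfold mcOp
  have key : ∀ i : Fin N, fderiv ℝ (fun y => (Real.sqrt (1 + ‖gradient
      (fun x => K + Real.sqrt (R ^ 2 - ‖x - x₀‖ ^ 2)) y‖ ^ 2))⁻¹ * gradient
      (fun x => K + Real.sqrt (R ^ 2 - ‖x - x₀‖ ^ 2)) y i) x (EuclideanSpace.single i 1)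
      = -(1 / R) := by
    intro i
    have he : (fun y => (Real.sqrt (1 + ‖gradient
      (fun x => K + Real.sqrt (R ^ 2 - ‖x - x₀‖ ^ 2)) y‖ ^ 2))⁻¹ * gradient
      (fun x => K + Real.sqrt (R ^ 2 - ‖x - x₀‖ ^ 2)) y i) =ᶠ[𝓝 x]
      fun y => (-(1 / R)) * (y i - x₀ i) := by
      filter_upwards [isOpen_ball.mem_nhds hx] with y hy
      rw [hemi_grad K hy]
      have h0 : 0 < R ^ 2 - ‖y - x₀‖ ^ 2 := by
        rw [mem_ball, dist_eq_norm] at hy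
        nlinarith [norm_nonneg (y - x₀)]
      have hs := Real.sqrt_pos.2 h0
      have hs2 := Real.sq_sqrt h0.le
      set s := Real.sqrt (R ^ 2 - ‖y - x₀‖ ^ 2)
      have : 1 + ‖-s⁻¹ • (y - x₀)‖ ^ 2 = (R / s) ^ 2 := by
        rw [norm_smul, mul_pow, norm_neg, norm_inv, Real.norm_of_nonneg hs.le]
        field_simp
        linarith
      rw [this, Real.sqrt_sq (by positivity)]
      simp
      field_simp
    rw [he.fderiv_eq]
    have h4 : HasFDerivAt (fun y : EuclideanSpace ℝ (Fin N) => (-(1 / R)) * (y i - x₀ i)) _ x :=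
      (((EuclideanSpace.proj (𝕜 := ℝ) i).hasFDerivAt (x := x)).sub_const (x₀ i)).const_mul (-(1 / R))
    rw [h4.fderiv]
    simp
  rw [Finset.sum_congr rfl fun i _ => key i]
  simp

theorem exists_extension {N : ℕ} {x₀ x : EuclideanSpace ℝ (Fin N)} {R : ℝ}
    (hx : x ∈ ball x₀ R) {φ : EuclideanSpace ℝ (Fin N) → ℝ} (hφ : ContDiffOn ℝ 2 φ (ball x₀ R)) :
    ∃ ψ : EuclideanSpace ℝ (Fin N) → ℝ, ContDiff ℝ 2 ψ ∧ ψ =ᶠ[𝓝 x] φ := by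
  obtain ⟨r, hr, hsub⟩ := Metric.nhds_basis_closedBall.mem_iff.1 (isOpen_ball.mem_nhds hx)
  let χ : ContDiffBump x := ⟨r / 2, r, by linarith, by linarith⟩
  refine ⟨fun y => χ y * φ y, ?_, ?_⟩
  · rw [contDiff_iff_contDiffAt]
    intro y
    by_cases hy : y ∈ ball x₀ R
    · exact χ.contDiffAt.mul (hφ.contDiffAt (isOpen_ball.mem_nhds hy))
    · have hy' : y ∈ (closedBall x r)ᶜ := fun h => hy (hsub h)
      have : (fun y => χ y * φ y) =ᶠ[𝓝 y] fun _ => 0 := by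
        filter_upwards [isClosed_closedBall.isOpen_compl.mem_nhds hy'] with z hz
        have : r < dist z x := by simpa using hz
        rw [χ.zero_of_le_dist this.le, zero_mul]
      exact contDiffAt_const.congr_of_eventuallyEq this
  · filter_upwards [χ.eventuallyEq_one] with y hy
    simp [hy]

/-- **Truncation preserves viscosity supersolutions**: truncating a viscosity
supersolution from above by the upper hemisphere `K + √(R² − |x−x₀|²)` yields a
lower semicontinuous viscosity supersolution on the ball, provided `H ≥ −1/R`. -/
theorem truncation_supersolution {N : ℕ} (hN : 2 ≤ N)
    (Ω : Set (EuclideanSpace ℝ (Fin N))) (hΩo : IsOpen Ω) (hΩc : IsConnected Ω)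
    (H : EuclideanSpace ℝ (Fin N) → ℝ) (hH : LocLipschitzOn Ω H)
    (u : EuclideanSpace ℝ (Fin N) → ℝ)
    (hu_lsc : LowerSemicontinuousOn u Ω) (hu : IsViscositySupersol Ω H u)
    (x₀ : EuclideanSpace ℝ (Fin N)) (hx₀ : x₀ ∈ Ω)
    (R : ℝ) (hR : 0 < R) (hball : closedBall x₀ R ⊆ Ω)
    (hHR : ∀ x ∈ closedBall x₀ R, -(1 / R) ≤ H x) (K : ℝ) :
    LowerSemicontinuousOn
      (fun x => min (u x) (K + Real.sqrt (R ^ 2 - ‖x - x₀‖ ^ 2))) (closedBall x₀ R) ∧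
    IsViscositySupersol (ball x₀ R) H
      (fun x => min (u x) (K + Real.sqrt (R ^ 2 - ‖x - x₀‖ ^ 2))) := by
  constructor
  · refine LowerSemicontinuousOn.inf (hu_lsc.mono hball) ?_
    apply ContinuousOn.lowerSemicontinuousOn
    fun_prop
  · intro φ hφ x hx hmin
    have hnhds := isOpen_ball.mem_nhds hx
    have hmin' : IsLocalMin
        (fun y => min (u y) (K + Real.sqrt (R ^ 2 - ‖y - x₀‖ ^ 2)) - φ y) x :=
      hmin.isLocalMin hnhds
    have hxc := ball_subset_closedBall hx
    rcases le_total (u x) (K + Real.sqrt (R ^ 2 - ‖x - x₀‖ ^ 2)) with hle | hle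
    · obtain ⟨ψ, hψ, hψφ⟩ := exists_extension hx hφ
      rw [← mcOp_congr hψφ]
      refine hu ψ hψ.contDiffOn x (hball hxc) (IsLocalMin.on ?_ _)
      filter_upwards [hmin', hψφ] with y h1 h2
      simp only [min_eq_left hle] at h1
      rw [hψφ.self_of_nhds, h2]
      linarith [min_le_left (u y) (K + Real.sqrt (R ^ 2 - ‖y - x₀‖ ^ 2))]
    · have h1 : mcOp φ x ≤ _ := mcOp_le_of_isLocalMin (hemi_contDiffAt K hx)
        (hφ.contDiffAt hnhds) (by
          filter_upwards [hmin'] with y h1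
          simp only [min_eq_right hle] at h1
          linarith [min_le_right (u y) (K + Real.sqrt (R ^ 2 - ‖y - x₀‖ ^ 2))])
      rw [hemi_mcOp hR K hx] at h1
      exact h1.trans (mul_le_mul_of_nonneg_left (hHR x hxc) (Nat.cast_nonneg N))
end

section
/- Strict comparison with a classical supersolution of the perturbed equation: Let N ≥ 2, let D be a bounded domain in ℝ^N, let Ω be an open set containing cl(D), and let H : Ω → ℝ be locally Lipschitz continuous. Let u : cl(D) → ℝ be lower semicontinuous on cl(D) and a viscosity supersolution of M(u) = NH in D, let δ > 0, and let w̃ ∈ C²(D) ∩ C(cl(D)) satisfy M(w̃) = N(H + δ) pointwise in D. If u > w̃ on ∂D, then u ≥ w̃ on cl(D). -/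
open Metric Set Filter Topology MeasureTheory

/-- **Strict comparison with a classical supersolution of the perturbed equation**:
a viscosity supersolution of `M(u) = N H` dominates any classical solution of the
perturbed equation `M(w̃) = N (H + δ)`, `δ > 0`, that it strictly dominates on the
boundary. -/
theorem strict_comparison_perturbed {N : ℕ} (hN : 2 ≤ N)
    (D : Set (EuclideanSpace ℝ (Fin N))) (hDo : IsOpen D) (hDc : IsConnected D)
    (hDb : Bornology.IsBounded D)
    (Ω : Set (EuclideanSpace ℝ (Fin N))) (hΩo : IsOpen Ω) (hDΩ : closure D ⊆ Ω)
    (H : EuclideanSpace ℝ (Fin N) → ℝ) (hH : LocLipschitzOn Ω H)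
    (u : EuclideanSpace ℝ (Fin N) → ℝ)
    (hu_lsc : LowerSemicontinuousOn u (closure D)) (hu : IsViscositySupersol D H u)
    (δ : ℝ) (hδ : 0 < δ)
    (w : EuclideanSpace ℝ (Fin N) → ℝ)
    (hw_c2 : ContDiffOn ℝ 2 w D) (hw_cont : ContinuousOn w (closure D))
    (hw_sol : ∀ x ∈ D, mcOp w x = N * (H x + δ))
    (hbdry : ∀ x ∈ frontier D, w x < u x) :
    ∀ x ∈ closure D, w x ≤ u x := by
  have hcomp : IsCompact (closure D) := hDb.isCompact_closure
  have hlsc : LowerSemicontinuousOn (fun y => u y - w y) (closure D) := by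
    have h2 : LowerSemicontinuousOn (fun y => - w y) (closure D) :=
      hw_cont.neg.lowerSemicontinuousOn
    simpa [sub_eq_add_neg] using hu_lsc.add h2
  obtain ⟨x0, hx0, hmin⟩ := hlsc.exists_isMinOn hDc.nonempty.closure hcomp
  intro x hx
  have hle : u x0 - w x0 ≤ u x - w x := hmin hx
  by_cases hxD : x0 ∈ D
  · have h1 := hu w hw_c2 x0 hxD (hmin.on_subset subset_closure).localize
    rw [hw_sol x0 hxD] at h1
    have hNpos : (0 : ℝ) < N := by
      have : 0 < N := by omega
      exact_mod_cast this
    have := mul_pos hNpos hδ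
    nlinarith
  · have hf : x0 ∈ frontier D := by
      rw [hDo.frontier_eq]
      exact ⟨hx0, hxD⟩
    have := hbdry x0 hf
    linarith
end
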